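/- arXiv:1912.11641 — 2 statements merged into one kernel-verified Lean document; each statement's English description precedes it below -/
import Mathlib

section
/- There exists a universal constant c > 0 such that for every n and every pair of increasing measurable functions f, g : R^n → [0,1], one has Cor(f,g) ≥ c · Σ_{i∈[n]} min( M_1(f)_i M_1(g)_i / √(log(e / (M_1(f)_i M_1(g)_i))), (M_1(f)_i M_1(g)_i)^2 / |⟨M_2(f) e_i, M_2(g) e_i⟩| ), where e_i is the i-th standard basis vector and ⟨·,·⟩ is the standard inner product on R^n (the second term of each minimum being interpreted as +∞ when ⟨M_2(f) e_i, M_2(g) e_i⟩ = 0). -/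
/-!
Write `N f x = E f((x + Y)/√2)` (`gaussianNoise`). Given `X`, the functions `Y ↦ f((X + Y)/√2)` and
`Y ↦ g((X + Y)/√2)` are increasing, so the Harris–FKG inequality gives `Cor(f, g) ≥ Cor(N f, N g)`.

Differentiating `E (N f)(X) (N g)(sin θ X + cos θ Y)` in `θ` and integrating by parts yields
`Cor(N f, N g) = ∑ᵢ ∫₀^{π/2} cos θ ψᵢ(θ) dθ`, where
`ψᵢ(θ) = E ∂ᵢ(N f)(X) ∂ᵢ(N g)(sin θ X + cos θ Y)` (`noiseMomentCorr`). The derivatives `∂ᵢ(N f)`,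
`∂ᵢ(N g)` (`noiseMoment`) take values in `[0, 1]`, have mean `M₁/√2`, and their first moments are
half of the `i`-th column of `M₂`. Every `ψᵢ` is nonnegative, so it suffices to bound it below for
small `θ`.

That bound is an entropic estimate for `E u(X) v(ρ X + σ Y)`, `σ² = 1 - ρ²`, where `u`, `v` are
densities with respect to `γ` (`exp_le_integral_mul_smul_add_smul`). Transport `γ` to `u γ` and to
`v γ` by Knothe maps `T₁`, `T₂`. With the Mehler kernel `k`, the correlation equals the mean of
`k(T₁ x, T₂ z) / k(x, z)` over `ρ`-correlated pairs `(x, z)`, and by Jensen's inequality it is at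
least the exponential of the mean of the logarithm of this ratio. That logarithm is quadratic in
the displacements `A = T₁ - id`, `B = T₂ - id`; its terms linear in them have mean zero,
`E A(X)·B(Z)` is `(E A)·(E B)` up to `O(ρ)(E|A|² + E|B|²)` by a Gebelein-type inequality, the means
of `A` and `B` are the first moments of `u` and `v`, and `E|A|²`, `E|B|²` are at most twice the
entropies by Talagrand's transport inequality, hence at most `2 log ‖u‖_∞` and `2 log ‖v‖_∞`.

Applied to the normalized derivatives, with `a = M₁(f)ᵢ M₁(g)ᵢ` and `b = ⟨M₂(f) eᵢ, M₂(g) eᵢ⟩`, the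
exponent is at least `-1` for all `θ ≤ t = ¼ min(1/√log(e/a), a/|b|)`, so `ψᵢ(θ) ≥ a/(2 e)` there;
integrating over `[0, t]` gives the claim with `c = 1/(16 e)`.
-/

open MeasureTheory ProbabilityTheory

noncomputable section

/-- The standard Gaussian measure on `ℝⁿ`. -/
def stdGaussian (n : ℕ) : Measure (Fin n → ℝ) := Measure.pi fun _ => gaussianReal 0 1

/-- `f` is increasing (monotone): nondecreasing in each coordinate when the other
coordinates are kept fixed. -/
def CoordMonotone (n : ℕ) (f : (Fin n → ℝ) → ℝ) : Prop :=
  ∀ (x : Fin n → ℝ) (i : Fin n) (s t : ℝ), s ≤ t →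
    f (Function.update x i s) ≤ f (Function.update x i t)

/-- `M₁(f) = ∫ x f(x) dγ(x) ∈ ℝⁿ` (given here coordinatewise). -/
def gM1 (n : ℕ) (f : (Fin n → ℝ) → ℝ) (i : Fin n) : ℝ :=
  ∫ x, x i * f x ∂stdGaussian n

/-- `M₂(f) = ∫ (x xᵀ - Iₙ) f(x) dγ(x) ∈ ℝⁿˣⁿ` (given here entrywise). -/
def gM2 (n : ℕ) (f : (Fin n → ℝ) → ℝ) (i j : Fin n) : ℝ :=
  ∫ x, (x i * x j - if i = j then (1 : ℝ) else 0) * f x ∂stdGaussian n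

/-- `Cor(f,g) = ∫ fg dγ - (∫ f dγ)(∫ g dγ)`. -/
def gCor (n : ℕ) (f g : (Fin n → ℝ) → ℝ) : ℝ :=
  (∫ x, f x * g x ∂stdGaussian n) -
    (∫ x, f x ∂stdGaussian n) * ∫ x, g x ∂stdGaussian n

/-- `⟨M₂(f) eᵢ, M₂(g) eᵢ⟩`, the standard inner product on `ℝⁿ` of the `i`-th columns. -/
def gM2col (n : ℕ) (f g : (Fin n → ℝ) → ℝ) (i : Fin n) : ℝ :=
  ∑ j, gM2 n f j i * gM2 n g j i

local notation "γ" => (_root_.stdGaussian)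

section General

variable {α β : Type*} [MeasurableSpace α] [MeasurableSpace β] {μ : Measure α} {ν : Measure β}

lemma integral_comp_of_measurePreserving {f : α → β} (hf : MeasurePreserving f μ ν) {g : β → ℝ}
    (hg : AEStronglyMeasurable g ν) : ∫ a, g (f a) ∂μ = ∫ b, g b ∂ν := by
  rw [← hf.map_eq] at hg ⊢
  exact (integral_map hf.aemeasurable hg).symm

lemma sq_integral_le_integral_sq [IsProbabilityMeasure μ] {f : α → ℝ} (hf : MemLp f 2 μ) :
    (∫ x, f x ∂μ) ^ 2 ≤ ∫ x, f x ^ 2 ∂μ := by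
  have h := variance_nonneg f μ
  rwa [variance_eq_sub hf, sub_nonneg] at h

lemma integral_sub_integral_sq_le [IsProbabilityMeasure μ] {f : α → ℝ} (hf : MemLp f 2 μ) :
    ∫ x, (f x - ∫ y, f y ∂μ) ^ 2 ∂μ ≤ ∫ x, f x ^ 2 ∂μ := by
  rw [← variance_eq_integral hf.aestronglyMeasurable.aemeasurable]
  exact variance_le_expectation_sq hf.aestronglyMeasurable

lemma integrable_fun_mul {f g : α → ℝ} (hf : MemLp f 2 μ) (hg : MemLp g 2 μ) :
    Integrable (fun x => f x * g x) μ :=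
  hf.integrable_mul hg

lemma ae_memLp_two_prodMk_left [SFinite μ] [SFinite ν] {f : α × β → ℝ} (hf : MemLp f 2 (μ.prod ν)) :
    ∀ᵐ x ∂μ, MemLp (fun y => f (x, y)) 2 ν := by
  filter_upwards [hf.integrable_sq.prod_right_ae, hf.aestronglyMeasurable.prodMk_left]
    with x hx hm
  exact (memLp_two_iff_integrable_sq hm).2 hx

end General

section CenteredGaussian

variable {E : Type*} [NormedAddCommGroup E] [NormedSpace ℝ E] [MeasurableSpace E] [BorelSpace E]
  [SecondCountableTopology E] [CompleteSpace E] {μ : Measure E} [IsGaussian μ]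

lemma measurePreserving_rotation (hμ : μ[id] = 0) {s c : ℝ} (h : s ^ 2 + c ^ 2 = 1) :
    MeasurePreserving (fun p : E × E => (s • p.1 + c • p.2, s • p.2 - c • p.1))
      (μ.prod μ) (μ.prod μ) := by
  have hz : (⟨s, c⟩ : ℂ) ≠ 0 := fun h0 => by simp_all [Complex.ext_iff]
  have hn : ‖(⟨s, c⟩ : ℂ)‖ = 1 := by
    rw [← sq_eq_sq₀ (norm_nonneg _) zero_le_one, ← Complex.normSq_eq_norm_sq, Complex.normSq_mk]
    linarith
  refine ⟨by fun_prop, ?_⟩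
  convert IsGaussian.map_rotation_eq_self hμ (Complex.arg ⟨s, c⟩) using 2
  ext p
  · simp [ContinuousLinearMap.rotation_apply, Complex.cos_arg hz, Complex.sin_arg, hn]
  · simp [ContinuousLinearMap.rotation_apply, Complex.cos_arg hz, Complex.sin_arg, hn]
    abel

lemma measurePreserving_smul_add_smul (hμ : μ[id] = 0) {s c : ℝ} (h : s ^ 2 + c ^ 2 = 1) :
    MeasurePreserving (fun p : E × E => s • p.1 + c • p.2) (μ.prod μ) μ :=
  measurePreserving_fst.comp (measurePreserving_rotation hμ h)

/-- The noise operator `B ↦ (x ↦ E B(s x + c Y))`, where `Y` has law `μ`; for `μ` a standard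
Gaussian and `s² + c² = 1` this is the Ornstein–Uhlenbeck semigroup at time `-log s`. -/
def gaussianNoise (μ : Measure E) (s c : ℝ) (B : E → ℝ) (x : E) : ℝ := ∫ y, B (s • x + c • y) ∂μ

variable {s c : ℝ} {A B : E → ℝ}

lemma memLp_smul_add_smul (hμ : μ[id] = 0) (h : s ^ 2 + c ^ 2 = 1) (hB : MemLp B 2 μ) :
    MemLp (fun p : E × E => B (s • p.1 + c • p.2)) 2 (μ.prod μ) :=
  hB.comp_measurePreserving (measurePreserving_smul_add_smul hμ h)

lemma integral_smul_add_smul (hμ : μ[id] = 0) (h : s ^ 2 + c ^ 2 = 1)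
    (hB : AEStronglyMeasurable B μ) :
    ∫ p : E × E, B (s • p.1 + c • p.2) ∂μ.prod μ = ∫ x, B x ∂μ :=
  integral_comp_of_measurePreserving (measurePreserving_smul_add_smul hμ h) hB

lemma memLp_gaussianNoise (hμ : μ[id] = 0) (h : s ^ 2 + c ^ 2 = 1) (hB : MemLp B 2 μ) :
    MemLp (gaussianNoise μ s c B) 2 μ := by
  have hΦ := memLp_smul_add_smul hμ h hB
  have hm : AEStronglyMeasurable (gaussianNoise μ s c B) μ :=
    hΦ.aestronglyMeasurable.integral_prod_right'
  refine (memLp_two_iff_integrable_sq hm).2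
    (hΦ.integrable_sq.integral_prod_left.mono' (hm.pow 2) ?_)
  filter_upwards [ae_memLp_two_prodMk_left hΦ] with x hx
  rw [Real.norm_of_nonneg (sq_nonneg _)]
  exact sq_integral_le_integral_sq hx

lemma integral_gaussianNoise (hμ : μ[id] = 0) (h : s ^ 2 + c ^ 2 = 1) (hB : Integrable B μ) :
    ∫ x, gaussianNoise μ s c B x ∂μ = ∫ x, B x ∂μ := by
  have hi : Integrable (fun p : E × E => B (s • p.1 + c • p.2)) (μ.prod μ) :=
    (measurePreserving_smul_add_smul hμ h).integrable_comp_of_integrable hB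
  exact (integral_prod _ hi).symm.trans (integral_smul_add_smul hμ h hB.aestronglyMeasurable)

lemma integral_mul_gaussianNoise (hμ : μ[id] = 0) (h : s ^ 2 + c ^ 2 = 1) (hA : MemLp A 2 μ)
    (hB : MemLp B 2 μ) :
    ∫ p : E × E, A p.1 * B (s • p.1 + c • p.2) ∂μ.prod μ =
      ∫ x, A x * gaussianNoise μ s c B x ∂μ := by
  rw [integral_prod _ (integrable_fun_mul (hA.comp_fst μ) (memLp_smul_add_smul hμ h hB))]
  simp only [integral_const_mul, gaussianNoise]

lemma integral_mul_gaussianNoise_snd (hμ : μ[id] = 0) (h : s ^ 2 + c ^ 2 = 1) (hA : MemLp A 2 μ)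
    (hB : MemLp B 2 μ) :
    ∫ p : E × E, A p.2 * B (s • p.1 + c • p.2) ∂μ.prod μ =
      ∫ x, A x * gaussianNoise μ c s B x ∂μ := by
  rw [← integral_mul_gaussianNoise hμ (by linarith : c ^ 2 + s ^ 2 = 1) hA hB,
    ← integral_prod_swap]
  simp only [Prod.fst_swap, Prod.snd_swap, add_comm]

/- With `W = B(s X + c Y)`, the conditional expectations of `W` given `X` and given `Y` are
uncorrelated because `B` is centred, so this is Bessel's inequality. -/
lemma integral_sq_gaussianNoise_add_le (hμ : μ[id] = 0) (h : s ^ 2 + c ^ 2 = 1)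
    (hB : MemLp B 2 μ) (h0 : ∫ x, B x ∂μ = 0) :
    ∫ x, gaussianNoise μ s c B x ^ 2 ∂μ + ∫ x, gaussianNoise μ c s B x ^ 2 ∂μ ≤
      ∫ x, B x ^ 2 ∂μ := by
  have h' : c ^ 2 + s ^ 2 = 1 := by linarith
  have hP := memLp_gaussianNoise hμ h hB
  have hQ := memLp_gaussianNoise hμ h' hB
  have hW := memLp_smul_add_smul hμ h hB
  set P := gaussianNoise μ s c B
  set Q := gaussianNoise μ c s B
  have hP1 : MemLp (fun p : E × E => P p.1) 2 (μ.prod μ) := hP.comp_fst μ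
  have hQ2 : MemLp (fun p : E × E => Q p.2) 2 (μ.prod μ) := hQ.comp_snd μ
  have hWW : ∫ p : E × E, B (s • p.1 + c • p.2) ^ 2 ∂μ.prod μ = ∫ x, B x ^ 2 ∂μ :=
    integral_smul_add_smul hμ h (hB.aestronglyMeasurable.pow 2)
  have hPW : ∫ p : E × E, P p.1 * B (s • p.1 + c • p.2) ∂μ.prod μ = ∫ x, P x ^ 2 ∂μ := by
    simp only [integral_mul_gaussianNoise hμ h hP hB, pow_two, P]
  have hQW : ∫ p : E × E, Q p.2 * B (s • p.1 + c • p.2) ∂μ.prod μ = ∫ x, Q x ^ 2 ∂μ := by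
    simp only [integral_mul_gaussianNoise_snd hμ h hQ hB, pow_two, Q]
  have hPQ : ∫ p : E × E, P p.1 * Q p.2 ∂μ.prod μ = 0 := by
    rw [integral_prod_mul, integral_gaussianNoise hμ h (hB.integrable one_le_two), h0, zero_mul]
  have hexpand : ∀ p : E × E, (B (s • p.1 + c • p.2) - (P p.1 + Q p.2)) ^ 2 =
      B (s • p.1 + c • p.2) ^ 2 + P p.1 ^ 2 + Q p.2 ^ 2 + 2 * (P p.1 * Q p.2)
        + -2 * (P p.1 * B (s • p.1 + c • p.2)) + -2 * (Q p.2 * B (s • p.1 + c • p.2)) :=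
    fun p => by ring
  have hnonneg : 0 ≤ ∫ p : E × E, (B (s • p.1 + c • p.2) - (P p.1 + Q p.2)) ^ 2 ∂μ.prod μ :=
    integral_nonneg fun _ => sq_nonneg _
  have i₁ := hW.integrable_sq.fun_add hP1.integrable_sq
  have i₂ := i₁.fun_add hQ2.integrable_sq
  have i₃ := (integrable_fun_mul hP1 hQ2).const_mul 2
  have i₄ := (integrable_fun_mul hP1 hW).const_mul (-2)
  simp_rw [hexpand] at hnonneg
  rw [integral_add ((i₂.fun_add i₃).fun_add i₄) ((integrable_fun_mul hQ2 hW).const_mul (-2)),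
    integral_add (i₂.fun_add i₃) i₄, integral_add i₂ i₃, integral_add i₁ hQ2.integrable_sq,
    integral_add hW.integrable_sq hP1.integrable_sq, hWW, integral_const_mul, integral_const_mul,
    integral_const_mul, hPW, hQW, hPQ, integral_fun_fst (fun x => P x ^ 2),
    integral_fun_snd (fun x => Q x ^ 2), probReal_univ, one_smul, one_smul] at hnonneg
  linarith

lemma integral_sq_gaussianNoise_le_integral_sq (hμ : μ[id] = 0) (h : s ^ 2 + c ^ 2 = 1)
    (hB : MemLp B 2 μ) (h0 : ∫ x, B x ∂μ = 0) :
    ∫ x, gaussianNoise μ s c B x ^ 2 ∂μ ≤ ∫ x, B x ^ 2 ∂μ :=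
  (le_add_of_nonneg_right (integral_nonneg fun _ => sq_nonneg _)).trans
    (integral_sq_gaussianNoise_add_le hμ h hB h0)

lemma gaussianNoise_gaussianNoise_ae (hμ : μ[id] = 0) {s' c' τ : ℝ} (h : s ^ 2 + c ^ 2 = 1)
    (hτ : τ ^ 2 = (s' * c) ^ 2 + c' ^ 2) (h' : s' ^ 2 + c' ^ 2 = 1) (hτ0 : τ ≠ 0)
    (hB : Integrable B μ) :
    gaussianNoise μ s c (gaussianNoise μ s' c' B) =ᵐ[μ] gaussianNoise μ (s' * s) τ B := by
  have hadd : (s' * s) ^ 2 + τ ^ 2 = 1 := by rw [hτ]; linear_combination s' ^ 2 * h + h'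
  have hunit : (s' * c / τ) ^ 2 + (c' / τ) ^ 2 = 1 := by
    rw [div_pow, div_pow, ← add_div, ← hτ, div_self (pow_ne_zero 2 hτ0)]
  have hi := ((measurePreserving_smul_add_smul hμ hadd).integrable_comp_of_integrable
    hB).prod_right_ae
  filter_upwards [hi] with x hx
  have hsplit : ∀ p : E × E, s' • (s • x + c • p.1) + c' • p.2 =
      (s' * s) • x + τ • ((s' * c / τ) • p.1 + (c' / τ) • p.2) := fun p => by
    simp only [smul_add, smul_smul, mul_div_cancel₀ _ hτ0, add_assoc]
  have hp := measurePreserving_smul_add_smul hμ hunit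
  have hint : Integrable (fun p : E × E => B (s' • (s • x + c • p.1) + c' • p.2)) (μ.prod μ) := by
    simp_rw [hsplit]
    exact hp.integrable_comp_of_integrable hx
  calc gaussianNoise μ s c (gaussianNoise μ s' c' B) x
      = ∫ p : E × E, B (s' • (s • x + c • p.1) + c' • p.2) ∂μ.prod μ := (integral_prod _ hint).symm
    _ = gaussianNoise μ (s' * s) τ B x := by
        simp_rw [hsplit]
        exact integral_comp_of_measurePreserving hp hx.aestronglyMeasurable

lemma inv_sqrt_two_sq : (√2)⁻¹ ^ 2 = 1 / 2 := by
  rw [inv_pow, Real.sq_sqrt zero_le_two, one_div]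

lemma inv_sqrt_two_sq_add : (√2)⁻¹ ^ 2 + (√2)⁻¹ ^ 2 = 1 := by
  rw [inv_sqrt_two_sq]; norm_num

/- The contraction factor `1/2` at `s = c = 1/√2` is iterated, using the semigroup property. -/
lemma integral_sq_gaussianNoise_le (hμ : μ[id] = 0) (h : s ^ 2 + c ^ 2 = 1) (hs : s ≠ 0)
    (hB : MemLp B 2 μ) (h0 : ∫ x, B x ∂μ = 0) :
    ∫ x, gaussianNoise μ s c B x ^ 2 ∂μ ≤ 2 * s ^ 2 * ∫ x, B x ^ 2 ∂μ := by
  obtain ⟨k, hk⟩ := pow_unbounded_of_one_lt (2 * s ^ 2)⁻¹ one_lt_two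
  replace hk : 1 ≤ 2 ^ k * (2 * s ^ 2) := (inv_le_iff_one_le_mul₀ (by positivity)).1 hk.le
  have hB0 : 0 ≤ ∫ x, B x ^ 2 ∂μ := integral_nonneg fun _ => sq_nonneg _
  induction k generalizing B s c with
  | zero =>
    have := integral_sq_gaussianNoise_le_integral_sq hμ h hB h0
    nlinarith
  | succ k ih =>
    rcases le_or_gt 1 (2 * s ^ 2) with hs1 | hs1
    · have := integral_sq_gaussianNoise_le_integral_sq hμ h hB h0
      nlinarith
    have hr := inv_sqrt_two_sq_add
    set D := gaussianNoise μ (√2)⁻¹ (√2)⁻¹ B with hD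
    have hD0 : ∫ x, D x ∂μ = 0 := by
      rw [hD, integral_gaussianNoise hμ hr (hB.integrable one_le_two), h0]
    have hDB := integral_sq_gaussianNoise_add_le hμ hr hB h0
    have hsq : (√2 * s) ^ 2 = 2 * s ^ 2 := by rw [mul_pow, Real.sq_sqrt zero_le_two]
    have hcirc : (√2 * s) ^ 2 + √(1 - 2 * s ^ 2) ^ 2 = 1 := by
      rw [hsq, Real.sq_sqrt (by linarith)]; ring
    have hfactor : gaussianNoise μ (√2 * s) √(1 - 2 * s ^ 2) D =ᵐ[μ] gaussianNoise μ s c B := by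
      convert gaussianNoise_gaussianNoise_ae hμ hcirc (τ := c) ?_ hr ?_ (hB.integrable one_le_two)
        using 2
      · rw [inv_mul_cancel_left₀ (by positivity)]
      · rw [mul_pow, Real.sq_sqrt (by linarith), inv_sqrt_two_sq]; linarith
      · rintro rfl; nlinarith
    have hstep := ih hcirc (mul_ne_zero (by positivity) hs) (memLp_gaussianNoise hμ hr hB) hD0
      (by rwa [hsq, ← mul_assoc, ← pow_succ]) (integral_nonneg fun _ => sq_nonneg _)
    rw [integral_congr_ae (hfactor.mono fun x hx => congrArg (· ^ 2) hx), hsq] at hstep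
    nlinarith [sq_nonneg s]

lemma gaussianNoise_zero_left (hμ : μ[id] = 0) (hc : c ^ 2 = 1) (hB : Integrable B μ) (x : E) :
    gaussianNoise μ 0 c B x = ∫ y, B y ∂μ := by
  rw [← integral_gaussianNoise hμ (by simpa using hc : 0 ^ 2 + c ^ 2 = 1) hB]
  simp [gaussianNoise]

/- A Gebelein-type inequality, the point being that it does not depend on the dimension of `E`. -/
lemma neg_mul_le_integral_mul_gaussianNoise (hμ : μ[id] = 0) (h : s ^ 2 + c ^ 2 = 1)
    (hs : 0 ≤ s) (hA : MemLp A 2 μ) (hB : MemLp B 2 μ) (h0 : ∫ x, B x ∂μ = 0) :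
    -(s * (∫ x, A x ^ 2 ∂μ + ∫ x, B x ^ 2 ∂μ)) ≤ ∫ x, A x * gaussianNoise μ s c B x ∂μ := by
  rcases hs.eq_or_lt with rfl | hs
  · have hN : ∀ x, gaussianNoise μ 0 c B x = 0 := fun x => by
      rw [gaussianNoise_zero_left hμ (by simpa using h) (hB.integrable one_le_two), h0]
    simp [hN]
  have hN := memLp_gaussianNoise hμ h hB
  have hNB := integral_sq_gaussianNoise_le hμ h hs.ne' hB h0
  set N := gaussianNoise μ s c B
  have hamgm : ∫ x, -(s * A x ^ 2 + N x ^ 2 / (4 * s)) ∂μ ≤ ∫ x, A x * N x ∂μ := by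
    refine integral_mono ((hA.integrable_sq.const_mul s).fun_add
      (hN.integrable_sq.div_const _)).neg (integrable_fun_mul hA hN) fun x => ?_
    have : s * A x ^ 2 + N x ^ 2 / (4 * s) + A x * N x = (2 * s * A x + N x) ^ 2 / (4 * s) := by
      field_simp; ring
    have : 0 ≤ (2 * s * A x + N x) ^ 2 / (4 * s) := by positivity
    linarith
  rw [integral_neg, integral_add (hA.integrable_sq.const_mul s) (hN.integrable_sq.div_const _),
    integral_const_mul, integral_div] at hamgm
  have hB0 : 0 ≤ ∫ x, B x ^ 2 ∂μ := integral_nonneg fun _ => sq_nonneg _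
  have : (∫ x, N x ^ 2 ∂μ) / (4 * s) ≤ s * ∫ x, B x ^ 2 ∂μ := by
    rw [div_le_iff₀ (by positivity)]
    nlinarith [mul_nonneg (sq_nonneg s) hB0]
  linarith

lemma integral_mul_integral_sub_le_integral_mul (hμ : μ[id] = 0) (h : s ^ 2 + c ^ 2 = 1)
    (hs : 0 ≤ s) (hA : MemLp A 2 μ) (hB : MemLp B 2 μ) :
    (∫ x, A x ∂μ) * (∫ x, B x ∂μ) - s * (∫ x, A x ^ 2 ∂μ + ∫ x, B x ^ 2 ∂μ) ≤
      ∫ p : E × E, A p.1 * B (s • p.1 + c • p.2) ∂μ.prod μ := by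
  set b := ∫ x, B x ∂μ with hb
  have hD : MemLp (fun x => B x - b) 2 μ := hB.sub (memLp_const b)
  have hD0 : ∫ x, (B x - b) ∂μ = 0 := by
    rw [integral_sub (hB.integrable one_le_two) (integrable_const _), integral_const,
      probReal_univ, one_smul, ← hb, sub_self]
  have hcentered := neg_mul_le_integral_mul_gaussianNoise hμ h hs hA hD hD0
  rw [← integral_mul_gaussianNoise hμ h hA hD] at hcentered
  simp_rw [mul_sub (A _)] at hcentered
  rw [integral_sub (integrable_fun_mul (hA.comp_fst μ) (memLp_smul_add_smul hμ h hB))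
    (((hA.integrable one_le_two).comp_fst μ).mul_const b), integral_mul_const,
    integral_fun_fst A, probReal_univ, one_smul] at hcentered
  have hvar := mul_le_mul_of_nonneg_left (integral_sub_integral_sq_le hB) hs
  linarith

end CenteredGaussian

section Coordinates

variable {n : ℕ}

instance isGaussian_stdGaussian : IsGaussian (γ n) := by
  have h := congrArg (Measure.map (WithLp.ofLp (p := 2) (V := Fin n → ℝ)))
    (map_pi_eq_stdGaussian (ι := Fin n))
  rw [Measure.map_map (by fun_prop) (by fun_prop)] at h
  have : γ n = (ProbabilityTheory.stdGaussian (EuclideanSpace ℝ (Fin n))).map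
    (EuclideanSpace.equiv (Fin n) ℝ) := by
    exact Measure.map_id.symm.trans h
  rw [this]
  infer_instance

lemma measurePreserving_eval_stdGaussian (i : Fin n) :
    MeasurePreserving (fun x : Fin n → ℝ => x i) (γ n) (gaussianReal 0 1) :=
  measurePreserving_eval (fun _ : Fin n => gaussianReal 0 1) i

lemma memLp_two_eval_stdGaussian (i : Fin n) : MemLp (fun x : Fin n → ℝ => x i) 2 (γ n) :=
  (memLp_id_gaussianReal 2).comp_measurePreserving (measurePreserving_eval_stdGaussian i)

lemma integrable_eval_stdGaussian (i : Fin n) : Integrable (fun x : Fin n → ℝ => x i) (γ n) :=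
  (memLp_two_eval_stdGaussian i).integrable one_le_two

lemma integral_eval_stdGaussian (i : Fin n) : ∫ x, x i ∂γ n = 0 :=
  (integral_comp_of_measurePreserving (measurePreserving_eval_stdGaussian i)
    aestronglyMeasurable_id).trans integral_id_gaussianReal

lemma integral_id_stdGaussian_eq_zero : (γ n)[id] = 0 := by
  ext i
  exact (eval_integral integrable_eval_stdGaussian i).trans (integral_eval_stdGaussian i)

lemma integral_eval_mul_eval_stdGaussian (i j : Fin n) :
    ∫ x, x i * x j ∂γ n = if i = j then 1 else 0 := by
  split_ifs with hij
  · subst hij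
    have hvar := variance_of_integral_eq_zero (X := id) aemeasurable_id
      (integral_id_gaussianReal (μ := 0) (v := 1))
    rw [variance_id_gaussianReal] at hvar
    rw [integral_comp_of_measurePreserving (g := fun t => t * t)
      (measurePreserving_eval_stdGaussian i) (by fun_prop)]
    simpa [pow_two] using hvar.symm
  · have hindep := (iIndepFun_pi (μ := fun _ : Fin n => gaussianReal 0 1) (X := fun _ => id)
      fun _ => aemeasurable_id).indepFun hij
    exact (hindep.integral_fun_mul_eq_mul_integral
      (integrable_eval_stdGaussian i).aestronglyMeasurable
      (integrable_eval_stdGaussian j).aestronglyMeasurable).trans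
      (mul_eq_zero_of_left (integral_eval_stdGaussian i) _)

end Coordinates

section MehlerKernel

variable {n : ℕ} {ρ σ : ℝ}

lemma pi_withDensity_ofReal {ι : Type*} [Fintype ι] {X : ι → Type*}
    [∀ i, MeasurableSpace (X i)] {μ : ∀ i, Measure (X i)} [∀ i, IsFiniteMeasure (μ i)]
    {k : ∀ i, X i → ℝ} (hk : ∀ i t, 0 ≤ k i t) (hki : ∀ i, Integrable (k i) (μ i)) :
    Measure.pi (fun i => (μ i).withDensity fun t => ENNReal.ofReal (k i t)) =
      (Measure.pi μ).withDensity fun z => ENNReal.ofReal (∏ i, k i (z i)) := by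
  have : ∀ i, IsFiniteMeasure ((μ i).withDensity fun t => ENNReal.ofReal (k i t)) := fun i =>
    isFiniteMeasure_withDensity_ofReal (hki i).2
  refine Measure.pi_eq fun s hs => ?_
  rw [withDensity_apply _ (MeasurableSet.univ_pi hs), Measure.restrict_pi_pi,
    ← ofReal_integral_eq_lintegral_ofReal (.fintype_prod_dep fun i => (hki i).restrict)
      (.of_forall fun z => Finset.prod_nonneg fun i _ => hk i _), integral_fintype_prod_eq_prod,
    ENNReal.ofReal_prod_of_nonneg fun i _ => integral_nonneg (hk i)]
  refine Finset.prod_congr rfl fun i _ => ?_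
  rw [withDensity_apply _ (hs i), ofReal_integral_eq_lintegral_ofReal (hki i).restrict
    (.of_forall (hk i))]

/-- The one-dimensional Mehler kernel: the density, with respect to the product of two standard
Gaussians, of a pair of `ρ`-correlated standard Gaussian variables. -/
def mehlerKernelReal (ρ x z : ℝ) : ℝ :=
  (√(1 - ρ ^ 2))⁻¹ * Real.exp (-(ρ ^ 2 * (x ^ 2 + z ^ 2) - 2 * ρ * x * z) / (2 * (1 - ρ ^ 2)))

/-- The Mehler kernel on `ℝⁿ`: the density, with respect to `γ ⊗ γ`, of a pair of `ρ`-correlated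
standard Gaussian vectors. -/
def mehlerKernel (ρ : ℝ) (x z : Fin n → ℝ) : ℝ := ∏ i, mehlerKernelReal ρ (x i) (z i)

lemma mehlerKernelReal_pos (h : ρ ^ 2 < 1) (x z : ℝ) : 0 < mehlerKernelReal ρ x z :=
  mul_pos (inv_pos.2 (Real.sqrt_pos.2 (sub_pos.2 h))) (Real.exp_pos _)

lemma mehlerKernel_pos (h : ρ ^ 2 < 1) (x z : Fin n → ℝ) : 0 < mehlerKernel ρ x z :=
  Finset.prod_pos fun _ _ => mehlerKernelReal_pos h _ _

lemma continuous_mehlerKernelReal (ρ : ℝ) :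
    Continuous fun p : ℝ × ℝ => mehlerKernelReal ρ p.1 p.2 := by
  unfold mehlerKernelReal
  fun_prop

lemma continuous_mehlerKernel (ρ : ℝ) :
    Continuous fun p : (Fin n → ℝ) × (Fin n → ℝ) => mehlerKernel ρ p.1 p.2 :=
  continuous_finsetProd _ fun i _ => (continuous_mehlerKernelReal ρ).comp
    (by fun_prop : Continuous fun p : (Fin n → ℝ) × (Fin n → ℝ) => (p.1 i, p.2 i))

lemma gaussianPDFReal_mul_mehlerKernelReal (hσ : 0 < σ) (h : ρ ^ 2 + σ ^ 2 = 1) (x z : ℝ) :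
    gaussianPDFReal 0 1 z * mehlerKernelReal ρ x z =
      gaussianPDFReal (ρ * x) (.mk (σ ^ 2) (sq_nonneg σ)) z := by
  simp only [gaussianPDFReal, mehlerKernelReal, show 1 - ρ ^ 2 = σ ^ 2 by linarith,
    NNReal.coe_mk, NNReal.coe_one, mul_one]
  rw [Real.sqrt_mul (by positivity) (σ ^ 2), mul_inv, mul_mul_mul_comm, ← Real.exp_add]
  congr 2
  field_simp
  linear_combination (-z ^ 2) * h

lemma map_add_mul_gaussianReal_eq_withDensity (hσ : 0 < σ) (h : ρ ^ 2 + σ ^ 2 = 1) (x : ℝ) :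
    (gaussianReal 0 1).map (fun y => ρ * x + σ * y) =
      (gaussianReal 0 1).withDensity fun z => ENNReal.ofReal (mehlerKernelReal ρ x z) := by
  have hvar : NNReal.mk (σ ^ 2) (sq_nonneg σ) ≠ 0 := fun h0 =>
    (pow_pos hσ 2).ne' (congrArg NNReal.toReal h0)
  have hm : Measurable fun z => mehlerKernelReal ρ x z :=
    ((continuous_mehlerKernelReal ρ).comp (.prodMk_right x)).measurable
  rw [← Function.comp_def (fun y => ρ * x + y) (fun y => σ * y),
    ← Measure.map_map (by fun_prop) (by fun_prop), gaussianReal_map_const_mul,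
    gaussianReal_map_const_add, mul_zero, zero_add, mul_one, gaussianReal_of_var_ne_zero _ hvar,
    gaussianReal_of_var_ne_zero _ one_ne_zero,
    ← withDensity_mul _ (measurable_gaussianPDF _ _) hm.ennreal_ofReal]
  congr 1
  ext z
  simp only [gaussianPDF, Pi.mul_apply]
  rw [← ENNReal.ofReal_mul (gaussianPDFReal_nonneg _ _ _),
    gaussianPDFReal_mul_mehlerKernelReal hσ h]

lemma map_add_smul_stdGaussian_eq_withDensity (hσ : 0 < σ) (h : ρ ^ 2 + σ ^ 2 = 1)
    (x : Fin n → ℝ) :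
    (γ n).map (fun y => ρ • x + σ • y) =
      (γ n).withDensity fun z => ENNReal.ofReal (mehlerKernel ρ x z) := by
  have hprob : ∀ i, IsProbabilityMeasure ((gaussianReal 0 1).map fun y => ρ * x i + σ * y) :=
    fun i => Measure.isProbabilityMeasure_map (by fun_prop)
  have hpos : ∀ i t, 0 ≤ mehlerKernelReal ρ (x i) t := fun i t =>
    (mehlerKernelReal_pos (by nlinarith) _ _).le
  have hint : ∀ i, Integrable (mehlerKernelReal ρ (x i)) (gaussianReal 0 1) := fun i => by
    refine ⟨((continuous_mehlerKernelReal ρ).comp (.prodMk_right (x i))).aestronglyMeasurable, ?_⟩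
    have hone := (hprob i).measure_univ
    rw [map_add_mul_gaussianReal_eq_withDensity hσ h,
      withDensity_apply _ MeasurableSet.univ, Measure.restrict_univ] at hone
    rw [hasFiniteIntegral_iff_ofReal (.of_forall (hpos i)), hone]
    exact ENNReal.one_lt_top
  calc (γ n).map (fun y => ρ • x + σ • y)
      = Measure.pi fun i => (gaussianReal 0 1).map fun y => ρ * x i + σ * y :=
        Measure.pi_map_pi (f := fun i y => ρ * x i + σ * y) fun i => by fun_prop
    _ = _ := by
        simp_rw [map_add_mul_gaussianReal_eq_withDensity hσ h]
        exact pi_withDensity_ofReal hpos hint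

end MehlerKernel

section MonotoneTransport

/-- `μ` is a measure on the line with a continuous and everywhere positive Lebesgue density `q`,
so that its distribution function is an increasing `C¹` bijection onto `(0, 1)`. -/
structure HasContPosDensity (μ : Measure ℝ) (q : ℝ → ℝ) : Prop where
  continuous : Continuous q
  pos : ∀ t, 0 < q t
  eq_withDensity : μ = volume.withDensity fun t => ENNReal.ofReal (q t)

namespace HasContPosDensity

variable {μ : Measure ℝ} {q : ℝ → ℝ}

lemma withDensity_ofReal (h : HasContPosDensity μ q) {w : ℝ → ℝ} (hw : Continuous w)
    (h0 : ∀ t, 0 < w t) :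
    HasContPosDensity (μ.withDensity fun t => ENNReal.ofReal (w t)) fun t => q t * w t where
  continuous := h.continuous.mul hw
  pos t := mul_pos (h.pos t) (h0 t)
  eq_withDensity := by
    rw [h.eq_withDensity, ← withDensity_mul _ h.continuous.measurable.ennreal_ofReal
      hw.measurable.ennreal_ofReal]
    congr with t
    exact (ENNReal.ofReal_mul (h.pos t).le).symm

lemma integrable [IsFiniteMeasure μ] (h : HasContPosDensity μ q) : Integrable q := by
  refine ⟨h.continuous.aestronglyMeasurable, ?_⟩
  rw [hasFiniteIntegral_iff_ofReal (.of_forall fun t => (h.pos t).le), ← setLIntegral_univ,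
    ← withDensity_apply _ MeasurableSet.univ, ← h.eq_withDensity]
  exact measure_lt_top μ _

variable [IsProbabilityMeasure μ]

lemma cdf_eq_integral (h : HasContPosDensity μ q) (y : ℝ) : cdf μ y = ∫ t in Set.Iic y, q t := by
  rw [cdf_eq_real, measureReal_def]
  nth_rewrite 1 [h.eq_withDensity]
  rw [withDensity_apply _ measurableSet_Iic, ← ofReal_integral_eq_lintegral_ofReal
    h.integrable.integrableOn (.of_forall fun t => (h.pos t).le),
    ENNReal.toReal_ofReal (integral_nonneg fun t => (h.pos t).le)]

lemma hasDerivAt_cdf (h : HasContPosDensity μ q) (y : ℝ) : HasDerivAt (cdf μ) (q y) y := by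
  have hcdf : ⇑(cdf μ) = fun y => cdf μ 0 + ∫ t in (0 : ℝ)..y, q t := funext fun y => by
    rw [← intervalIntegral.integral_Iic_sub_Iic h.integrable.integrableOn
      h.integrable.integrableOn, h.cdf_eq_integral, h.cdf_eq_integral, add_sub_cancel]
  rw [hcdf]
  exact (intervalIntegral.integral_hasDerivAt_right (h.continuous.intervalIntegrable _ _)
    (h.continuous.stronglyMeasurableAtFilter _ _) h.continuous.continuousAt).const_add _

lemma continuous_cdf (h : HasContPosDensity μ q) : Continuous (cdf μ) :=
  continuous_iff_continuousAt.2 fun y => (h.hasDerivAt_cdf y).continuousAt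

lemma strictMono_cdf (h : HasContPosDensity μ q) : StrictMono (cdf μ) :=
  strictMono_of_hasDerivAt_pos h.hasDerivAt_cdf h.pos

lemma range_cdf (h : HasContPosDensity μ q) : Set.range (cdf μ) = Set.Ioo 0 1 := by
  refine Set.Subset.antisymm (Set.range_subset_iff.2 fun y => ⟨?_, ?_⟩) fun c hc => ?_
  · exact (cdf_nonneg μ (y - 1)).trans_lt (h.strictMono_cdf (sub_one_lt y))
  · exact (h.strictMono_cdf (lt_add_one y)).trans_le (cdf_le_one μ _)
  · obtain ⟨a, ha⟩ := ((tendsto_cdf_atBot μ).eventually (gt_mem_nhds hc.1)).exists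
    obtain ⟨b, hb⟩ := ((tendsto_cdf_atTop μ).eventually (lt_mem_nhds hc.2)).exists
    exact mem_range_of_exists_le_of_exists_ge h.continuous_cdf ⟨a, ha.le⟩ ⟨b, hb.le⟩

end HasContPosDensity

/-- The monotone rearrangement `F_ν⁻¹ ∘ F_μ` of `μ` into `ν`, where `F` denotes distribution
functions; its value at `x` is meaningful when `F_μ(x)` is in the range of `F_ν`. -/
def monotoneTransport (μ ν : Measure ℝ) (x : ℝ) : ℝ := Function.invFun (cdf ν) (cdf μ x)

variable {μ ν : Measure ℝ} [IsProbabilityMeasure μ] [IsProbabilityMeasure ν] {p q : ℝ → ℝ}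

lemma cdf_monotoneTransport (hμ : HasContPosDensity μ p) (hν : HasContPosDensity ν q) (x : ℝ) :
    cdf ν (monotoneTransport μ ν x) = cdf μ x := by
  refine Function.invFun_eq (Set.mem_range.1 ?_)
  rw [hν.range_cdf, ← hμ.range_cdf]
  exact Set.mem_range_self x

lemma monotoneTransport_le_iff (hμ : HasContPosDensity μ p) (hν : HasContPosDensity ν q)
    {x y : ℝ} : monotoneTransport μ ν x ≤ y ↔ cdf μ x ≤ cdf ν y := by
  rw [← hν.strictMono_cdf.le_iff_le, cdf_monotoneTransport hμ hν]

lemma exists_cdf_eq_cdf (hμ : HasContPosDensity μ p) (hν : HasContPosDensity ν q) (y : ℝ) :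
    ∃ x, cdf μ x = cdf ν y := by
  rw [← Set.mem_range, hμ.range_cdf, ← hν.range_cdf]
  exact Set.mem_range_self y

lemma continuous_monotoneTransport (hμ : HasContPosDensity μ p) (hν : HasContPosDensity ν q) :
    Continuous (monotoneTransport μ ν) := by
  refine Monotone.continuous_of_surjective (fun a b hab => ?_) fun y => ?_
  · rw [monotoneTransport_le_iff hμ hν, cdf_monotoneTransport hμ hν]
    exact monotone_cdf μ hab
  · obtain ⟨x, hx⟩ := exists_cdf_eq_cdf hμ hν y
    exact ⟨x, hν.strictMono_cdf.injective (by rw [cdf_monotoneTransport hμ hν, hx])⟩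

lemma map_monotoneTransport (hμ : HasContPosDensity μ p) (hν : HasContPosDensity ν q) :
    μ.map (monotoneTransport μ ν) = ν := by
  have hm := (continuous_monotoneTransport hμ hν).measurable
  have : IsProbabilityMeasure (μ.map (monotoneTransport μ ν)) :=
    Measure.isProbabilityMeasure_map hm.aemeasurable
  refine Measure.ext_of_Iic _ _ fun y => ?_
  obtain ⟨x, hx⟩ := exists_cdf_eq_cdf hμ hν y
  have hpre : monotoneTransport μ ν ⁻¹' Set.Iic y = Set.Iic x := by
    ext z
    rw [Set.mem_preimage, Set.mem_Iic, monotoneTransport_le_iff hμ hν, ← hx,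
      hμ.strictMono_cdf.le_iff_le, Set.mem_Iic]
  rw [Measure.map_apply hm measurableSet_Iic, hpre, ← ofReal_cdf, ← ofReal_cdf, hx]

lemma hasDerivAt_monotoneTransport (hμ : HasContPosDensity μ p) (hν : HasContPosDensity ν q)
    (x : ℝ) :
    HasDerivAt (monotoneTransport μ ν) (p x / q (monotoneTransport μ ν x)) x := by
  set y := monotoneTransport μ ν x
  have hq : q y ≠ 0 := (hν.pos y).ne'
  have hcdf : HasStrictDerivAt (cdf ν) (q y) y :=
    hasStrictDerivAt_of_hasDerivAt_of_continuousAt (.of_forall hν.hasDerivAt_cdf)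
      hν.continuous.continuousAt
  have hinv := (hcdf.to_localInverse hq).hasDerivAt
  have hev : monotoneTransport μ ν =ᶠ[nhds x] hcdf.localInverse _ _ _ hq ∘ cdf μ := by
    filter_upwards [(continuous_monotoneTransport hμ hν).continuousAt.eventually
      (hcdf.hasStrictFDerivAt_equiv hq).eventually_left_inverse] with z hz
    rw [Function.comp_apply, ← cdf_monotoneTransport hμ hν]
    exact hz.symm
  rw [show cdf ν y = cdf μ x from cdf_monotoneTransport hμ hν x] at hinv
  refine ((hinv.comp x (hμ.hasDerivAt_cdf x)).congr_of_eventuallyEq hev).congr_deriv ?_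
  rw [div_eq_mul_inv, mul_comm]

lemma measurable_uncurry_monotoneTransport {S : Type*} [MeasurableSpace S] {ν : S → Measure ℝ}
    [∀ s, IsProbabilityMeasure (ν s)] {q : S → ℝ → ℝ} (hμ : HasContPosDensity μ p)
    (hν : ∀ s, HasContPosDensity (ν s) (q s)) (hq : Measurable (Function.uncurry q)) :
    Measurable (Function.uncurry fun s => monotoneTransport μ (ν s)) := by
  refine measurable_of_Iic fun y => ?_
  have hpre : (Function.uncurry fun s => monotoneTransport μ (ν s)) ⁻¹' Set.Iic y =
      {z : S × ℝ | cdf μ z.2 ≤ cdf (ν z.1) y} :=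
    Set.ext fun z => monotoneTransport_le_iff hμ (hν z.1)
  rw [hpre]
  refine measurableSet_le (hμ.continuous_cdf.measurable.comp measurable_snd) ?_
  simp only [(hν _).cdf_eq_integral]
  exact (hq.stronglyMeasurable.integral_prod_right' (ν := volume.restrict (Set.Iic y))).measurable
    |>.comp measurable_fst

end MonotoneTransport

section Talagrand

section WithDensity

variable {α β : Type*} [MeasurableSpace α] [MeasurableSpace β] {μ : Measure α} {ν : Measure β}
  {T : α → β} {u φ : β → ℝ}

lemma integral_comp_of_map_eq_withDensity (hT : Measurable T) (hu : Measurable u)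
    (h0 : ∀ x, 0 ≤ u x) (h : μ.map T = ν.withDensity fun x => ENNReal.ofReal (u x))
    (hφ : Measurable φ) : ∫ x, φ (T x) ∂μ = ∫ x, u x * φ x ∂ν := by
  rw [← integral_map hT.aemeasurable hφ.aestronglyMeasurable, h,
    integral_withDensity_eq_integral_toReal_smul hu.ennreal_ofReal
      (.of_forall fun _ => ENNReal.ofReal_lt_top)]
  simp only [ENNReal.toReal_ofReal (h0 _), smul_eq_mul]

lemma integrable_comp_iff_of_map_eq_withDensity (hT : Measurable T) (hu : Measurable u)
    (h0 : ∀ x, 0 ≤ u x) (h : μ.map T = ν.withDensity fun x => ENNReal.ofReal (u x))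
    (hφ : Measurable φ) :
    Integrable (fun x => φ (T x)) μ ↔ Integrable (fun x => u x * φ x) ν := by
  rw [← Function.comp_def, ← integrable_map_measure hφ.aestronglyMeasurable hT.aemeasurable, h,
    integrable_withDensity_iff_integrable_smul' hu.ennreal_ofReal
      (.of_forall fun _ => ENNReal.ofReal_lt_top)]
  simp only [ENNReal.toReal_ofReal (h0 _), smul_eq_mul]

end WithDensity

lemma abs_log_le_of_mem_Icc {δ M t : ℝ} (hδ : 0 < δ) (ht : t ∈ Set.Icc δ M) :
    |Real.log t| ≤ max |Real.log δ| |Real.log M| :=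
  abs_le_max_abs_abs (Real.log_le_log hδ ht.1) (Real.log_le_log (hδ.trans_le ht.1) ht.2)

lemma abs_mul_log_le_of_mem_Icc {δ M t : ℝ} (hδ : 0 < δ) (ht : t ∈ Set.Icc δ M) :
    |t * Real.log t| ≤ M * max |Real.log δ| |Real.log M| := by
  have h0 : 0 < t := hδ.trans_le ht.1
  rw [abs_mul, abs_of_pos h0]
  exact mul_le_mul ht.2 (abs_log_le_of_mem_Icc hδ ht) (abs_nonneg _) (h0.le.trans ht.2)

lemma hasContPosDensity_gaussianReal :
    HasContPosDensity (gaussianReal 0 1) (gaussianPDFReal 0 1) where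
  continuous := by
    unfold gaussianPDFReal
    fun_prop
  pos t := gaussianPDFReal_pos _ _ _ one_ne_zero
  eq_withDensity := gaussianReal_of_var_ne_zero _ one_ne_zero

lemma hasDerivAt_gaussianPDFReal (x : ℝ) :
    HasDerivAt (gaussianPDFReal 0 1) (-x * gaussianPDFReal 0 1 x) x := by
  have hsq : HasDerivAt (fun x : ℝ => -x ^ 2 / 2) (-x) x :=
    ((hasDerivAt_pow 2 x).neg.div_const 2).congr_deriv (by norm_num; ring)
  have hpdf : gaussianPDFReal 0 1 = fun x => (√(2 * Real.pi))⁻¹ * Real.exp (-x ^ 2 / 2) := by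
    simp [gaussianPDFReal_def]
  rw [hpdf]
  exact (hsq.exp.const_mul _).congr_deriv (by ring)

lemma integrable_gaussianReal_iff (f : ℝ → ℝ) :
    Integrable f (gaussianReal 0 1) ↔ Integrable fun x => gaussianPDFReal 0 1 x * f x := by
  rw [gaussianReal_of_var_ne_zero _ one_ne_zero,
    integrable_withDensity_iff_integrable_smul' (measurable_gaussianPDF _ _)
      (.of_forall fun _ => gaussianPDF_lt_top)]
  simp only [toReal_gaussianPDF, smul_eq_mul]

/- Otherwise the increments `f R - f (-R)` would stay away from zero as `R → ∞`. -/
lemma integral_nonneg_of_hasDerivAt_neg_le {f f' g : ℝ → ℝ} (hf : Integrable f)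
    (hg : Integrable g) (hd : ∀ x, HasDerivAt f (f' x) x) (hf' : Continuous f')
    (h : ∀ x, -f' x ≤ g x) : 0 ≤ ∫ x, g x := by
  by_contra! hneg
  obtain ⟨ε, hε, hlt⟩ : ∃ ε > 0, ∫ x, g x < -ε := ⟨-(∫ x, g x) / 2, by linarith, by linarith⟩
  have hlim : Filter.Tendsto (fun R : ℝ => ∫ x in (-R)..R, g x) Filter.atTop (nhds (∫ x, g x)) :=
    intervalIntegral_tendsto_integral hg Filter.tendsto_neg_atTop_atBot Filter.tendsto_id
  obtain ⟨R₀, hR₀⟩ := Filter.eventually_atTop.1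
    ((hlim.eventually (gt_mem_nhds hlt)).and (Filter.eventually_ge_atTop (0 : ℝ)))
  have hincr : ∀ R ∈ Set.Ioi R₀, ε ≤ f R - f (-R) := fun R hR => by
    obtain ⟨hgR, hR0⟩ := hR₀ R (Set.mem_Ioi.1 hR).le
    have hle : ∫ x in (-R)..R, -f' x ≤ ∫ x in (-R)..R, g x :=
      intervalIntegral.integral_mono (by linarith) (hf'.neg.intervalIntegrable _ _)
        hg.intervalIntegrable h
    rw [intervalIntegral.integral_neg, intervalIntegral.integral_eq_sub_of_hasDerivAt
      (fun x _ => hd x) (hf'.intervalIntegrable _ _)] at hle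
    linarith
  have hconst : IntegrableOn (fun _ : ℝ => ε) (Set.Ioi R₀) := by
    refine (hf.sub hf.comp_neg).integrableOn.mono' (by fun_prop) ?_
    filter_upwards [ae_restrict_mem measurableSet_Ioi] with R hR
    rw [Real.norm_of_nonneg hε.le]
    exact hincr R hR
  rw [integrableOn_const_iff, Real.volume_Ioi] at hconst
  simp only [enorm_eq_zero, lt_self_iff_false, or_false] at hconst
  exact hε.ne' hconst

/- With `D = p(x) / (p(y) w)`, where `p` is the Gaussian density and `y` the transported point, this
is `log D ≤ D - 1`; the right-hand side is minus the derivative of `p(x) (T x - x)`. -/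
lemma neg_deriv_gaussianPDFReal_mul_sub_le (x y : ℝ) {w : ℝ} (hw : 0 < w) :
    -(-x * gaussianPDFReal 0 1 x * (y - x) + gaussianPDFReal 0 1 x *
        (gaussianPDFReal 0 1 x / (gaussianPDFReal 0 1 y * w) - 1)) ≤
      gaussianPDFReal 0 1 x * (Real.log w - (y - x) ^ 2 / 2) := by
  have hpos : ∀ z, 0 < gaussianPDFReal 0 1 z := fun z => gaussianPDFReal_pos _ _ _ one_ne_zero
  have hlog : ∀ z, Real.log (gaussianPDFReal 0 1 z) = Real.log (√(2 * Real.pi))⁻¹ - z ^ 2 / 2 := by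
    intro z
    rw [gaussianPDFReal, Real.log_mul (by positivity) (Real.exp_ne_zero _), Real.log_exp]
    simp [neg_div, sub_eq_add_neg]
  set D := gaussianPDFReal 0 1 x / (gaussianPDFReal 0 1 y * w) with hD
  have hlogD : Real.log w = (y ^ 2 - x ^ 2) / 2 - Real.log D := by
    rw [hD, Real.log_div (hpos x).ne' (mul_pos (hpos y) hw).ne', Real.log_mul (hpos y).ne' hw.ne',
      hlog, hlog]
    ring
  have hle := Real.log_le_sub_one_of_pos (div_pos (hpos x) (mul_pos (hpos y) hw))
  rw [hlogD]
  nlinarith [mul_le_mul_of_nonneg_left hle (hpos x).le]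

variable {w : ℝ → ℝ} {δ M : ℝ}

lemma isProbabilityMeasure_withDensity_ofReal {α : Type*} [MeasurableSpace α] {μ : Measure α}
    {u : α → ℝ} (h0 : ∀ x, 0 ≤ u x) (h1 : ∫ x, u x ∂μ = 1) :
    IsProbabilityMeasure (μ.withDensity fun x => ENNReal.ofReal (u x)) := by
  have hi : Integrable u μ := by
    by_contra h
    exact zero_ne_one ((integral_undef h).symm.trans h1)
  constructor
  rw [withDensity_apply _ MeasurableSet.univ, Measure.restrict_univ,
    ← ofReal_integral_eq_lintegral_ofReal hi (.of_forall h0), h1, ENNReal.ofReal_one]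

lemma memLp_two_sub_id_of_map_eq_withDensity {T : ℝ → ℝ} (hT : Measurable T) (hw : Measurable w)
    (h0 : ∀ t, 0 ≤ w t) (hM : ∀ t, w t ≤ M)
    (hmap : (gaussianReal 0 1).map T =
      (gaussianReal 0 1).withDensity fun t => ENNReal.ofReal (w t)) :
    MemLp (fun x => T x - x) 2 (gaussianReal 0 1) := by
  have hid : MemLp (fun x : ℝ => x) 2 (gaussianReal 0 1) :=
    memLp_id_gaussianReal (μ := 0) (v := 1) 2
  refine MemLp.sub ((memLp_two_iff_integrable_sq hT.aestronglyMeasurable).2 ?_) hid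
  refine (integrable_comp_iff_of_map_eq_withDensity hT hw h0 hmap (measurable_id.pow_const 2)).2
    (hid.integrable_sq.bdd_mul hw.aestronglyMeasurable (c := M) (.of_forall fun t => ?_))
  rw [Real.norm_of_nonneg (h0 t)]
  exact hM t

lemma talagrand_monotoneTransport (hw : Continuous w) (hδ : 0 < δ)
    (hb : ∀ t, w t ∈ Set.Icc δ M) (h1 : ∫ t, w t ∂gaussianReal 0 1 = 1) :
    let T := monotoneTransport (gaussianReal 0 1)
      ((gaussianReal 0 1).withDensity fun t => ENNReal.ofReal (w t))
    Integrable (fun x => (T x - x) ^ 2) (gaussianReal 0 1) ∧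
      ∫ x, (T x - x) ^ 2 ∂gaussianReal 0 1 ≤ 2 * ∫ t, w t * Real.log (w t) ∂gaussianReal 0 1 := by
  intro T
  have h0 : ∀ t, 0 < w t := fun t => hδ.trans_le (hb t).1
  have := isProbabilityMeasure_withDensity_ofReal (fun t => (h0 t).le) h1
  have hγ := hasContPosDensity_gaussianReal
  have hν := hγ.withDensity_ofReal hw h0
  have hT : Continuous T := continuous_monotoneTransport hγ hν
  have hmap := map_monotoneTransport hγ hν
  have hlog : Continuous fun t => Real.log (w t) := hw.log fun t => (h0 t).ne'
  have hL2 : MemLp (fun x => T x - x) 2 (gaussianReal 0 1) :=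
    memLp_two_sub_id_of_map_eq_withDensity hT.measurable hw.measurable (fun t => (h0 t).le)
      (fun t => (hb t).2) hmap
  have hlogT : Integrable (fun x => Real.log (w (T x))) (gaussianReal 0 1) :=
    .of_bound (hlog.comp hT).aestronglyMeasurable _
      (.of_forall fun x => abs_log_le_of_mem_Icc hδ (hb (T x)))
  have hpc := hγ.continuous
  have hdiv : Continuous fun x =>
      gaussianPDFReal 0 1 x / (gaussianPDFReal 0 1 (T x) * w (T x)) :=
    hpc.div (hν.continuous.comp hT) fun x => (hν.pos _).ne'
  have hkey : 0 ≤ ∫ x, gaussianPDFReal 0 1 x * (Real.log (w (T x)) - (T x - x) ^ 2 / 2) :=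
    integral_nonneg_of_hasDerivAt_neg_le
      ((integrable_gaussianReal_iff _).1 (hL2.integrable one_le_two))
      ((integrable_gaussianReal_iff _).1 (hlogT.sub (hL2.integrable_sq.div_const 2)))
      (fun x => (hasDerivAt_gaussianPDFReal x).mul
        ((hasDerivAt_monotoneTransport hγ hν x).sub (hasDerivAt_id x)))
      (by fun_prop) fun x => neg_deriv_gaussianPDFReal_mul_sub_le x (T x) (h0 _)
  have hent := integral_comp_of_map_eq_withDensity hT.measurable hw.measurable
    (fun t => (h0 t).le) hmap hlog.measurable
  simp only [← smul_eq_mul (gaussianPDFReal 0 1 _)] at hkey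
  rw [← integral_gaussianReal_eq_integral_smul one_ne_zero,
    integral_sub hlogT (hL2.integrable_sq.div_const 2), hent, integral_div] at hkey
  exact ⟨hL2.integrable_sq, by linarith⟩

end Talagrand

section Triangular

variable {α β : Type*} [MeasurableSpace α] [MeasurableSpace β] {μ : Measure α} {ν : Measure β}

lemma map_withDensity_comp {e : α → β} (he : MeasurePreserving e μ ν) {u : β → ENNReal}
    (hu : Measurable u) : (μ.withDensity fun x => u (e x)).map e = ν.withDensity u := by
  ext s hs
  rw [Measure.map_apply he.measurable hs, withDensity_apply _ (he.measurable hs),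
    withDensity_apply _ hs, he.setLIntegral_comp_preimage hs hu]

lemma lintegral_comp_of_map_eq_withDensity {T : α → β} {u : β → ℝ} (hT : Measurable T)
    (hu : Measurable u) (h : μ.map T = ν.withDensity fun x => ENNReal.ofReal (u x))
    {φ : β → ENNReal} (hφ : Measurable φ) :
    ∫⁻ x, φ (T x) ∂μ = ∫⁻ x, ENNReal.ofReal (u x) * φ x ∂ν := by
  rw [← lintegral_map hφ hT, h, lintegral_withDensity_eq_lintegral_mul _ hu.ennreal_ofReal hφ]
  rfl

lemma map_triangular [SFinite μ] [SFinite ν] {R : α → α} {T : α → β → β} {v : α → ℝ}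
    {w : α → β → ℝ} (hR : Measurable R) (hT : Measurable (Function.uncurry T)) (hv : Measurable v)
    (hw : Measurable (Function.uncurry w)) (h0 : ∀ y, 0 ≤ v y)
    (hRv : μ.map R = μ.withDensity fun y => ENNReal.ofReal (v y))
    (hTw : ∀ y, ν.map (T y) = ν.withDensity fun t => ENNReal.ofReal (w y t)) :
    (μ.prod ν).map (fun p => (R p.1, T (R p.1) p.2)) =
      (μ.prod ν).withDensity fun p => ENNReal.ofReal (v p.1 * w p.1 p.2) := by
  have hRT : Measurable fun p : α × β => (R p.1, T (R p.1) p.2) := by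
    have := hT.comp ((hR.comp measurable_fst).prodMk (measurable_snd (α := α) (β := β)))
    exact (hR.comp measurable_fst).prodMk this
  have hvw : Measurable fun p : α × β => v p.1 * w p.1 p.2 := (hv.comp measurable_fst).mul hw
  refine Measure.ext_of_lintegral _ fun φ hφ => ?_
  have hwφ : Measurable fun p : α × β => ENNReal.ofReal (w p.1 p.2) * φ p :=
    hw.ennreal_ofReal.mul hφ
  calc ∫⁻ p, φ p ∂(μ.prod ν).map (fun p => (R p.1, T (R p.1) p.2))
      = ∫⁻ y, ∫⁻ t, φ (R y, T (R y) t) ∂ν ∂μ := by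
        rw [lintegral_map hφ hRT]
        exact lintegral_prod _ (hφ.comp hRT).aemeasurable
    _ = ∫⁻ y, ∫⁻ t, ENNReal.ofReal (w (R y) t) * φ (R y, t) ∂ν ∂μ :=
        lintegral_congr fun y => lintegral_comp_of_map_eq_withDensity
          (φ := fun t => φ (R y, t)) hT.of_uncurry_left hw.of_uncurry_left (hTw _)
          (hφ.comp measurable_prodMk_left)
    _ = ∫⁻ y, ENNReal.ofReal (v y) * ∫⁻ t, ENNReal.ofReal (w y t) * φ (y, t) ∂ν ∂μ :=
        lintegral_comp_of_map_eq_withDensity hR hv hRv hwφ.lintegral_prod_right'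
    _ = ∫⁻ y, ∫⁻ t, ENNReal.ofReal (v y * w y t) * φ (y, t) ∂ν ∂μ :=
        lintegral_congr fun y => by
          simp_rw [ENNReal.ofReal_mul (h0 y), mul_assoc]
          exact (lintegral_const_mul' _ _ ENNReal.ofReal_ne_top).symm
    _ = ∫⁻ p, φ p ∂(μ.prod ν).withDensity fun p => ENNReal.ofReal (v p.1 * w p.1 p.2) := by
        rw [lintegral_withDensity_eq_lintegral_mul _ hvw.ennreal_ofReal hφ,
          lintegral_prod _ (hvw.ennreal_ofReal.mul hφ).aemeasurable]
        rfl

end Triangular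

section Conditional

variable {α β : Type*} [MeasurableSpace β]

/-- The density of the first marginal of the measure with density `U` with respect to `μ ⊗ ν`. -/
def marginalDensity (ν : Measure β) (U : α → β → ℝ) (y : α) : ℝ := ∫ t, U y t ∂ν

/-- The density, with respect to `ν`, of the conditional law of the second coordinate given that
the first one is `y`, under the measure with density `U` with respect to `μ ⊗ ν`. -/
def condDensity (ν : Measure β) (U : α → β → ℝ) (y : α) (t : β) : ℝ :=
  U y t / marginalDensity ν U y

variable {ν : Measure β} {U : α → β → ℝ}

lemma integral_condDensity (y : α) (h : marginalDensity ν U y ≠ 0) :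
    ∫ t, condDensity ν U y t ∂ν = 1 := by
  simp only [condDensity, integral_div]
  exact div_self h

lemma continuous_marginalDensity [TopologicalSpace α] [FirstCountableTopology α]
    [TopologicalSpace β] [BorelSpace β] [IsFiniteMeasure ν] {δ M : ℝ}
    (hU : Continuous (Function.uncurry U)) (hb : ∀ y t, U y t ∈ Set.Icc δ M) :
    Continuous (marginalDensity ν U) :=
  continuous_of_dominated (bound := fun _ => max |δ| |M|)
    (fun y => (hU.comp (.prodMk_right y)).measurable.aestronglyMeasurable)
    (fun y => .of_forall fun t => abs_le_max_abs_abs (hb y t).1 (hb y t).2) (integrable_const _)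
    (.of_forall fun t => hU.comp (.prodMk_left t))

variable [MeasurableSpace α]

lemma measurable_marginalDensity [SFinite ν] (hU : Measurable (Function.uncurry U)) :
    Measurable (marginalDensity ν U) :=
  (hU.stronglyMeasurable.integral_prod_right' (ν := ν)).measurable

lemma measurable_condDensity [SFinite ν] (hU : Measurable (Function.uncurry U)) :
    Measurable (Function.uncurry (condDensity ν U)) :=
  hU.div ((measurable_marginalDensity hU).comp measurable_fst)

variable {μ : Measure α} [IsProbabilityMeasure ν] {δ M : ℝ}

lemma marginalDensity_mem_Icc (hU : Measurable (Function.uncurry U))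
    (hb : ∀ y t, U y t ∈ Set.Icc δ M) (y : α) : marginalDensity ν U y ∈ Set.Icc δ M := by
  have hi : Integrable (U y) ν :=
    .of_mem_Icc δ M hU.of_uncurry_left.aemeasurable (.of_forall (hb y))
  constructor
  · simpa [marginalDensity] using integral_mono (integrable_const δ) hi fun t => (hb y t).1
  · simpa [marginalDensity] using integral_mono hi (integrable_const M) fun t => (hb y t).2

lemma condDensity_mem_Icc (hU : Measurable (Function.uncurry U)) (hδ : 0 < δ)
    (hb : ∀ y t, U y t ∈ Set.Icc δ M) (y : α) (t : β) :
    condDensity ν U y t ∈ Set.Icc (δ / M) (M / δ) := by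
  have hv := marginalDensity_mem_Icc (ν := ν) hU hb y
  have hUy := hb y t
  exact ⟨div_le_div₀ (hδ.le.trans hUy.1) hUy.1 (hδ.trans_le hv.1) hv.2,
    div_le_div₀ (hδ.le.trans (hUy.1.trans hUy.2)) hUy.2 hδ hv.1⟩

lemma integrable_mul_log [IsFiniteMeasure μ] {u : α → ℝ} (hu : Measurable u) (hδ : 0 < δ)
    (hb : ∀ x, u x ∈ Set.Icc δ M) : Integrable (fun x => u x * Real.log (u x)) μ :=
  .of_bound (hu.mul hu.log).aestronglyMeasurable _
    (.of_forall fun x => abs_mul_log_le_of_mem_Icc hδ (hb x))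

lemma integral_condDensity_mul_log (hU : Measurable (Function.uncurry U)) (hδ : 0 < δ)
    (hb : ∀ y t, U y t ∈ Set.Icc δ M) (y : α) :
    marginalDensity ν U y * ∫ t, condDensity ν U y t * Real.log (condDensity ν U y t) ∂ν =
      ∫ t, U y t * Real.log (U y t) ∂ν -
        marginalDensity ν U y * Real.log (marginalDensity ν U y) := by
  have hUm : Measurable (U y) := hU.of_uncurry_left
  have hv : 0 < marginalDensity ν U y := hδ.trans_le (marginalDensity_mem_Icc hU hb y).1
  have hi : Integrable (U y) ν := .of_mem_Icc δ M hUm.aemeasurable (.of_forall (hb y))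
  have hmarg : marginalDensity ν U y * Real.log (marginalDensity ν U y) =
      ∫ t, U y t * Real.log (marginalDensity ν U y) ∂ν := (integral_mul_const _ _).symm
  rw [hmarg, ← integral_sub (integrable_mul_log hUm hδ (hb y)) (hi.mul_const _),
    ← integral_const_mul]
  refine integral_congr_ae (.of_forall fun t => ?_)
  simp only [condDensity]
  rw [Real.log_div (hδ.trans_le (hb y t).1).ne' hv.ne']
  field_simp

lemma integral_marginalDensity_mul_integral_condDensity_mul_log [IsFiniteMeasure μ]
    (hU : Measurable (Function.uncurry U)) (hδ : 0 < δ) (hb : ∀ y t, U y t ∈ Set.Icc δ M) :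
    ∫ y, marginalDensity ν U y *
        ∫ t, condDensity ν U y t * Real.log (condDensity ν U y t) ∂ν ∂μ =
      ∫ p, U p.1 p.2 * Real.log (U p.1 p.2) ∂μ.prod ν -
        ∫ y, marginalDensity ν U y * Real.log (marginalDensity ν U y) ∂μ := by
  have hi : Integrable (fun p : α × β => U p.1 p.2 * Real.log (U p.1 p.2)) (μ.prod ν) :=
    integrable_mul_log hU hδ fun p => hb p.1 p.2
  simp_rw [integral_condDensity_mul_log hU hδ hb]
  rw [integral_sub hi.integral_prod_left
    (integrable_mul_log (measurable_marginalDensity hU) hδ (marginalDensity_mem_Icc hU hb)),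
    integral_prod _ hi]

end Conditional

section Knothe

variable {α : Type*} [MeasurableSpace α] {μ : Measure α} {U : α → ℝ → ℝ} {δ M : ℝ}

lemma exists_transport_condDensity (hU : Measurable (Function.uncurry U))
    (hc : ∀ y, Continuous (U y)) (hδ : 0 < δ) (hb : ∀ y t, U y t ∈ Set.Icc δ M) :
    ∃ T : α → ℝ → ℝ, Measurable (Function.uncurry T) ∧ ∀ y,
      (gaussianReal 0 1).map (T y) = (gaussianReal 0 1).withDensity
        (fun t => ENNReal.ofReal (condDensity (gaussianReal 0 1) U y t)) ∧
      Integrable (fun x => (T y x - x) ^ 2) (gaussianReal 0 1) ∧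
      ∫ x, (T y x - x) ^ 2 ∂gaussianReal 0 1 ≤
        2 * ∫ t, condDensity (gaussianReal 0 1) U y t *
          Real.log (condDensity (gaussianReal 0 1) U y t) ∂gaussianReal 0 1 := by
  set w := condDensity (gaussianReal 0 1) U
  have hwb : ∀ y t, w y t ∈ Set.Icc (δ / M) (M / δ) := condDensity_mem_Icc hU hδ hb
  have hv0 : ∀ y, 0 < marginalDensity (gaussianReal 0 1) U y :=
    fun y => hδ.trans_le (marginalDensity_mem_Icc hU hb y).1
  have hw0 : ∀ y t, 0 < w y t :=
    fun y t => div_pos (hδ.trans_le (hb y t).1) (hv0 y)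
  have hw1 : ∀ y, ∫ t, w y t ∂gaussianReal 0 1 = 1 :=
    fun y => integral_condDensity y (hv0 y).ne'
  have hwc : ∀ y, Continuous (w y) := fun y => (hc y).div_const _
  have (y : α) := isProbabilityMeasure_withDensity_ofReal (fun t => (hw0 y t).le) (hw1 y)
  have hγ := hasContPosDensity_gaussianReal
  have hν := fun y => hγ.withDensity_ofReal (hwc y) (hw0 y)
  have hqm : Measurable (Function.uncurry fun y t => gaussianPDFReal 0 1 t * w y t) :=
    ((measurable_gaussianPDFReal 0 1).comp measurable_snd).mul (measurable_condDensity hU)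
  refine ⟨_, measurable_uncurry_monotoneTransport hγ hν hqm, fun y =>
    ⟨map_monotoneTransport hγ (hν y), ?_⟩⟩
  have hM : 0 < M := hδ.trans_le ((hb y 0).1.trans (hb y 0).2)
  exact talagrand_monotoneTransport (hwc y) (div_pos hδ hM) (hwb y) (hw1 y)

lemma exists_triangular_transport [IsProbabilityMeasure μ] (hU : Measurable (Function.uncurry U))
    (hc : ∀ y, Continuous (U y)) (hδ : 0 < δ) (hb : ∀ y t, U y t ∈ Set.Icc δ M) {R : α → α}
    (hR : Measurable R) (hRv : μ.map R =
      μ.withDensity fun y => ENNReal.ofReal (marginalDensity (gaussianReal 0 1) U y)) :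
    ∃ T : α → ℝ → ℝ, Measurable (Function.uncurry T) ∧
      (μ.prod (gaussianReal 0 1)).map (fun p => (R p.1, T (R p.1) p.2)) =
        (μ.prod (gaussianReal 0 1)).withDensity (fun p => ENNReal.ofReal (U p.1 p.2)) ∧
      Integrable (fun p => (T (R p.1) p.2 - p.2) ^ 2) (μ.prod (gaussianReal 0 1)) ∧
      ∫ p, (T (R p.1) p.2 - p.2) ^ 2 ∂μ.prod (gaussianReal 0 1) ≤
        2 * (∫ p, U p.1 p.2 * Real.log (U p.1 p.2) ∂μ.prod (gaussianReal 0 1) -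
          ∫ y, marginalDensity (gaussianReal 0 1) U y *
            Real.log (marginalDensity (gaussianReal 0 1) U y) ∂μ) := by
  obtain ⟨T, hT, hTy⟩ := exists_transport_condDensity hU hc hδ hb
  choose hTw hTi hTle using hTy
  set v := marginalDensity (gaussianReal 0 1) U with hv
  set w := condDensity (gaussianReal 0 1) U with hw
  have hv0 : ∀ y, 0 < v y := fun y => hδ.trans_le (marginalDensity_mem_Icc hU hb y).1
  have hvm : Measurable v := measurable_marginalDensity hU
  have hwm : Measurable (Function.uncurry w) := measurable_condDensity hU
  have hM : 0 < M := by
    obtain ⟨y⟩ := nonempty_of_isProbabilityMeasure μ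
    exact hδ.trans_le ((hb y 0).1.trans (hb y 0).2)
  have hRfst : Measurable fun p : α × ℝ => R p.1 := hR.comp measurable_fst
  set E : α → ℝ := fun y => ∫ t, w y t * Real.log (w y t) ∂gaussianReal 0 1
  have hEm : Measurable E := ((hwm.mul hwm.log).stronglyMeasurable.integral_prod_right'
    (ν := gaussianReal 0 1)).measurable
  have hEi : Integrable (fun y => E (R y)) μ :=
    (integrable_mul_log (μ := μ.prod (gaussianReal 0 1)) (u := fun p => w (R p.1) p.2)
      (hwm.comp (hRfst.prodMk measurable_snd)) (div_pos hδ hM)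
      fun p => condDensity_mem_Icc hU hδ hb _ _).integral_prod_left
  have hm : Measurable fun p : α × ℝ => (T (R p.1) p.2 - p.2) ^ 2 :=
    ((hT.comp (hRfst.prodMk measurable_snd)).sub measurable_snd).pow_const 2
  have hi : Integrable (fun p : α × ℝ => (T (R p.1) p.2 - p.2) ^ 2)
      (μ.prod (gaussianReal 0 1)) := by
    rw [integrable_prod_iff hm.aestronglyMeasurable]
    refine ⟨.of_forall fun y => hTi (R y), (hEi.const_mul 2).mono'
      hm.stronglyMeasurable.norm.integral_prod_right'.aestronglyMeasurable
      (.of_forall fun y => ?_)⟩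
    simp only [norm_pow, Real.norm_eq_abs, sq_abs]
    rw [abs_of_nonneg (integral_nonneg fun _ => sq_nonneg _)]
    exact hTle (R y)
  refine ⟨T, hT, ?_, hi, ?_⟩
  · rw [map_triangular hR hT hvm hwm (fun y => (hv0 y).le) hRv hTw]
    simp only [hw, condDensity, ← hv, mul_div_cancel₀ _ (hv0 _).ne']
  · rw [← integral_marginalDensity_mul_integral_condDensity_mul_log hU hδ hb,
      ← integral_comp_of_map_eq_withDensity hR hvm (fun y => (hv0 y).le) hRv hEm,
      integral_prod _ hi, ← integral_const_mul]
    exact integral_mono hi.integral_prod_left (hEi.const_mul 2) fun y => hTle (R y)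

/-- The measurable equivalence `(y, t) ↦ (t, y₁, …, yₙ)`, which singles out the first coordinate. -/
def finConsEquiv (n : ℕ) : (Fin n → ℝ) × ℝ ≃ᵐ (Fin (n + 1) → ℝ) :=
  MeasurableEquiv.prodComm.trans (MeasurableEquiv.piFinSuccAbove (fun _ => ℝ) 0).symm

lemma finConsEquiv_apply (n : ℕ) (p : (Fin n → ℝ) × ℝ) :
    finConsEquiv n p = Fin.cons p.2 p.1 := by
  ext i
  simp [finConsEquiv, MeasurableEquiv.piFinSuccAbove, MeasurableEquiv.prodComm]

lemma measurePreserving_finConsEquiv (n : ℕ) :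
    MeasurePreserving (finConsEquiv n) ((γ n).prod (gaussianReal 0 1)) (γ (n + 1)) :=
  (measurePreserving_piFinSuccAbove (fun _ : Fin (n + 1) => gaussianReal 0 1) 0).symm.comp
    Measure.measurePreserving_swap

lemma exists_transport_succ {n : ℕ} {u : (Fin (n + 1) → ℝ) → ENNReal} (hu : Measurable u)
    {R : (Fin n → ℝ) → Fin n → ℝ} {S : (Fin n → ℝ) × ℝ → ℝ} (hR : Measurable R)
    (hS : Measurable S) (hmap : ((γ n).prod (gaussianReal 0 1)).map (fun p => (R p.1, S p)) =
      ((γ n).prod (gaussianReal 0 1)).withDensity fun p => u (finConsEquiv n p))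
    (hRi : ∀ i, Integrable (fun y => (R y i - y i) ^ 2) (γ n))
    (hSi : Integrable (fun p => (S p - p.2) ^ 2) ((γ n).prod (gaussianReal 0 1))) :
    ∃ T : (Fin (n + 1) → ℝ) → Fin (n + 1) → ℝ, Measurable T ∧
      (γ (n + 1)).map T = (γ (n + 1)).withDensity u ∧
      (∀ i, Integrable (fun x => (T x i - x i) ^ 2) (γ (n + 1))) ∧
      ∑ i, ∫ x, (T x i - x i) ^ 2 ∂γ (n + 1) =
        ∫ p, (S p - p.2) ^ 2 ∂(γ n).prod (gaussianReal 0 1) +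
          ∑ i, ∫ y, (R y i - y i) ^ 2 ∂γ n := by
  have he := measurePreserving_finConsEquiv n
  set e := finConsEquiv n
  set Q : (Fin n → ℝ) × ℝ → (Fin n → ℝ) × ℝ := fun p => (R p.1, S p)
  have hQ : Measurable Q := (hR.comp measurable_fst).prodMk hS
  have hzero : ∀ p, e (Q p) 0 - e p 0 = S p - p.2 := fun p => by
    simp [e, finConsEquiv_apply, Q]
  have hsucc : ∀ p i, e (Q p) (Fin.succ i) - e p (Fin.succ i) = R p.1 i - p.1 i := fun p i => by
    simp [e, finConsEquiv_apply, Q]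
  have hfst : ∀ i, ∫ p, (R p.1 i - p.1 i) ^ 2 ∂(γ n).prod (gaussianReal 0 1) =
      ∫ y, (R y i - y i) ^ 2 ∂γ n := fun i => by
    simpa using integral_fun_fst (μ := γ n) (ν := gaussianReal 0 1) fun y => (R y i - y i) ^ 2
  refine ⟨fun x => e (Q (e.symm x)), e.measurable.comp (hQ.comp e.symm.measurable), ?_,
    fun i => ?_, ?_⟩
  · rw [← map_withDensity_comp he hu, ← hmap, Measure.map_map e.measurable hQ,
      ← (he.symm e).map_eq, Measure.map_map (e.measurable.comp hQ) e.symm.measurable]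
    rfl
  · rw [← he.integrable_comp_emb e.measurableEmbedding]
    induction i using Fin.cases <;>
      simp [Function.comp_def, hzero, hsucc, hSi, (hRi _).comp_fst]
  · simp_rw [← he.integral_comp e.measurableEmbedding]
    simp only [MeasurableEquiv.symm_apply_apply, Fin.sum_univ_succ, hzero, hsucc, hfst]

/- The Knothe map, built one coordinate at a time from the monotone transport of the conditional
densities; the chain rule for the entropy adds up the one-dimensional costs. -/
lemma exists_transport_stdGaussian {n : ℕ} {u : (Fin n → ℝ) → ℝ} (hu : Continuous u) (hδ : 0 < δ)
    (hb : ∀ x, u x ∈ Set.Icc δ M) (h1 : ∫ x, u x ∂γ n = 1) :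
    ∃ T : (Fin n → ℝ) → Fin n → ℝ, Measurable T ∧
      (γ n).map T = (γ n).withDensity (fun x => ENNReal.ofReal (u x)) ∧
      (∀ i, Integrable (fun x => (T x i - x i) ^ 2) (γ n)) ∧
      ∑ i, ∫ x, (T x i - x i) ^ 2 ∂γ n ≤ 2 * ∫ x, u x * Real.log (u x) ∂γ n := by
  induction n with
  | zero =>
    have hu1 : ∀ x, u x = 1 := fun x => by
      simpa [Subsingleton.elim _ x, Unique.forall_iff] using h1
    exact ⟨id, measurable_id, by simp [hu1], fun i => i.elim0, by simp [hu1]⟩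
  | succ n ih =>
    have he := measurePreserving_finConsEquiv n
    set e := finConsEquiv n with he_def
    have hec : Continuous e := by
      simp only [funext (finConsEquiv_apply n), he_def]
      fun_prop
    have huec : Continuous fun p => u (e p) := hu.comp hec
    set U : (Fin n → ℝ) → ℝ → ℝ := fun y t => u (e (y, t))
    have hUm : Measurable (Function.uncurry U) := huec.measurable
    have hUb : ∀ y t, U y t ∈ Set.Icc δ M := fun y t => hb _
    have hv1 : ∫ y, marginalDensity (gaussianReal 0 1) U y ∂γ n = 1 := by
      rw [← h1, ← he.integral_comp e.measurableEmbedding]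
      exact (integral_prod _ (.of_mem_Icc δ M hUm.aemeasurable (.of_forall fun p => hb _))).symm
    obtain ⟨R, hR, hRv, hRi, hRle⟩ := ih (continuous_marginalDensity huec hUb)
      (marginalDensity_mem_Icc hUm hUb) hv1
    obtain ⟨T, hT, hTU, hTi, hTle⟩ := exists_triangular_transport hUm
      (fun y => huec.comp (by fun_prop : Continuous fun t => (y, t))) hδ hUb hR hRv
    obtain ⟨S, hS, hSu, hSi, hSeq⟩ := exists_transport_succ hu.measurable.ennreal_ofReal hR
      (hT.comp ((hR.comp measurable_fst).prodMk measurable_snd)) hTU hRi hTi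
    refine ⟨S, hS, hSu, hSi, hSeq.trans_le ((add_le_add hTle hRle).trans_eq ?_)⟩
    rw [← he.integral_comp e.measurableEmbedding]
    ring

end Knothe

section ChangeOfVariables

variable {Ω : Type*} [MeasurableSpace Ω] {η : Measure Ω} {S C : Ω → Ω} {W K : Ω → ℝ}

lemma integral_comp_eq_integral_div_comp (hS : Measurable S) (hC : Measurable C)
    (hW : Measurable W) (hK : Measurable K) (hW0 : ∀ x, 0 ≤ W x) (hK0 : ∀ x, 0 < K x)
    (hSW : η.map S = η.withDensity fun x => ENNReal.ofReal (W x))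
    (hCK : η.map C = η.withDensity fun x => ENNReal.ofReal (K x)) :
    ∫ x, W (C x) ∂η = ∫ x, K (S (C x)) / K (C x) ∂η := by
  have hdiv := integral_comp_of_map_eq_withDensity hC hK (fun x => (hK0 x).le) hCK
    ((hK.comp hS).div hK)
  simp only [Pi.div_apply, Function.comp_apply, mul_div_cancel₀ _ (hK0 _).ne'] at hdiv
  rw [hdiv, integral_comp_of_map_eq_withDensity hC hK (fun x => (hK0 x).le) hCK hW,
    integral_comp_of_map_eq_withDensity hS hW hW0 hSW hK]
  simp only [mul_comm]

lemma integrable_comp_iff_integrable_div_comp (hS : Measurable S) (hC : Measurable C)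
    (hW : Measurable W) (hK : Measurable K) (hW0 : ∀ x, 0 ≤ W x) (hK0 : ∀ x, 0 < K x)
    (hSW : η.map S = η.withDensity fun x => ENNReal.ofReal (W x))
    (hCK : η.map C = η.withDensity fun x => ENNReal.ofReal (K x)) :
    Integrable (fun x => W (C x)) η ↔ Integrable (fun x => K (S (C x)) / K (C x)) η := by
  have hdiv := integrable_comp_iff_of_map_eq_withDensity hC hK (fun x => (hK0 x).le) hCK
    ((hK.comp hS).div hK)
  simp only [Pi.div_apply, Function.comp_apply, mul_div_cancel₀ _ (hK0 _).ne'] at hdiv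
  rw [hdiv, integrable_comp_iff_of_map_eq_withDensity hC hK (fun x => (hK0 x).le) hCK hW,
    integrable_comp_iff_of_map_eq_withDensity hS hW hW0 hSW hK]
  simp only [mul_comm]

end ChangeOfVariables

section Transport

variable {n : ℕ} {u : (Fin n → ℝ) → ℝ} {T : (Fin n → ℝ) → Fin n → ℝ}

lemma integral_eval_sub_of_map_eq_withDensity (hu : Measurable u) (h0 : ∀ x, 0 ≤ u x)
    (hT : Measurable T) (hTu : (γ n).map T = (γ n).withDensity fun x => ENNReal.ofReal (u x))
    (i : Fin n) (hi : Integrable (fun x => T x i - x i) (γ n)) :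
    ∫ x, (T x i - x i) ∂γ n = ∫ x, x i * u x ∂γ n := by
  have hTi : Integrable (fun x => T x i) (γ n) := by
    simpa using hi.fun_add (integrable_eval_stdGaussian i)
  rw [integral_sub hTi (integrable_eval_stdGaussian i), integral_eval_stdGaussian, sub_zero,
    integral_comp_of_map_eq_withDensity (φ := fun x : Fin n → ℝ => x i) hT hu h0 hTu
      (measurable_pi_apply i)]
  simp only [mul_comm]

lemma integral_mul_log_le_log {α : Type*} [MeasurableSpace α] {μ : Measure α} [IsFiniteMeasure μ]
    {u : α → ℝ} {δ M : ℝ} (hu : Measurable u) (hδ : 0 < δ) (hb : ∀ x, u x ∈ Set.Icc δ M)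
    (h1 : ∫ x, u x ∂μ = 1) : ∫ x, u x * Real.log (u x) ∂μ ≤ Real.log M := by
  have hi : Integrable u μ := .of_mem_Icc δ M hu.aemeasurable (.of_forall hb)
  calc ∫ x, u x * Real.log (u x) ∂μ ≤ ∫ x, u x * Real.log M ∂μ := by
        refine integral_mono (integrable_mul_log hu hδ hb) (hi.mul_const _) fun x => ?_
        have h0 : 0 < u x := hδ.trans_le (hb x).1
        exact mul_le_mul_of_nonneg_left (Real.log_le_log h0 (hb x).2) h0.le
    _ = Real.log M := by rw [integral_mul_const, h1, one_mul]

end Transport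

section LogMehlerRatio

/-- `(1 - ρ²)` times the logarithm of the factor by which the one-dimensional Mehler kernel changes
when its arguments `x` and `z` are displaced by `a` and `b`. The terms are grouped so that the last
two, which are linear in the displacements, have mean zero for displacements `A(x)` and `B(z)` of a
pair `(x, z)` of Gaussian variables with correlation `ρ`. -/
def logMehlerRatio (ρ a b x z : ℝ) : ℝ :=
  ρ * (a * b) - ρ ^ 2 / 2 * (a ^ 2 + b ^ 2) + ρ * (a * (z - ρ * x)) + ρ * (b * (x - ρ * z))

variable {ρ σ : ℝ}

lemma mehlerKernelReal_div_mehlerKernelReal (h : ρ ^ 2 < 1) (x z y w : ℝ) :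
    mehlerKernelReal ρ y w / mehlerKernelReal ρ x z =
      Real.exp (logMehlerRatio ρ (y - x) (w - z) x z / (1 - ρ ^ 2)) := by
  have h1 : 1 - ρ ^ 2 ≠ 0 := by linarith
  have h2 : (√(1 - ρ ^ 2))⁻¹ ≠ 0 := inv_ne_zero (Real.sqrt_ne_zero'.2 (by linarith))
  rw [mehlerKernelReal, mehlerKernelReal, mul_div_mul_left _ _ h2, ← Real.exp_sub, logMehlerRatio]
  congr 1
  field_simp
  ring

variable {n : ℕ}

lemma mehlerKernel_div_mehlerKernel (h : ρ ^ 2 < 1) (x z y w : Fin n → ℝ) :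
    mehlerKernel ρ y w / mehlerKernel ρ x z =
      Real.exp ((∑ i, logMehlerRatio ρ (y i - x i) (w i - z i) (x i) (z i)) / (1 - ρ ^ 2)) := by
  simp only [mehlerKernel, ← Finset.prod_div_distrib, mehlerKernelReal_div_mehlerKernelReal h,
    Finset.sum_div, Real.exp_sum]

variable {A B : (Fin n → ℝ) → ℝ}

lemma integral_mul_snd_eval_eq_zero (A : (Fin n → ℝ) → ℝ) (i : Fin n) :
    ∫ p, A p.1 * p.2 i ∂(γ n).prod (γ n) = 0 := by
  rw [integral_prod_mul A fun y : Fin n → ℝ => y i, integral_eval_stdGaussian, mul_zero]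

lemma integral_mul_eval_sub_eq_zero (ρ σ : ℝ) (A : (Fin n → ℝ) → ℝ) (i : Fin n) :
    ∫ p, A p.1 * ((ρ • p.1 + σ • p.2) i - ρ * p.1 i) ∂(γ n).prod (γ n) = 0 := by
  have hexp : ∀ p : (Fin n → ℝ) × (Fin n → ℝ),
      A p.1 * ((ρ • p.1 + σ • p.2) i - ρ * p.1 i) = σ * (A p.1 * p.2 i) := fun p => by
    simp only [Pi.add_apply, Pi.smul_apply, smul_eq_mul]
    ring
  simp only [hexp, integral_const_mul, integral_mul_snd_eval_eq_zero, mul_zero]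

lemma integral_comp_smul_add_smul_mul_eval_sub_eq_zero (h : ρ ^ 2 + σ ^ 2 = 1)
    (hB : AEStronglyMeasurable B (γ n)) (i : Fin n) :
    ∫ p, B (ρ • p.1 + σ • p.2) * (p.1 i - ρ * (ρ • p.1 + σ • p.2) i) ∂(γ n).prod (γ n) = 0 := by
  have hrot : ∀ p : (Fin n → ℝ) × (Fin n → ℝ),
      B (ρ • p.1 + σ • p.2) * (p.1 i - ρ * (ρ • p.1 + σ • p.2) i) =
        -σ * (B (ρ • p.1 + σ • p.2) * (ρ • p.2 - σ • p.1) i) := fun p => by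
    simp only [Pi.add_apply, Pi.sub_apply, Pi.smul_apply, smul_eq_mul]
    linear_combination (-(p.1 i) * B (ρ • p.1 + σ • p.2)) * h
  simp only [hrot, integral_const_mul]
  rw [integral_comp_of_measurePreserving
    (measurePreserving_rotation integral_id_stdGaussian_eq_zero h)
    (g := fun q : (Fin n → ℝ) × (Fin n → ℝ) => B q.1 * q.2 i)
    (hB.comp_fst.mul (by fun_prop)), integral_mul_snd_eval_eq_zero, mul_zero]

lemma integrable_mul_eval_sub (h : ρ ^ 2 + σ ^ 2 = 1) (hA : MemLp A 2 (γ n)) (i : Fin n) :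
    Integrable (fun p : (Fin n → ℝ) × (Fin n → ℝ) =>
      A p.1 * ((ρ • p.1 + σ • p.2) i - ρ * p.1 i)) ((γ n).prod (γ n)) :=
  integrable_fun_mul (hA.comp_fst _)
    ((memLp_smul_add_smul integral_id_stdGaussian_eq_zero h (memLp_two_eval_stdGaussian i)).sub
      (((memLp_two_eval_stdGaussian i).comp_fst _).const_mul ρ))

lemma integrable_comp_smul_add_smul_mul_eval_sub (h : ρ ^ 2 + σ ^ 2 = 1)
    (hB : MemLp B 2 (γ n)) (i : Fin n) :
    Integrable (fun p : (Fin n → ℝ) × (Fin n → ℝ) =>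
      B (ρ • p.1 + σ • p.2) * (p.1 i - ρ * (ρ • p.1 + σ • p.2) i)) ((γ n).prod (γ n)) :=
  integrable_fun_mul (memLp_smul_add_smul integral_id_stdGaussian_eq_zero h hB)
    (((memLp_two_eval_stdGaussian i).comp_fst _).sub
      ((memLp_smul_add_smul integral_id_stdGaussian_eq_zero h
        (memLp_two_eval_stdGaussian i)).const_mul ρ))

lemma integrable_sq_add_sq_comp_smul_add_smul (h : ρ ^ 2 + σ ^ 2 = 1) (hA : MemLp A 2 (γ n))
    (hB : MemLp B 2 (γ n)) :
    Integrable (fun p => A p.1 ^ 2 + B (ρ • p.1 + σ • p.2) ^ 2) ((γ n).prod (γ n)) :=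
  (hA.integrable_sq.comp_fst _).add
    (memLp_smul_add_smul integral_id_stdGaussian_eq_zero h hB).integrable_sq

lemma integrable_mul_comp_smul_add_smul (h : ρ ^ 2 + σ ^ 2 = 1) (hA : MemLp A 2 (γ n))
    (hB : MemLp B 2 (γ n)) :
    Integrable (fun p => A p.1 * B (ρ • p.1 + σ • p.2)) ((γ n).prod (γ n)) :=
  integrable_fun_mul (hA.comp_fst _) (memLp_smul_add_smul integral_id_stdGaussian_eq_zero h hB)

lemma integrable_logMehlerRatio (h : ρ ^ 2 + σ ^ 2 = 1) (hA : MemLp A 2 (γ n))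
    (hB : MemLp B 2 (γ n)) (i : Fin n) :
    Integrable (fun p => logMehlerRatio ρ (A p.1) (B (ρ • p.1 + σ • p.2)) (p.1 i)
      ((ρ • p.1 + σ • p.2) i)) ((γ n).prod (γ n)) :=
  ((((integrable_mul_comp_smul_add_smul h hA hB).const_mul ρ).sub
    ((integrable_sq_add_sq_comp_smul_add_smul h hA hB).const_mul (ρ ^ 2 / 2))).add
    ((integrable_mul_eval_sub h hA i).const_mul ρ)).add
    ((integrable_comp_smul_add_smul_mul_eval_sub h hB i).const_mul ρ)

lemma integral_logMehlerRatio (h : ρ ^ 2 + σ ^ 2 = 1) (hA : MemLp A 2 (γ n))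
    (hB : MemLp B 2 (γ n)) (i : Fin n) :
    ∫ p, logMehlerRatio ρ (A p.1) (B (ρ • p.1 + σ • p.2)) (p.1 i) ((ρ • p.1 + σ • p.2) i)
        ∂(γ n).prod (γ n) =
      ρ * ∫ p, A p.1 * B (ρ • p.1 + σ • p.2) ∂(γ n).prod (γ n) -
        ρ ^ 2 / 2 * (∫ x, A x ^ 2 ∂γ n + ∫ x, B x ^ 2 ∂γ n) := by
  have hAB := (integrable_mul_comp_smul_add_smul h hA hB).const_mul ρ
  have hsq := (integrable_sq_add_sq_comp_smul_add_smul h hA hB).const_mul (ρ ^ 2 / 2)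
  have hlinA := (integrable_mul_eval_sub h hA i).const_mul ρ
  have hlinB := (integrable_comp_smul_add_smul_mul_eval_sub h hB i).const_mul ρ
  have hsq_eq : ∫ p, (A p.1 ^ 2 + B (ρ • p.1 + σ • p.2) ^ 2) ∂(γ n).prod (γ n) =
      ∫ x, A x ^ 2 ∂γ n + ∫ x, B x ^ 2 ∂γ n := by
    rw [integral_add (hA.integrable_sq.comp_fst _)
        (memLp_smul_add_smul integral_id_stdGaussian_eq_zero h hB).integrable_sq,
      integral_smul_add_smul integral_id_stdGaussian_eq_zero h (B := fun x => B x ^ 2) (hB.1.pow 2),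
      integral_fun_fst (fun x => A x ^ 2), probReal_univ, one_smul]
  refine (integral_add ((hAB.sub hsq).add hlinA) hlinB).trans ?_
  rw [integral_add' (hAB.sub hsq) hlinA, integral_sub' hAB hsq]
  simp only [integral_const_mul, hsq_eq, integral_mul_eval_sub_eq_zero,
    integral_comp_smul_add_smul_mul_eval_sub_eq_zero h hB.1, mul_zero, add_zero]

lemma le_integral_logMehlerRatio (h : ρ ^ 2 + σ ^ 2 = 1) (hρ : 0 ≤ ρ) (hA : MemLp A 2 (γ n))
    (hB : MemLp B 2 (γ n)) (i : Fin n) :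
    ρ * ((∫ x, A x ∂γ n) * ∫ x, B x ∂γ n) -
        3 / 2 * ρ ^ 2 * (∫ x, A x ^ 2 ∂γ n + ∫ x, B x ^ 2 ∂γ n) ≤
      ∫ p, logMehlerRatio ρ (A p.1) (B (ρ • p.1 + σ • p.2)) (p.1 i) ((ρ • p.1 + σ • p.2) i)
        ∂(γ n).prod (γ n) := by
  rw [integral_logMehlerRatio h hA hB i]
  have hgebelein :=
    integral_mul_integral_sub_le_integral_mul integral_id_stdGaussian_eq_zero h hρ hA hB
  linear_combination ρ * hgebelein

end LogMehlerRatio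

section TwoPoint

variable {n : ℕ} {ρ σ : ℝ}

lemma map_correlatedPair (hσ : 0 < σ) (h : ρ ^ 2 + σ ^ 2 = 1) :
    ((γ n).prod (γ n)).map (fun p => (p.1, ρ • p.1 + σ • p.2)) =
      ((γ n).prod (γ n)).withDensity fun p => ENNReal.ofReal (mehlerKernel ρ p.1 p.2) := by
  simpa using map_triangular (μ := γ n) (ν := γ n) (R := id) (v := fun _ => 1)
    (T := fun x y => ρ • x + σ • y) measurable_id (by fun_prop) measurable_const
    (continuous_mehlerKernel ρ).measurable (fun _ => zero_le_one) (by simp)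
    (map_add_smul_stdGaussian_eq_withDensity hσ h)

variable {u v : (Fin n → ℝ) → ℝ} {T₁ T₂ : (Fin n → ℝ) → Fin n → ℝ}

lemma exp_integral_le_integral_mul_comp (hσ : 0 < σ) (h : ρ ^ 2 + σ ^ 2 = 1) (hu : Measurable u)
    (hv : Measurable v) (hu0 : ∀ x, 0 ≤ u x) (hv0 : ∀ x, 0 ≤ v x) (hT₁ : Measurable T₁)
    (hT₂ : Measurable T₂)
    (hT₁u : (γ n).map T₁ = (γ n).withDensity fun x => ENNReal.ofReal (u x))
    (hT₂v : (γ n).map T₂ = (γ n).withDensity fun x => ENNReal.ofReal (v x))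
    (hi₁ : ∀ i, MemLp (fun x => T₁ x i - x i) 2 (γ n))
    (hi₂ : ∀ i, MemLp (fun x => T₂ x i - x i) 2 (γ n))
    (huv : Integrable (fun p => u p.1 * v (ρ • p.1 + σ • p.2)) ((γ n).prod (γ n))) :
    Real.exp ((∑ i, ∫ p, logMehlerRatio ρ (T₁ p.1 i - p.1 i)
        (T₂ (ρ • p.1 + σ • p.2) i - (ρ • p.1 + σ • p.2) i) (p.1 i) ((ρ • p.1 + σ • p.2) i)
        ∂(γ n).prod (γ n)) / (1 - ρ ^ 2)) ≤
      ∫ p, u p.1 * v (ρ • p.1 + σ • p.2) ∂(γ n).prod (γ n) := by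
  have hρ : ρ ^ 2 < 1 := by nlinarith
  have hS := map_triangular (T := fun _ => T₂) (w := fun _ => v) hT₁ (by fun_prop) hu
    (by fun_prop) hu0 hT₁u fun _ => hT₂v
  have hSm : Measurable fun p : (Fin n → ℝ) × (Fin n → ℝ) => (T₁ p.1, T₂ p.2) := by fun_prop
  have hCm : Measurable fun p : (Fin n → ℝ) × (Fin n → ℝ) => (p.1, ρ • p.1 + σ • p.2) := by
    fun_prop
  have hWm : Measurable fun p : (Fin n → ℝ) × (Fin n → ℝ) => u p.1 * v p.2 := by fun_prop
  have hW0 (p : (Fin n → ℝ) × (Fin n → ℝ)) : 0 ≤ u p.1 * v p.2 := mul_nonneg (hu0 _) (hv0 _)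
  have hKm := (continuous_mehlerKernel (n := n) ρ).measurable
  have hK0 (p : (Fin n → ℝ) × (Fin n → ℝ)) := mehlerKernel_pos hρ p.1 p.2
  have hexp := (integrable_comp_iff_integrable_div_comp hSm hCm hWm hKm hW0 hK0 hS
    (map_correlatedPair hσ h)).1 huv
  have hlog := fun i => integrable_logMehlerRatio h (hi₁ i) (hi₂ i) i
  rw [integral_comp_eq_integral_div_comp hSm hCm hWm hKm hW0 hK0 hS (map_correlatedPair hσ h)]
  simp only [mehlerKernel_div_mehlerKernel hρ] at hexp ⊢
  rw [← integral_finsetSum _ fun i _ => hlog i, ← integral_div]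
  exact convexOn_exp.map_integral_le Real.continuous_exp.continuousOn isClosed_univ
    (.of_forall fun _ => Set.mem_univ _) ((integrable_finsetSum _ fun i _ => hlog i).div_const _)
    hexp

lemma exp_le_integral_mul_smul_add_smul (hu : Continuous u) (hv : Continuous v) {δ Mu Mv : ℝ}
    (hδ : 0 < δ) (hub : ∀ x, u x ∈ Set.Icc δ Mu) (hvb : ∀ x, v x ∈ Set.Icc δ Mv)
    (hu1 : ∫ x, u x ∂γ n = 1) (hv1 : ∫ x, v x ∂γ n = 1) (hρ : 0 ≤ ρ) (hσ : 0 < σ)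
    (h : ρ ^ 2 + σ ^ 2 = 1) :
    Real.exp ((ρ * ∑ i, (∫ x, x i * u x ∂γ n) * (∫ x, x i * v x ∂γ n) -
        3 * ρ ^ 2 * (Real.log Mu + Real.log Mv)) / (1 - ρ ^ 2)) ≤
      ∫ p, u p.1 * v (ρ • p.1 + σ • p.2) ∂(γ n).prod (γ n) := by
  have hu0 (x) : 0 ≤ u x := hδ.le.trans (hub x).1
  have hv0 (x) : 0 ≤ v x := hδ.le.trans (hvb x).1
  obtain ⟨T₁, hT₁, hT₁u, hsq₁, hcost₁⟩ := exists_transport_stdGaussian hu hδ hub hu1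
  obtain ⟨T₂, hT₂, hT₂v, hsq₂, hcost₂⟩ := exists_transport_stdGaussian hv hδ hvb hv1
  have hi₁ (i : Fin n) : MemLp (fun x => T₁ x i - x i) 2 (γ n) :=
    (memLp_two_iff_integrable_sq (by fun_prop)).2 (hsq₁ i)
  have hi₂ (i : Fin n) : MemLp (fun x => T₂ x i - x i) 2 (γ n) :=
    (memLp_two_iff_integrable_sq (by fun_prop)).2 (hsq₂ i)
  have huv : Integrable (fun p => u p.1 * v (ρ • p.1 + σ • p.2)) ((γ n).prod (γ n)) :=
    .of_mem_Icc 0 (Mu * Mv) (by fun_prop) (.of_forall fun p => ⟨mul_nonneg (hu0 _) (hv0 _),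
      mul_le_mul (hub _).2 (hvb _).2 (hv0 _) ((hu0 0).trans (hub 0).2)⟩)
  have hent₁ := integral_mul_log_le_log hu.measurable hδ hub hu1
  have hent₂ := integral_mul_log_le_log hv.measurable hδ hvb hv1
  refine le_trans ?_ (exp_integral_le_integral_mul_comp hσ h hu.measurable hv.measurable hu0 hv0
    hT₁ hT₂ hT₁u hT₂v hi₁ hi₂ huv)
  have hsum := Finset.sum_le_sum fun i (_ : i ∈ Finset.univ) =>
    le_integral_logMehlerRatio h hρ (hi₁ i) (hi₂ i) i
  simp only [fun i => integral_eval_sub_of_map_eq_withDensity hu.measurable hu0 hT₁ hT₁u i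
      ((hi₁ i).integrable one_le_two),
    fun i => integral_eval_sub_of_map_eq_withDensity hv.measurable hv0 hT₂ hT₂v i
      ((hi₂ i).integrable one_le_two), Finset.sum_sub_distrib, ← Finset.mul_sum,
    Finset.sum_add_distrib] at hsum
  refine Real.exp_le_exp.2 (div_le_div_of_nonneg_right (le_trans ?_ hsum) (by nlinarith))
  nlinarith [sq_nonneg ρ]

end TwoPoint

section Association

variable {α β : Type*} [MeasurableSpace α] [MeasurableSpace β] {μ : Measure α} {ν : Measure β}

lemma integral_mul_integral_le_integral_mul_of_monovary [IsProbabilityMeasure μ] {f g : α → ℝ}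
    (h : Monovary f g) (hf : Integrable f μ) (hg : Integrable g μ)
    (hfg : Integrable (fun x => f x * g x) μ) :
    (∫ x, f x ∂μ) * ∫ x, g x ∂μ ≤ ∫ x, f x * g x ∂μ := by
  have h_nonneg : 0 ≤ ∫ p : α × α, (f p.2 - f p.1) * (g p.2 - g p.1) ∂μ.prod μ :=
    integral_nonneg fun p => monovary_iff_forall_mul_nonneg.1 h p.1 p.2
  have h_diag := (hfg.comp_snd μ).fun_add (hfg.comp_fst μ)
  have h_cross := (hg.mul_prod hf).fun_add (hf.mul_prod hg)
  have h_expand (p : α × α) : (f p.2 - f p.1) * (g p.2 - g p.1) =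
      (f p.2 * g p.2 + f p.1 * g p.1) - (g p.1 * f p.2 + f p.1 * g p.2) := by ring
  simp_rw [h_expand] at h_nonneg
  rw [integral_sub h_diag h_cross, integral_add (hfg.comp_snd μ) (hfg.comp_fst μ),
    integral_add (hg.mul_prod hf) (hf.mul_prod hg), integral_prod_mul, integral_prod_mul,
    integral_fun_fst (fun x => f x * g x), integral_fun_snd (fun x => f x * g x),
    probReal_univ, one_smul] at h_nonneg
  linarith

lemma integrable_of_forall_mem_Icc [IsFiniteMeasure μ] {f : α → ℝ} (hf : Measurable f)
    (hf1 : ∀ x, f x ∈ Set.Icc (0 : ℝ) 1) : Integrable f μ :=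
  .of_mem_Icc 0 1 hf.aemeasurable (.of_forall hf1)

lemma integral_mem_Icc [IsProbabilityMeasure μ] {f : α → ℝ} (hf : Measurable f)
    (hf1 : ∀ x, f x ∈ Set.Icc (0 : ℝ) 1) : ∫ x, f x ∂μ ∈ Set.Icc (0 : ℝ) 1 :=
  (convex_Icc 0 1).integral_mem isClosed_Icc (.of_forall hf1) (integrable_of_forall_mem_Icc hf hf1)

/-- A measure on a preordered space is positively associated if any two increasing functions
with values in `[0, 1]` are nonnegatively correlated. -/
def IsPosAssociated [Preorder α] (μ : Measure α) : Prop :=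
  ∀ ⦃f g : α → ℝ⦄, Measurable f → Measurable g →
    (∀ x, f x ∈ Set.Icc (0 : ℝ) 1) → (∀ x, g x ∈ Set.Icc (0 : ℝ) 1) → Monotone f → Monotone g →
    (∫ x, f x ∂μ) * ∫ x, g x ∂μ ≤ ∫ x, f x * g x ∂μ

lemma isPosAssociated_of_forall_monovary [Preorder α] [IsProbabilityMeasure μ]
    (h : ∀ f g : α → ℝ, Monotone f → Monotone g → Monovary f g) : IsPosAssociated μ :=
  fun f g hf hg hf1 hg1 hfm hgm =>
    integral_mul_integral_le_integral_mul_of_monovary (h f g hfm hgm)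
      (integrable_of_forall_mem_Icc hf hf1) (integrable_of_forall_mem_Icc hg hg1)
      (integrable_of_forall_mem_Icc (hf.mul hg) fun x => unitInterval.mul_mem (hf1 x) (hg1 x))

lemma IsPosAssociated.map [Preorder α] [Preorder β] (h : IsPosAssociated μ) {T : α → β}
    (hT : MeasurePreserving T μ ν) (hTm : Monotone T) : IsPosAssociated ν := by
  intro f g hf hg hf1 hg1 hfm hgm
  have := h (hf.comp hT.measurable) (hg.comp hT.measurable) (fun _ => hf1 _) (fun _ => hg1 _)
    (hfm.comp hTm) (hgm.comp hTm)
  rwa [← integral_comp_of_measurePreserving hT hf.aestronglyMeasurable,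
    ← integral_comp_of_measurePreserving hT hg.aestronglyMeasurable,
    ← integral_comp_of_measurePreserving hT (g := fun x => f x * g x)
      (hf.mul hg).aestronglyMeasurable]

lemma monotone_integral_prodMk [Preorder α] [Preorder β] [IsFiniteMeasure ν] {f : α × β → ℝ}
    (hf : Measurable f) (hf1 : ∀ p, f p ∈ Set.Icc (0 : ℝ) 1) (hfm : Monotone f) :
    Monotone fun x => ∫ y, f (x, y) ∂ν := fun _ _ hxy =>
  integral_mono (integrable_of_forall_mem_Icc (hf.comp measurable_prodMk_left) fun _ => hf1 _)
    (integrable_of_forall_mem_Icc (hf.comp measurable_prodMk_left) fun _ => hf1 _)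
    fun _ => hfm (Prod.mk_le_mk.2 ⟨hxy, le_rfl⟩)

lemma IsPosAssociated.prod [Preorder α] [Preorder β] [IsProbabilityMeasure μ]
    [IsProbabilityMeasure ν] (hμ : IsPosAssociated μ) (hν : IsPosAssociated ν) :
    IsPosAssociated (μ.prod ν) := by
  intro f g hf hg hf1 hg1 hfm hgm
  have hfg1 (p : α × β) := unitInterval.mul_mem (hf1 p) (hg1 p)
  have h_meas {k : α × β → ℝ} (hk : Measurable k) : Measurable fun x => ∫ y, k (x, y) ∂ν :=
    hk.stronglyMeasurable.integral_prod_right'.measurable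
  have h_mem {k : α × β → ℝ} (hk : Measurable k) (hk1 : ∀ p, k p ∈ Set.Icc (0 : ℝ) 1) (x : α) :
      ∫ y, k (x, y) ∂ν ∈ Set.Icc (0 : ℝ) 1 :=
    integral_mem_Icc (hk.comp measurable_prodMk_left) fun _ => hk1 _
  have h_section (x : α) : (∫ y, f (x, y) ∂ν) * ∫ y, g (x, y) ∂ν ≤ ∫ y, f (x, y) * g (x, y) ∂ν :=
    hν (hf.comp measurable_prodMk_left) (hg.comp measurable_prodMk_left) (fun _ => hf1 _)
      (fun _ => hg1 _) (fun _ _ hy => hfm (Prod.mk_le_mk.2 ⟨le_rfl, hy⟩))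
      fun _ _ hy => hgm (Prod.mk_le_mk.2 ⟨le_rfl, hy⟩)
  rw [integral_prod f (integrable_of_forall_mem_Icc hf hf1),
    integral_prod g (integrable_of_forall_mem_Icc hg hg1),
    integral_prod (fun p => f p * g p) (integrable_of_forall_mem_Icc (hf.mul hg) hfg1)]
  calc _ ≤ ∫ x, (∫ y, f (x, y) ∂ν) * ∫ y, g (x, y) ∂ν ∂μ :=
        hμ (h_meas hf) (h_meas hg) (h_mem hf hf1) (h_mem hg hg1)
          (monotone_integral_prodMk hf hf1 hfm) (monotone_integral_prodMk hg hg1 hgm)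
    _ ≤ _ := integral_mono
        (integrable_of_forall_mem_Icc ((h_meas hf).mul (h_meas hg)) fun x =>
          unitInterval.mul_mem (h_mem hf hf1 x) (h_mem hg hg1 x))
        (integrable_of_forall_mem_Icc (h_meas (hf.mul hg)) (h_mem (hf.mul hg) hfg1)) h_section

end Association

section MonotoneGaussian

variable {n : ℕ}

lemma isPosAssociated_stdGaussian (n : ℕ) : IsPosAssociated (γ n) := by
  induction n with
  | zero => exact isPosAssociated_of_forall_monovary fun f g _ _ i j h =>
      absurd h (Subsingleton.elim i j ▸ lt_irrefl _)
  | succ n ih =>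
    have h_line : IsPosAssociated (gaussianReal 0 1) :=
      isPosAssociated_of_forall_monovary fun f g hf hg => hf.monovary hg
    refine (ih.prod h_line).map (measurePreserving_finConsEquiv n) fun p q hpq => ?_
    rw [finConsEquiv_apply, finConsEquiv_apply, Fin.cons_le_cons]
    exact ⟨hpq.2, hpq.1⟩

lemma CoordMonotone.monotone {f : (Fin n → ℝ) → ℝ} (hf : CoordMonotone n f) : Monotone f := by
  intro x y hxy
  suffices h : ∀ s : Finset (Fin n), f x ≤ f (s.piecewise y x) by
    simpa using h Finset.univ
  intro s
  induction s using Finset.induction_on with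
  | empty => simp
  | insert i s hi ih =>
    refine ih.trans ?_
    have h := hf (s.piecewise y x) i _ _ (hxy i)
    rwa [← Finset.piecewise_insert, ← Finset.piecewise_eq_of_notMem s y x hi,
      Function.update_eq_self] at h

lemma memLp_two_of_forall_mem_Icc {α : Type*} [MeasurableSpace α] {μ : Measure α}
    [IsFiniteMeasure μ] {f : α → ℝ} (hf : Measurable f) (hf1 : ∀ x, f x ∈ Set.Icc (0 : ℝ) 1) :
    MemLp f 2 μ :=
  memLp_of_bounded (.of_forall hf1) hf.aestronglyMeasurable 2

/- Condition on `X` in `s X + c Y` and use positive association in `Y`. -/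
lemma gCor_gaussianNoise_le {s c : ℝ} (h : s ^ 2 + c ^ 2 = 1) (hc : 0 ≤ c)
    {f g : (Fin n → ℝ) → ℝ} (hf : Measurable f) (hg : Measurable g)
    (hf1 : ∀ x, f x ∈ Set.Icc (0 : ℝ) 1) (hg1 : ∀ x, g x ∈ Set.Icc (0 : ℝ) 1)
    (hfm : Monotone f) (hgm : Monotone g) :
    gCor n (gaussianNoise (γ n) s c f) (gaussianNoise (γ n) s c g) ≤ gCor n f g := by
  have hμ := integral_id_stdGaussian_eq_zero (n := n)
  have hf2 : MemLp f 2 (γ n) := memLp_two_of_forall_mem_Icc hf hf1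
  have hg2 : MemLp g 2 (γ n) := memLp_two_of_forall_mem_Icc hg hg1
  have hfg2 : MemLp (fun x => f x * g x) 2 (γ n) :=
    memLp_two_of_forall_mem_Icc (hf.mul hg) fun x => unitInterval.mul_mem (hf1 x) (hg1 x)
  have h_mono (x : Fin n → ℝ) : Monotone fun y => s • x + c • y := fun y z hyz =>
    add_le_add_right (smul_le_smul_of_nonneg_left hyz hc) _
  unfold gCor
  rw [integral_gaussianNoise hμ h (hf2.integrable one_le_two),
    integral_gaussianNoise hμ h (hg2.integrable one_le_two),
    ← integral_gaussianNoise hμ h (hfg2.integrable one_le_two)]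
  refine sub_le_sub_right (integral_mono ?_ ?_ fun x => ?_) _
  · exact integrable_fun_mul (memLp_gaussianNoise hμ h hf2) (memLp_gaussianNoise hμ h hg2)
  · exact (memLp_gaussianNoise hμ h hfg2).integrable one_le_two
  · exact isPosAssociated_stdGaussian n (hf.comp (by fun_prop)) (hg.comp (by fun_prop))
      (fun _ => hf1 _) (fun _ => hg1 _) (hfm.comp (h_mono x)) (hgm.comp (h_mono x))

end MonotoneGaussian

section GaussianMoments

variable {n : ℕ} {s c : ℝ} {f k A : (Fin n → ℝ) → ℝ}

lemma measurePreserving_update_neg_stdGaussian (i : Fin n) :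
    MeasurePreserving (fun x : Fin n → ℝ => Function.update x i (-x i)) (γ n) (γ n) := by
  have h_coord (j : Fin n) : MeasurePreserving (if j = i then fun t : ℝ => -t else fun t => t)
      (gaussianReal 0 1) (gaussianReal 0 1) := by
    split_ifs
    · exact ⟨measurable_neg, by simpa using gaussianReal_map_neg (μ := 0) (v := 1)⟩
    · exact .id _
  have h_update : (fun x : Fin n → ℝ => Function.update x i (-x i)) =
      fun x j => (if j = i then fun t : ℝ => -t else fun t => t) (x j) := by
    ext x j
    rcases eq_or_ne j i with rfl | hj
    · simp
    · simp [hj]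
  rw [h_update]
  exact measurePreserving_pi (fun _ => gaussianReal 0 1) (fun _ => gaussianReal 0 1) h_coord

/- Pair each point with its reflection in the `i`-th coordinate. -/
lemma integral_eval_mul_nonneg (hk : Monotone k) (i : Fin n)
    (hki : Integrable (fun x => x i * k x) (γ n)) : 0 ≤ ∫ x, x i * k x ∂γ n := by
  have hT := measurePreserving_update_neg_stdGaussian i
  have h_refl := integral_comp_of_measurePreserving hT hki.aestronglyMeasurable
  have h_sum : 0 ≤ ∫ x, (x i * k x +
      Function.update x i (-x i) i * k (Function.update x i (-x i))) ∂γ n := by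
    refine integral_nonneg fun x => ?_
    rw [Pi.zero_apply, Function.update_self]
    rcases le_total (x i) 0 with hx | hx
    · have := hk (le_update_self_iff.2 (show x i ≤ -x i by linarith))
      nlinarith
    · have := hk (update_le_self_iff.2 (show -x i ≤ x i by linarith))
      nlinarith
  have hki' : Integrable (fun x => Function.update x i (-x i) i *
      k (Function.update x i (-x i))) (γ n) := hT.integrable_comp_of_integrable hki
  rw [integral_add hki hki', h_refl] at h_sum
  linarith

lemma abs_integral_eval_mul_le_one (hk : ∀ x, |k x| ≤ 1) (i : Fin n) :
    |∫ x, x i * k x ∂γ n| ≤ 1 := by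
  have h_sq : Integrable (fun x : Fin n → ℝ => x i * x i) (γ n) :=
    integrable_fun_mul (memLp_two_eval_stdGaussian i) (memLp_two_eval_stdGaussian i)
  have h_bound : ∫ x, (1 + x i * x i) / 2 ∂γ n = 1 := by
    rw [integral_div, integral_add (integrable_const _) h_sq, integral_eval_mul_eval_stdGaussian]
    simp
  rw [← Real.norm_eq_abs, ← h_bound]
  refine norm_integral_le_of_norm_le (((integrable_const (1 : ℝ)).fun_add h_sq).div_const 2)
    (.of_forall fun x => ?_)
  rw [Real.norm_eq_abs, abs_mul]
  nlinarith [hk x, abs_nonneg (x i), abs_mul_abs_self (x i), sq_nonneg (|x i| - 1)]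

/-- The noise operator applied to `f` with a factor `Yᵢ` inserted: `x ↦ E Yᵢ f(s x + c Y)`. It is
`c / s` times the `i`-th partial derivative of `gaussianNoise (γ n) s c f`. -/
def noiseMoment (s c : ℝ) (f : (Fin n → ℝ) → ℝ) (i : Fin n) (x : Fin n → ℝ) : ℝ :=
  ∫ y, y i * f (s • x + c • y) ∂γ n

lemma noiseMoment_nonneg (hc : 0 ≤ c) (hf : Measurable f) (hf1 : ∀ x, f x ∈ Set.Icc (0 : ℝ) 1)
    (hfm : Monotone f) (i : Fin n) (x : Fin n → ℝ) : 0 ≤ noiseMoment s c f i x := by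
  refine integral_eval_mul_nonneg (k := fun y => f (s • x + c • y)) (fun y z hyz => hfm ?_) i
    (integrable_fun_mul (memLp_two_eval_stdGaussian i) ?_)
  · exact add_le_add_right (smul_le_smul_of_nonneg_left hyz hc) _
  · exact memLp_two_of_forall_mem_Icc (hf.comp (by fun_prop)) fun _ => hf1 _

lemma abs_le_one_of_mem_Icc {t : ℝ} (ht : t ∈ Set.Icc (0 : ℝ) 1) : |t| ≤ 1 :=
  abs_le.2 ⟨by linarith [ht.1], ht.2⟩

lemma abs_noiseMoment_le_one (hf1 : ∀ x, f x ∈ Set.Icc (0 : ℝ) 1) (i : Fin n) (x : Fin n → ℝ) :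
    |noiseMoment s c f i x| ≤ 1 :=
  abs_integral_eval_mul_le_one (fun _ => abs_le_one_of_mem_Icc (hf1 _)) i

lemma memLp_two_fst_mul_snd_eval (hA : MemLp A 2 (γ n)) (i : Fin n) :
    MemLp (fun p : (Fin n → ℝ) × (Fin n → ℝ) => A p.1 * p.2 i) 2 ((γ n).prod (γ n)) := by
  have hm := hA.1.comp_fst (ν := γ n) |>.mul (memLp_two_eval_stdGaussian i).1.comp_snd
  refine (memLp_two_iff_integrable_sq hm).2 ?_
  simp only [Pi.mul_apply, mul_pow]
  exact hA.integrable_sq.mul_prod (memLp_two_eval_stdGaussian i).integrable_sq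

/- The adjoint of `noiseMoment`, from the inverse of the rotation
`p ↦ (s p₁ + c p₂, s p₂ - c p₁)`. -/
lemma integral_mul_noiseMoment (h : s ^ 2 + c ^ 2 = 1) (hA : MemLp A 2 (γ n))
    (hf : MemLp f 2 (γ n)) (i : Fin n) :
    ∫ x, A x * noiseMoment s c f i x ∂γ n =
      ∫ q, A (s • q.1 - c • q.2) * (c * q.1 i + s * q.2 i) * f q.1 ∂(γ n).prod (γ n) := by
  have hμ := integral_id_stdGaussian_eq_zero (n := n)
  have hΦ : Integrable (fun p => A p.1 * p.2 i * f (s • p.1 + c • p.2)) ((γ n).prod (γ n)) :=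
    integrable_fun_mul (memLp_two_fst_mul_snd_eval hA i) (memLp_smul_add_smul hμ h hf)
  have h_rot := integral_comp_of_measurePreserving
    (measurePreserving_rotation hμ (show s ^ 2 + (-c) ^ 2 = 1 by rwa [neg_sq])) hΦ.1
  calc ∫ x, A x * noiseMoment s c f i x ∂γ n
      = ∫ p, A p.1 * p.2 i * f (s • p.1 + c • p.2) ∂(γ n).prod (γ n) := by
        rw [integral_prod _ hΦ]
        simp only [noiseMoment, mul_assoc, integral_const_mul]
    _ = _ := by
        rw [← h_rot]
        refine integral_congr_ae (.of_forall fun q => ?_)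
        have h_fst : s • (s • q.1 + -c • q.2) + c • (s • q.2 - -c • q.1) = q.1 := by
          ext j
          simp only [Pi.add_apply, Pi.sub_apply, Pi.smul_apply, smul_eq_mul]
          linear_combination q.1 j * h
        simp only [h_fst]
        simp only [neg_smul, ← sub_eq_add_neg, sub_neg_eq_add, Pi.add_apply, Pi.smul_apply,
          smul_eq_mul, add_comm (s * q.2 i)]

lemma integral_noiseMoment (h : s ^ 2 + c ^ 2 = 1) (hf : MemLp f 2 (γ n)) (i : Fin n) :
    ∫ x, noiseMoment s c f i x ∂γ n = c * gM1 n f i := by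
  have h_fst := (integrable_fun_mul (memLp_two_eval_stdGaussian i) hf).comp_fst (γ n)
  have h_snd := (hf.integrable one_le_two).mul_prod (integrable_eval_stdGaussian (n := n) i)
  have h_adj := integral_mul_noiseMoment (A := fun _ => 1) h (memLp_const 1) hf i
  have h_expand (q : (Fin n → ℝ) × (Fin n → ℝ)) : (c * q.1 i + s * q.2 i) * f q.1 =
      c * (q.1 i * f q.1) + s * (f q.1 * q.2 i) := by ring
  simp only [one_mul, h_expand] at h_adj
  rw [h_adj, integral_add (h_fst.const_mul c) (h_snd.const_mul s), integral_const_mul,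
    integral_const_mul, integral_mul_snd_eval_eq_zero f i, mul_zero, add_zero,
    integral_fun_fst (fun x => x i * f x), probReal_univ, one_smul]
  rfl

lemma integrable_eval_mul_eval_mul (hf : Measurable f) (hf1 : ∀ x, f x ∈ Set.Icc (0 : ℝ) 1)
    (i j : Fin n) : Integrable (fun x => x i * x j * f x) (γ n) :=
  (integrable_fun_mul (memLp_two_eval_stdGaussian i) (memLp_two_eval_stdGaussian j)).mul_bdd
    (c := 1) hf.aestronglyMeasurable (.of_forall fun x => abs_le_one_of_mem_Icc (hf1 x))

lemma gM2_eq_integral_sub (hf : Measurable f) (hf1 : ∀ x, f x ∈ Set.Icc (0 : ℝ) 1)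
    (i j : Fin n) :
    gM2 n f i j = ∫ x, x i * x j * f x ∂γ n - (if i = j then 1 else 0) * ∫ x, f x ∂γ n := by
  unfold gM2
  simp only [sub_mul]
  rw [integral_sub (integrable_eval_mul_eval_mul hf hf1 i j)
    ((integrable_of_forall_mem_Icc hf hf1).const_mul _), integral_const_mul]

lemma integral_eval_mul_noiseMoment (h : s ^ 2 + c ^ 2 = 1) (hf : Measurable f)
    (hf1 : ∀ x, f x ∈ Set.Icc (0 : ℝ) 1) (i j : Fin n) :
    ∫ x, x j * noiseMoment s c f i x ∂γ n = s * c * gM2 n f j i := by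
  have hf2 : MemLp f 2 (γ n) := memLp_two_of_forall_mem_Icc hf hf1
  have h_coord (k : Fin n) := integrable_fun_mul (memLp_two_eval_stdGaussian k) hf2
  have h_fst := (integrable_eval_mul_eval_mul hf hf1 j i).comp_fst (γ n)
  have h_snd := (hf2.integrable one_le_two).mul_prod
    (integrable_fun_mul (memLp_two_eval_stdGaussian j) (memLp_two_eval_stdGaussian i))
  have h_diag : Integrable (fun q : (Fin n → ℝ) × (Fin n → ℝ) =>
      q.1 j * q.1 i * f q.1 - f q.1 * (q.2 j * q.2 i)) ((γ n).prod (γ n)) := h_fst.sub h_snd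
  have h_cross (k l : Fin n) (a : ℝ) : Integrable (fun q : (Fin n → ℝ) × (Fin n → ℝ) =>
      a * (q.1 k * f q.1 * q.2 l)) ((γ n).prod (γ n)) :=
    ((h_coord k).mul_prod (integrable_eval_stdGaussian l)).const_mul a
  have h_expand (q : (Fin n → ℝ) × (Fin n → ℝ)) :
      (s • q.1 - c • q.2) j * (c * q.1 i + s * q.2 i) * f q.1 =
        s * c * (q.1 j * q.1 i * f q.1 - f q.1 * (q.2 j * q.2 i)) +
          s ^ 2 * (q.1 j * f q.1 * q.2 i) - c ^ 2 * (q.1 i * f q.1 * q.2 j) := by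
    simp only [Pi.sub_apply, Pi.smul_apply, smul_eq_mul]
    ring
  rw [integral_mul_noiseMoment h (memLp_two_eval_stdGaussian j) hf2 i]
  simp only [h_expand]
  rw [integral_sub ((h_diag.const_mul _).fun_add (h_cross j i _)) (h_cross i j _),
    integral_add (h_diag.const_mul _) (h_cross j i _), integral_const_mul,
    integral_sub h_fst h_snd, integral_const_mul, integral_const_mul,
    integral_mul_snd_eval_eq_zero (fun x => x j * f x) i,
    integral_mul_snd_eval_eq_zero (fun x => x i * f x) j,
    integral_prod_mul f fun y : Fin n → ℝ => y j * y i, integral_eval_mul_eval_stdGaussian,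
    integral_fun_fst (fun x => x j * x i * f x), probReal_univ, one_smul,
    gM2_eq_integral_sub hf hf1]
  ring

end GaussianMoments

section MehlerDerivative

variable {n : ℕ} {ρ s c R : ℝ} {f φ : (Fin n → ℝ) → ℝ}

lemma mehlerKernelReal_le (h : ρ ^ 2 < 1) (x z : ℝ) :
    mehlerKernelReal ρ x z ≤ (√(1 - ρ ^ 2))⁻¹ * Real.exp (x ^ 2 / 2) := by
  unfold mehlerKernelReal
  refine mul_le_mul_of_nonneg_left (Real.exp_le_exp.2 ?_) (by positivity)
  rw [div_le_div_iff₀ (by linarith) two_pos]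
  linarith [sq_nonneg (x - ρ * z)]

lemma mehlerKernel_le (h : ρ ^ 2 < 1) {x : Fin n → ℝ} (hx : ‖x‖ ≤ R) (z : Fin n → ℝ) :
    mehlerKernel ρ x z ≤ ((√(1 - ρ ^ 2))⁻¹ * Real.exp (R ^ 2 / 2)) ^ n := by
  have h_factor (i : Fin n) :
      mehlerKernelReal ρ (x i) (z i) ≤ (√(1 - ρ ^ 2))⁻¹ * Real.exp (R ^ 2 / 2) := by
    refine (mehlerKernelReal_le h _ _).trans ?_
    have hxi : |x i| ≤ R := (norm_le_pi_norm x i).trans hx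
    exact mul_le_mul_of_nonneg_left (Real.exp_le_exp.2 (div_le_div_of_nonneg_right
      (sq_le_sq' (abs_le.1 hxi).1 (abs_le.1 hxi).2) two_pos.le)) (by positivity)
  calc mehlerKernel ρ x z ≤ ∏ _i : Fin n, ((√(1 - ρ ^ 2))⁻¹ * Real.exp (R ^ 2 / 2)) :=
        Finset.prod_le_prod (fun i _ => (mehlerKernelReal_pos h _ _).le) fun i _ => h_factor i
    _ = _ := by simp

lemma abs_mehlerKernel_mul_score_le (h : ρ ^ 2 < 1) {x : Fin n → ℝ} (hx : ‖x‖ ≤ R)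
    (z : Fin n → ℝ) (i : Fin n) (a : ℝ) :
    |mehlerKernel ρ x z * (ρ * (z i - ρ * x i) / (1 - ρ ^ 2) * a)| ≤
      ((√(1 - ρ ^ 2))⁻¹ * Real.exp (R ^ 2 / 2)) ^ n *
        (|ρ| / (1 - ρ ^ 2) * (|z i * a| + |ρ| * R * |a|)) := by
  have h0 : 0 < 1 - ρ ^ 2 := sub_pos.2 h
  have h_diff : |z i - ρ * x i| ≤ |z i| + |ρ| * R := by
    refine (abs_sub _ _).trans (add_le_add le_rfl ?_)
    rw [abs_mul]
    exact mul_le_mul_of_nonneg_left ((norm_le_pi_norm x i).trans hx) (abs_nonneg ρ)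
  rw [abs_mul, abs_of_pos (mehlerKernel_pos h x z)]
  refine mul_le_mul (mehlerKernel_le h hx z) ?_ (abs_nonneg _) (by positivity)
  calc |ρ * (z i - ρ * x i) / (1 - ρ ^ 2) * a|
      = |ρ| / (1 - ρ ^ 2) * (|z i - ρ * x i| * |a|) := by
        rw [abs_mul, abs_div, abs_mul, abs_of_pos h0]; ring
    _ ≤ |ρ| / (1 - ρ ^ 2) * ((|z i| + |ρ| * R) * |a|) := by gcongr
    _ = |ρ| / (1 - ρ ^ 2) * (|z i * a| + |ρ| * R * |a|) := by rw [abs_mul]; ring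

lemma integrable_mehlerKernel_mul (h : ρ ^ 2 < 1) (hφ : Integrable φ (γ n)) (x : Fin n → ℝ) :
    Integrable (fun z => mehlerKernel ρ x z * φ z) (γ n) := by
  refine hφ.bdd_mul (c := ((√(1 - ρ ^ 2))⁻¹ * Real.exp (‖x‖ ^ 2 / 2)) ^ n)
    ((continuous_mehlerKernel ρ).comp (.prodMk_right x)).aestronglyMeasurable
    (.of_forall fun z => ?_)
  · rw [Real.norm_of_nonneg (mehlerKernel_pos h x z).le]
    exact mehlerKernel_le h le_rfl z

lemma hasDerivAt_mehlerKernelReal (ρ x z : ℝ) :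
    HasDerivAt (fun x => mehlerKernelReal ρ x z)
      (mehlerKernelReal ρ x z * (ρ * (z - ρ * x) / (1 - ρ ^ 2))) x := by
  have h_exponent : HasDerivAt
      (fun x => -(ρ ^ 2 * (x ^ 2 + z ^ 2) - 2 * ρ * x * z) / (2 * (1 - ρ ^ 2)))
      (ρ * (z - ρ * x) / (1 - ρ ^ 2)) x := by
    refine HasDerivAt.congr_deriv (((((hasDerivAt_pow 2 x).add_const (z ^ 2)).const_mul
      (ρ ^ 2)).sub (((hasDerivAt_id x).const_mul (2 * ρ)).mul_const z)).neg.div_const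
        (2 * (1 - ρ ^ 2))) ?_
    rw [← mul_div_mul_left _ (1 - ρ ^ 2) two_ne_zero]
    congr 1
    norm_num
    ring
  exact (h_exponent.exp.const_mul _).congr_deriv (mul_assoc _ _ _).symm

lemma hasFDerivAt_mehlerKernel (ρ : ℝ) (x z : Fin n → ℝ) :
    HasFDerivAt (fun x => mehlerKernel ρ x z)
      (∑ i, (mehlerKernel ρ x z * (ρ * (z i - ρ * x i) / (1 - ρ ^ 2))) •
        ContinuousLinearMap.proj (R := ℝ) (φ := fun _ : Fin n => ℝ) i) x := by
  have h_factor (i : Fin n) := (hasDerivAt_mehlerKernelReal ρ (x i) (z i)).comp_hasFDerivAt x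
    (hasFDerivAt_apply (𝕜 := ℝ) i x)
  refine (HasFDerivAt.finsetProd fun i _ => h_factor i).congr_fderiv ?_
  refine Finset.sum_congr rfl fun i hi => ?_
  rw [smul_smul, ← mul_assoc]
  exact congrArg (· • _) (congrArg (· * _) (Finset.prod_erase_mul _ _ hi))

lemma hasFDerivAt_integral_mehlerKernel_mul (h : ρ ^ 2 < 1) (hφ : Integrable φ (γ n))
    (hφ' : ∀ i, Integrable (fun z => z i * φ z) (γ n)) (x : Fin n → ℝ) :
    HasFDerivAt (fun x => ∫ z, mehlerKernel ρ x z * φ z ∂γ n)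
      (∑ i, (∫ z, mehlerKernel ρ x z * (ρ * (z i - ρ * x i) / (1 - ρ ^ 2) * φ z) ∂γ n) •
        ContinuousLinearMap.proj (R := ℝ) (φ := fun _ : Fin n => ℝ) i) x := by
  let π (i : Fin n) := ContinuousLinearMap.proj (R := ℝ) (φ := fun _ : Fin n => ℝ) i
  let G (i : Fin n) (x z : Fin n → ℝ) : ℝ :=
    mehlerKernel ρ x z * (ρ * (z i - ρ * x i) / (1 - ρ ^ 2) * φ z)
  let b (i : Fin n) (z : Fin n → ℝ) : ℝ :=
    ((√(1 - ρ ^ 2))⁻¹ * Real.exp ((‖x‖ + 1) ^ 2 / 2)) ^ n *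
      (|ρ| / (1 - ρ ^ 2) * (|z i * φ z| + |ρ| * (‖x‖ + 1) * |φ z|))
  have hG_le {w : Fin n → ℝ} (hw : ‖w‖ ≤ ‖x‖ + 1) (i : Fin n) (z : Fin n → ℝ) : |G i w z| ≤ b i z :=
    abs_mehlerKernel_mul_score_le h hw z i (φ z)
  have hb (i : Fin n) : Integrable (b i) (γ n) :=
    (((hφ' i).abs.fun_add (hφ.abs.const_mul _)).const_mul _).const_mul _
  have h_meas (w : Fin n → ℝ) : AEStronglyMeasurable (mehlerKernel ρ w) (γ n) :=
    ((continuous_mehlerKernel ρ).comp (.prodMk_right w)).aestronglyMeasurable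
  have hG_meas (i : Fin n) : AEStronglyMeasurable (G i x) (γ n) :=
    (h_meas x).mul ((by fun_prop : Continuous fun z : Fin n → ℝ =>
      ρ * (z i - ρ * x i) / (1 - ρ ^ 2)).aestronglyMeasurable.mul hφ.aestronglyMeasurable)
  have hG (i : Fin n) : Integrable (G i x) (γ n) :=
    (hb i).mono' (hG_meas i) (.of_forall fun z => hG_le (by linarith) i z)
  refine (hasFDerivAt_integral_of_dominated_of_fderiv_le (F' := fun w z => ∑ i, G i w z • π i)
    (bound := fun z => ∑ i, b i z * ‖π i‖)
    (Metric.ball_mem_nhds x one_pos) (.of_forall fun w => (h_meas w).mul hφ.aestronglyMeasurable)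
    (integrable_mehlerKernel_mul h hφ x)
    (Finset.aestronglyMeasurable_fun_sum _ fun i _ => (hG_meas i).smul_const _)
    (.of_forall fun z w hw => ?_) (integrable_finsetSum _ fun i _ => (hb i).mul_const _)
    (.of_forall fun z w _ => ?_)).congr_fderiv ?_
  · have hw' : ‖w‖ ≤ ‖x‖ + 1 := by
      linarith [norm_le_norm_add_norm_sub' w x, mem_ball_iff_norm.1 hw]
    refine norm_sum_le_of_le _ fun i _ => ?_
    rw [norm_smul]
    exact mul_le_mul_of_nonneg_right (hG_le hw' i z) (norm_nonneg _)
  · refine ((hasFDerivAt_mehlerKernel ρ w z).mul_const (φ z)).congr_fderiv ?_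
    simp only [Finset.smul_sum, smul_smul, G, π]
    exact Finset.sum_congr rfl fun i _ => congrArg (· • _) (by ring)
  · rw [integral_finsetSum _ fun i _ => (hG i).smul_const _]
    simp only [integral_smul_const, G, π]

end MehlerDerivative

section NoiseDerivative

variable {n : ℕ} {s c : ℝ} {f φ : (Fin n → ℝ) → ℝ}

lemma integral_comp_smul_add_smul_eq (h : s ^ 2 + c ^ 2 = 1) (hc : 0 < c) (hφ : Measurable φ)
    (x : Fin n → ℝ) : ∫ y, φ (s • x + c • y) ∂γ n = ∫ z, mehlerKernel s x z * φ z ∂γ n :=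
  integral_comp_of_map_eq_withDensity (by fun_prop)
    ((continuous_mehlerKernel s).comp (.prodMk_right x)).measurable
    (fun z => (mehlerKernel_pos (by linarith [pow_pos hc 2]) x z).le)
    (map_add_smul_stdGaussian_eq_withDensity hc h x) hφ

lemma noiseMoment_eq_integral_mehlerKernel (h : s ^ 2 + c ^ 2 = 1) (hc : 0 < c)
    (hf : Measurable f) (i : Fin n) (x : Fin n → ℝ) :
    noiseMoment s c f i x = ∫ z, mehlerKernel s x z * ((z i - s * x i) / c * f z) ∂γ n := by
  rw [← integral_comp_smul_add_smul_eq h hc (φ := fun z => (z i - s * x i) / c * f z)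
    (Measurable.mul (by fun_prop) hf)]
  refine integral_congr_ae (.of_forall fun y => ?_)
  simp only [Pi.add_apply, Pi.smul_apply, smul_eq_mul, add_sub_cancel_left,
    mul_div_cancel_left₀ _ hc.ne']

lemma integrable_eval_mul (hf : Measurable f) (hf1 : ∀ x, f x ∈ Set.Icc 0 1) (i : Fin n) :
    Integrable (fun x => x i * f x) (γ n) :=
  integrable_fun_mul (memLp_two_eval_stdGaussian i) (memLp_two_of_forall_mem_Icc hf hf1)

lemma hasFDerivAt_gaussianNoise (h : s ^ 2 + c ^ 2 = 1) (hc : 0 < c) (hf : Measurable f)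
    (hf1 : ∀ x, f x ∈ Set.Icc 0 1) (x : Fin n → ℝ) :
    HasFDerivAt (gaussianNoise (γ n) s c f) (∑ i, (s / c * noiseMoment s c f i x) •
      ContinuousLinearMap.proj (R := ℝ) (φ := fun _ : Fin n => ℝ) i) x := by
  have hs : s ^ 2 < 1 := by linarith [pow_pos hc 2]
  rw [show gaussianNoise (γ n) s c f = fun x => ∫ z, mehlerKernel s x z * f z ∂γ n from
    funext fun x => integral_comp_smul_add_smul_eq h hc hf x]
  refine (hasFDerivAt_integral_mehlerKernel_mul hs (integrable_of_forall_mem_Icc hf hf1)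
    (integrable_eval_mul hf hf1) x).congr_fderiv (Finset.sum_congr rfl fun i _ => ?_)
  rw [noiseMoment_eq_integral_mehlerKernel h hc hf, ← integral_const_mul]
  refine congrArg (· • _) (integral_congr_ae (.of_forall fun z => ?_))
  have hc2 : 1 - s ^ 2 = c * c := by linarith
  simp only [hc2]
  field_simp

lemma continuous_noiseMoment (h : s ^ 2 + c ^ 2 = 1) (hc : 0 < c) (hf : Measurable f)
    (hf1 : ∀ x, f x ∈ Set.Icc 0 1) (i : Fin n) : Continuous (noiseMoment s c f i) := by
  have hs : s ^ 2 < 1 := by linarith [pow_pos hc 2]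
  have hfi : Integrable f (γ n) := integrable_of_forall_mem_Icc hf hf1
  have h_cont : Continuous fun x => ∫ z, mehlerKernel s x z * f z ∂γ n :=
    continuous_iff_continuousAt.2 fun x =>
      (hasFDerivAt_integral_mehlerKernel_mul hs hfi (integrable_eval_mul hf hf1) x).continuousAt
  have h_cont' : Continuous fun x => ∫ z, mehlerKernel s x z * (z i * f z) ∂γ n :=
    continuous_iff_continuousAt.2 fun x =>
      (hasFDerivAt_integral_mehlerKernel_mul hs (integrable_eval_mul hf hf1 i)
        (fun j => by simpa only [mul_assoc] using integrable_eval_mul_eval_mul hf hf1 j i)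
        x).continuousAt
  refine ((h_cont'.fun_sub (((continuous_apply i).const_mul s).fun_mul h_cont)).div_const c).congr
    fun x => ?_
  rw [noiseMoment_eq_integral_mehlerKernel h hc hf, ← integral_const_mul,
    ← integral_sub (integrable_mehlerKernel_mul hs (integrable_eval_mul hf hf1 i) x)
      ((integrable_mehlerKernel_mul hs hfi x).const_mul _), ← integral_div]
  exact integral_congr_ae (.of_forall fun z => by ring)

lemma hasDerivAt_gaussianNoise_rotation (h : s ^ 2 + c ^ 2 = 1) (hc : 0 < c) (hf : Measurable f)
    (hf1 : ∀ x, f x ∈ Set.Icc 0 1) (x y : Fin n → ℝ) (θ : ℝ) :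
    HasDerivAt (fun θ => gaussianNoise (γ n) s c f (Real.sin θ • x + Real.cos θ • y))
      (s / c * ∑ i, (Real.cos θ * x i - Real.sin θ * y i) *
        noiseMoment s c f i (Real.sin θ • x + Real.cos θ • y)) θ := by
  have h_path : HasDerivAt (fun θ => Real.sin θ • x + Real.cos θ • y)
      (Real.cos θ • x + (-Real.sin θ) • y) θ :=
    ((Real.hasDerivAt_sin θ).smul_const x).add ((Real.hasDerivAt_cos θ).smul_const y)
  refine ((hasFDerivAt_gaussianNoise h hc hf hf1 _).comp_hasDerivAt θ h_path).congr_deriv ?_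
  simp only [sum_apply, smul_apply,
    ContinuousLinearMap.proj_apply, Pi.add_apply, Pi.smul_apply, smul_eq_mul, Finset.mul_sum]
  exact Finset.sum_congr rfl fun i _ => by ring

end NoiseDerivative

section IntegrationByParts

variable {n : ℕ} {s c a b : ℝ} {f A H k : (Fin n → ℝ) → ℝ}

lemma integral_comp_smul_add_smul_mul_eval_eq_zero (a b : ℝ) (hk : Measurable k) (i : Fin n) :
    ∫ p, k (a • p.1 + b • p.2) * (a * p.2 i - b * p.1 i) ∂(γ n).prod (γ n) = 0 := by
  rcases eq_or_ne (a ^ 2 + b ^ 2) 0 with h | h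
  · obtain ⟨rfl, rfl⟩ : a = 0 ∧ b = 0 := by constructor <;> nlinarith [sq_nonneg a, sq_nonneg b]
    simp
  have hq : √(a ^ 2 + b ^ 2) ^ 2 = a ^ 2 + b ^ 2 := Real.sq_sqrt (by positivity)
  have hq0 : √(a ^ 2 + b ^ 2) ≠ 0 := fun h0 => h (by rw [← hq, h0, zero_pow two_ne_zero])
  set q := √(a ^ 2 + b ^ 2)
  have h_unit : (a / q) ^ 2 + (b / q) ^ 2 = 1 := by
    rw [div_pow, div_pow, ← add_div, hq, div_self h]
  have h_rot (p : (Fin n → ℝ) × (Fin n → ℝ)) : k (a • p.1 + b • p.2) * (a * p.2 i - b * p.1 i) =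
      q * (k (q • ((a / q) • p.1 + (b / q) • p.2)) * ((a / q) • p.2 - (b / q) • p.1) i) := by
    simp only [smul_add, smul_smul, mul_div_cancel₀ _ hq0, Pi.sub_apply, Pi.smul_apply, smul_eq_mul]
    field_simp
  simp only [h_rot, integral_const_mul]
  rw [integral_comp_of_measurePreserving
      (measurePreserving_rotation integral_id_stdGaussian_eq_zero h_unit)
      (g := fun p : (Fin n → ℝ) × (Fin n → ℝ) => k (q • p.1) * p.2 i) (by fun_prop),
    integral_mul_snd_eval_eq_zero fun x => k (q • x), mul_zero]

/- Integration by parts for the noise operator: both sides are moments of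
`f (s s' x + s c' Z + c W)`, and `c Z - s c' W` is independent of `s c' Z + c W`. -/
lemma noiseMoment_gaussianNoise (hc : c ≠ 0) (hf : Measurable f) (hf1 : ∀ x, f x ∈ Set.Icc 0 1)
    (s' c' : ℝ) (i : Fin n) (x : Fin n → ℝ) :
    noiseMoment s' c' (gaussianNoise (γ n) s c f) i x =
      c' * (s / c) * gaussianNoise (γ n) s' c' (noiseMoment s c f i) x := by
  let F (p : (Fin n → ℝ) × (Fin n → ℝ)) : ℝ := f (s • (s' • x + c' • p.1) + c • p.2)
  have hF2 : MemLp F 2 ((γ n).prod (γ n)) :=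
    memLp_two_of_forall_mem_Icc (hf.comp (by fun_prop)) fun _ => hf1 _
  have h_fst : Integrable (fun p => p.1 i * F p) ((γ n).prod (γ n)) :=
    integrable_fun_mul ((memLp_two_eval_stdGaussian i).comp_fst _) hF2
  have h_snd : Integrable (fun p => p.2 i * F p) ((γ n).prod (γ n)) :=
    integrable_fun_mul ((memLp_two_eval_stdGaussian i).comp_snd _) hF2
  have h_left : noiseMoment s' c' (gaussianNoise (γ n) s c f) i x =
      ∫ p, p.1 i * F p ∂(γ n).prod (γ n) := by
    rw [integral_prod _ h_fst]
    simp only [F, integral_const_mul, noiseMoment, gaussianNoise]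
  have h_right : gaussianNoise (γ n) s' c' (noiseMoment s c f i) x =
      ∫ p, p.2 i * F p ∂(γ n).prod (γ n) := by
    rw [integral_prod _ h_snd]
    simp only [F, noiseMoment, gaussianNoise]
  have h_orth : (s * c') * ∫ p, p.2 i * F p ∂(γ n).prod (γ n) -
      c * ∫ p, p.1 i * F p ∂(γ n).prod (γ n) = 0 := by
    rw [← integral_const_mul, ← integral_const_mul,
      ← integral_sub (h_snd.const_mul _) (h_fst.const_mul _),
      ← integral_comp_smul_add_smul_mul_eval_eq_zero (s * c') c
        (k := fun w => f ((s * s') • x + w)) (hf.comp (by fun_prop)) i]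
    refine integral_congr_ae (.of_forall fun p => ?_)
    simp only [F, smul_add, smul_smul, add_assoc]
    ring
  rw [h_left, h_right]
  field_simp
  linarith

lemma memLp_noiseMoment (h : s ^ 2 + c ^ 2 = 1) (hc : 0 < c) (hf : Measurable f)
    (hf1 : ∀ x, f x ∈ Set.Icc 0 1) (i : Fin n) : MemLp (noiseMoment s c f i) 2 (γ n) :=
  .of_bound (continuous_noiseMoment h hc hf hf1 i).aestronglyMeasurable 1
    (.of_forall (abs_noiseMoment_le_one hf1 i))

/- In the coordinates `V = s' X + c' Y`, `Z = c' X - s' Y` the velocity of the rotation is `Z`,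
which is integrated by parts for each fixed `V`. -/
lemma integral_gaussianNoise_mul_rotation_velocity_mul (h : s ^ 2 + c ^ 2 = 1) (hc : 0 < c)
    (hf : Measurable f) (hf1 : ∀ x, f x ∈ Set.Icc 0 1) (hH : MemLp H 2 (γ n)) {s' c' : ℝ}
    (h' : s' ^ 2 + c' ^ 2 = 1) (i : Fin n) :
    ∫ p, gaussianNoise (γ n) s c f p.1 * ((c' * p.1 i - s' * p.2 i) * H (s' • p.1 + c' • p.2))
        ∂(γ n).prod (γ n) =
      c' * (s / c) * ∫ p, noiseMoment s c f i p.1 * H (s' • p.1 + c' • p.2)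
        ∂(γ n).prod (γ n) := by
  have hμ := integral_id_stdGaussian_eq_zero (n := n)
  have hf2 : MemLp f 2 (γ n) := memLp_two_of_forall_mem_Icc hf hf1
  have hD := memLp_noiseMoment h hc hf hf1 i
  have h'' : s' ^ 2 + (-c') ^ 2 = 1 := by rwa [neg_sq]
  have h_adjoint : ∫ p, noiseMoment s c f i p.1 * H (s' • p.1 + c' • p.2) ∂(γ n).prod (γ n) =
      ∫ x, H x * gaussianNoise (γ n) s' (-c') (noiseMoment s c f i) x ∂γ n := by
    have h_int := integrable_fun_mul (hH.comp_fst (γ n)) (memLp_smul_add_smul hμ h'' hD)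
    rw [← integral_mul_gaussianNoise hμ h'' hH hD,
      ← integral_comp_of_measurePreserving (measurePreserving_rotation hμ h') h_int.1]
    refine integral_congr_ae (.of_forall fun p => ?_)
    have h_inv : s' • (s' • p.1 + c' • p.2) + (-c') • (s' • p.2 - c' • p.1) = p.1 := by
      ext j
      simp only [Pi.add_apply, Pi.sub_apply, Pi.smul_apply, smul_eq_mul]
      linear_combination p.1 j * h'
    simp only [h_inv, mul_comm]
  calc _ = -∫ p, H (s' • p.1 - (-c') • p.2) * (-c' * p.1 i + s' * p.2 i) *
        gaussianNoise (γ n) s c f p.1 ∂(γ n).prod (γ n) := by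
        rw [← integral_neg]
        refine integral_congr_ae (.of_forall fun p => ?_)
        simp only [neg_smul, sub_neg_eq_add]
        ring
    _ = -∫ x, H x * noiseMoment s' (-c') (gaussianNoise (γ n) s c f) i x ∂γ n := by
        rw [integral_mul_noiseMoment h'' hH (memLp_gaussianNoise hμ h hf2)]
    _ = c' * (s / c) * ∫ x, H x * gaussianNoise (γ n) s' (-c') (noiseMoment s c f i) x ∂γ n := by
        rw [← integral_neg, ← integral_const_mul]
        refine integral_congr_ae (.of_forall fun x => ?_)
        simp only [noiseMoment_gaussianNoise hc.ne' hf hf1]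
        ring
    _ = _ := by rw [h_adjoint]

end IntegrationByParts

section Interpolation

variable {n : ℕ} {s c : ℝ} {f g : (Fin n → ℝ) → ℝ}

/-- `E (Dᵢ f)(X) (Dᵢ g)(X')`, where `Dᵢ = noiseMoment s c · i` and `(X, X')` is a pair of Gaussian
vectors with correlation `sin θ`. -/
def noiseMomentCorr (s c : ℝ) (f g : (Fin n → ℝ) → ℝ) (i : Fin n) (θ : ℝ) : ℝ :=
  ∫ p, noiseMoment s c f i p.1 * noiseMoment s c g i (Real.sin θ • p.1 + Real.cos θ • p.2)
    ∂(γ n).prod (γ n)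

lemma continuous_noiseMomentCorr (h : s ^ 2 + c ^ 2 = 1) (hc : 0 < c) (hf : Measurable f)
    (hg : Measurable g) (hf1 : ∀ x, f x ∈ Set.Icc 0 1) (hg1 : ∀ x, g x ∈ Set.Icc 0 1) (i : Fin n) :
    Continuous (noiseMomentCorr s c f g i) := by
  have hDf := continuous_noiseMoment h hc hf hf1 i
  have hDg := continuous_noiseMoment h hc hg hg1 i
  refine continuous_of_dominated (bound := fun _ => 1) (fun θ => ?_)
    (fun θ => .of_forall fun p => ?_) (integrable_const _) (.of_forall fun p => by fun_prop)
  · exact (by fun_prop : Continuous _).aestronglyMeasurable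
  · rw [norm_mul]
    exact mul_le_one₀ (abs_noiseMoment_le_one hf1 _ _) (norm_nonneg _)
      (abs_noiseMoment_le_one hg1 _ _)

lemma noiseMomentCorr_nonneg (hc : 0 ≤ c) (hf : Measurable f) (hg : Measurable g)
    (hf1 : ∀ x, f x ∈ Set.Icc 0 1) (hg1 : ∀ x, g x ∈ Set.Icc 0 1) (hfm : Monotone f)
    (hgm : Monotone g) (i : Fin n) (θ : ℝ) : 0 ≤ noiseMomentCorr s c f g i θ :=
  integral_nonneg fun _ => mul_nonneg (noiseMoment_nonneg hc hf hf1 hfm i _)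
    (noiseMoment_nonneg hc hg hg1 hgm i _)

lemma abs_rotation_velocity_mul_noiseMoment_le (hg1 : ∀ x, g x ∈ Set.Icc 0 1) (i : Fin n) (θ : ℝ)
    (x y z : Fin n → ℝ) :
    |(Real.cos θ * x i - Real.sin θ * y i) * noiseMoment s c g i z| ≤ |x i| + |y i| := by
  rw [abs_mul]
  refine (mul_le_of_le_one_right (abs_nonneg _) (abs_noiseMoment_le_one hg1 i z)).trans ?_
  refine (abs_sub _ _).trans (add_le_add ?_ ?_) <;> rw [abs_mul]
  · exact mul_le_of_le_one_left (abs_nonneg _) (Real.abs_cos_le_one θ)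
  · exact mul_le_of_le_one_left (abs_nonneg _) (Real.abs_sin_le_one θ)

lemma integrable_abs_eval_add_abs_eval (i : Fin n) :
    Integrable (fun p : (Fin n → ℝ) × (Fin n → ℝ) => |p.1 i| + |p.2 i|) ((γ n).prod (γ n)) :=
  ((integrable_eval_stdGaussian i).comp_fst _).abs.fun_add
    ((integrable_eval_stdGaussian i).comp_snd _).abs

lemma abs_gaussianNoise_le_one (hf : Measurable f) (hf1 : ∀ x, f x ∈ Set.Icc 0 1)
    (x : Fin n → ℝ) : |gaussianNoise (γ n) s c f x| ≤ 1 :=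
  abs_le_one_of_mem_Icc (integral_mem_Icc (hf.comp (by fun_prop)) fun _ => hf1 _)

lemma hasDerivAt_integral_gaussianNoise_rotation (h : s ^ 2 + c ^ 2 = 1) (hc : 0 < c)
    (hf : Measurable f) (hg : Measurable g) (hf1 : ∀ x, f x ∈ Set.Icc 0 1)
    (hg1 : ∀ x, g x ∈ Set.Icc 0 1) (θ : ℝ) :
    HasDerivAt (fun θ => ∫ p, gaussianNoise (γ n) s c f p.1 *
        gaussianNoise (γ n) s c g (Real.sin θ • p.1 + Real.cos θ • p.2) ∂(γ n).prod (γ n))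
      ((s / c) ^ 2 * ∑ i, Real.cos θ * noiseMomentCorr s c f g i θ) θ := by
  have hμ := integral_id_stdGaussian_eq_zero (n := n)
  have hf2 : MemLp f 2 (γ n) := memLp_two_of_forall_mem_Icc hf hf1
  have hg2 : MemLp g 2 (γ n) := memLp_two_of_forall_mem_Icc hg hg1
  have hNf := (memLp_gaussianNoise hμ h hf2).comp_fst (γ n)
  have hNg (θ : ℝ) := memLp_smul_add_smul hμ (Real.sin_sq_add_cos_sq θ)
    (memLp_gaussianNoise hμ h hg2)
  let T (i : Fin n) (θ : ℝ) (p : (Fin n → ℝ) × (Fin n → ℝ)) : ℝ :=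
    (Real.cos θ * p.1 i - Real.sin θ * p.2 i) *
      noiseMoment s c g i (Real.sin θ • p.1 + Real.cos θ • p.2)
  have hT_le (i : Fin n) (θ : ℝ) (p : (Fin n → ℝ) × (Fin n → ℝ)) :
      |gaussianNoise (γ n) s c f p.1 * T i θ p| ≤ |p.1 i| + |p.2 i| := by
    rw [abs_mul]
    exact (mul_le_of_le_one_left (abs_nonneg _) (abs_gaussianNoise_le_one hf hf1 _)).trans
      (abs_rotation_velocity_mul_noiseMoment_le hg1 i θ _ _ _)
  have hT_meas (i : Fin n) : AEStronglyMeasurable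
      (fun p => gaussianNoise (γ n) s c f p.1 * T i θ p) ((γ n).prod (γ n)) := by
    have := continuous_noiseMoment h hc hg hg1 i
    exact hNf.1.mul (by fun_prop : Continuous (T i θ)).aestronglyMeasurable
  refine (hasDerivAt_integral_of_dominated_loc_of_deriv_le (μ := (γ n).prod (γ n))
    (F' := fun θ p => s / c * ∑ i, gaussianNoise (γ n) s c f p.1 * T i θ p)
    (bound := fun p => |s / c| * ∑ i, (|p.1 i| + |p.2 i|)) Filter.univ_mem
    (.of_forall fun θ => hNf.1.mul (hNg θ).1) (integrable_fun_mul hNf (hNg θ))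
    ((Finset.aestronglyMeasurable_fun_sum _ fun i _ => hT_meas i).const_mul _)
    (.of_forall fun p θ _ => ?_)
    ((integrable_finsetSum _ fun i _ => integrable_abs_eval_add_abs_eval i).const_mul _)
    (.of_forall fun p θ _ => ?_)).2.congr_deriv ?_
  · rw [norm_mul]
    exact mul_le_mul_of_nonneg_left (norm_sum_le_of_le _ fun i _ => hT_le i θ p) (norm_nonneg _)
  · refine ((hasDerivAt_gaussianNoise_rotation h hc hg hg1 p.1 p.2 θ).const_mul _).congr_deriv ?_
    rw [← Finset.mul_sum, mul_left_comm]
  · rw [integral_const_mul, integral_finsetSum _ fun i _ =>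
      (integrable_abs_eval_add_abs_eval i).mono' (hT_meas i) (.of_forall (hT_le i θ)),
      pow_two, mul_assoc]
    refine congrArg (s / c * ·) ?_
    rw [Finset.mul_sum]
    refine Finset.sum_congr rfl fun i _ => ?_
    rw [integral_gaussianNoise_mul_rotation_velocity_mul h hc hf hf1
      (memLp_noiseMoment h hc hg hg1 i) (Real.sin_sq_add_cos_sq θ), noiseMomentCorr]
    ring

lemma gCor_gaussianNoise_eq (h : s ^ 2 + c ^ 2 = 1) (hc : 0 < c)
    (hf : Measurable f) (hg : Measurable g) (hf1 : ∀ x, f x ∈ Set.Icc 0 1)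
    (hg1 : ∀ x, g x ∈ Set.Icc 0 1) :
    gCor n (gaussianNoise (γ n) s c f) (gaussianNoise (γ n) s c g) =
      (s / c) ^ 2 * ∑ i, ∫ θ in (0 : ℝ)..(Real.pi / 2),
        Real.cos θ * noiseMomentCorr s c f g i θ := by
  have h_cont (i : Fin n) : Continuous fun θ => Real.cos θ * noiseMomentCorr s c f g i θ :=
    Real.continuous_cos.mul (continuous_noiseMomentCorr h hc hf hg hf1 hg1 i)
  have h_ftc := intervalIntegral.integral_eq_sub_of_hasDerivAt (a := 0) (b := Real.pi / 2)
    (fun θ _ => hasDerivAt_integral_gaussianNoise_rotation h hc hf hg hf1 hg1 θ)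
    (Continuous.intervalIntegrable (by fun_prop) _ _)
  simp only [Real.sin_pi_div_two, Real.cos_pi_div_two, Real.sin_zero, Real.cos_zero, one_smul,
    zero_smul, add_zero, zero_add] at h_ftc
  rw [integral_fun_fst fun x => gaussianNoise (γ n) s c f x * gaussianNoise (γ n) s c g x,
    integral_prod_mul, probReal_univ, one_smul, intervalIntegral.integral_const_mul,
    intervalIntegral.integral_finsetSum fun i _ => (h_cont i).intervalIntegrable _ _] at h_ftc
  exact h_ftc.symm

end Interpolation

section TwoPointUnitInterval

lemma add_div_add_mem_Icc {t m ε : ℝ} (ht : t ∈ Set.Icc 0 1) (hm : m ∈ Set.Icc 0 1) (hε : 0 < ε) :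
    (t + ε) / (m + ε) ∈ Set.Icc (ε / (1 + ε)) ((1 + ε) / (m + ε)) := by
  have hm0 : 0 < m + ε := by linarith [hm.1]
  exact ⟨div_le_div₀ (by linarith [ht.1]) (by linarith [ht.1]) hm0 (by linarith [hm.2]),
    div_le_div_of_nonneg_right (by linarith [ht.2]) hm0.le⟩

lemma integral_add_const_div {α : Type*} [MeasurableSpace α] {μ : Measure α}
    [IsProbabilityMeasure μ] {w : α → ℝ} (hw : Integrable w μ) (ε m : ℝ) :
    ∫ x, (w x + ε) / m ∂μ = (∫ x, w x ∂μ + ε) / m := by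
  rw [integral_div, integral_add hw (integrable_const _), integral_const, probReal_univ, one_smul]

lemma integral_add_const_mul_add_const {α : Type*} [MeasurableSpace α] {μ : Measure α}
    [IsProbabilityMeasure μ] {u v : α → ℝ} (hu : Integrable u μ) (hv : Integrable v μ)
    (huv : Integrable (fun x => u x * v x) μ) (ε : ℝ) :
    ∫ x, (u x + ε) * (v x + ε) ∂μ =
      ∫ x, u x * v x ∂μ + ε * (∫ x, u x ∂μ + ∫ x, v x ∂μ) + ε ^ 2 := by
  have h_expand (x : α) : (u x + ε) * (v x + ε) = u x * v x + ε * (u x + v x) + ε ^ 2 := by ring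
  have h_sum : Integrable (fun x => ε * (u x + v x)) μ := (hu.fun_add hv).const_mul ε
  simp only [h_expand]
  rw [integral_add (huv.fun_add h_sum) (integrable_const _), integral_add huv h_sum,
    integral_const_mul, integral_add hu hv, integral_const, probReal_univ, one_smul]

variable {n : ℕ} {u v : (Fin n → ℝ) → ℝ} {ρ σ : ℝ}

lemma integral_eval_mul_add_const_div {w : (Fin n → ℝ) → ℝ} (i : Fin n)
    (hw : Integrable (fun x => x i * w x) (γ n)) (ε m : ℝ) :
    ∫ x, x i * ((w x + ε) / m) ∂γ n = (∫ x, x i * w x ∂γ n) / m := by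
  simp only [mul_div_assoc', mul_add]
  rw [integral_div, integral_add hw ((integrable_eval_stdGaussian i).mul_const ε),
    integral_mul_const, integral_eval_stdGaussian, zero_mul, add_zero]

lemma mul_exp_le_integral_mul_smul_add_smul_add (hu : Continuous u) (hv : Continuous v)
    (hu1 : ∀ x, u x ∈ Set.Icc 0 1) (hv1 : ∀ x, v x ∈ Set.Icc 0 1) {a b ε : ℝ}
    (ha : ∫ x, u x ∂γ n = a) (hb : ∫ x, v x ∂γ n = b) (hρ : 0 ≤ ρ) (hσ : 0 < σ)
    (h : ρ ^ 2 + σ ^ 2 = 1) (hε : 0 < ε) :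
    (a + ε) * (b + ε) * Real.exp ((ρ * ((∑ i, (∫ x, x i * u x ∂γ n) * ∫ x, x i * v x ∂γ n) /
        ((a + ε) * (b + ε))) - 3 * ρ ^ 2 * (Real.log ((1 + ε) / (a + ε)) +
          Real.log ((1 + ε) / (b + ε)))) / (1 - ρ ^ 2)) ≤
      ∫ p, u p.1 * v (ρ • p.1 + σ • p.2) ∂(γ n).prod (γ n) + ε * (a + b) + ε ^ 2 := by
  have hμ := integral_id_stdGaussian_eq_zero (n := n)
  have ha1 : a ∈ Set.Icc 0 1 := ha ▸ integral_mem_Icc hu.measurable hu1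
  have hb1 : b ∈ Set.Icc 0 1 := hb ▸ integral_mem_Icc hv.measurable hv1
  have ha0 : 0 < a + ε := by linarith [ha1.1]
  have hb0 : 0 < b + ε := by linarith [hb1.1]
  have hu2 : MemLp u 2 (γ n) := memLp_two_of_forall_mem_Icc hu.measurable hu1
  have hv2 : MemLp v 2 (γ n) := memLp_two_of_forall_mem_Icc hv.measurable hv1
  have hui := hu2.integrable one_le_two
  have hvi := hv2.integrable one_le_two
  have hu2' := hu2.comp_fst (γ n)
  have hv2' := memLp_smul_add_smul hμ h hv2
  have h_exp := exp_le_integral_mul_smul_add_smul (u := fun x => (u x + ε) / (a + ε))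
    (v := fun x => (v x + ε) / (b + ε)) (by fun_prop) (by fun_prop)
    (div_pos hε (by linarith)) (fun x => add_div_add_mem_Icc (hu1 x) ha1 hε)
    (fun x => add_div_add_mem_Icc (hv1 x) hb1 hε)
    (by rw [integral_add_const_div hui, ha, div_self ha0.ne'])
    (by rw [integral_add_const_div hvi, hb, div_self hb0.ne']) hρ hσ h
  simp only [integral_eval_mul_add_const_div _ (integrable_eval_mul hu.measurable hu1 _),
    integral_eval_mul_add_const_div _ (integrable_eval_mul hv.measurable hv1 _),
    div_mul_div_comm, ← Finset.sum_div] at h_exp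
  rw [integral_div, integral_add_const_mul_add_const (hu2'.integrable one_le_two)
    (hv2'.integrable one_le_two) (integrable_fun_mul hu2' hv2'), integral_fun_fst, probReal_univ,
    one_smul, integral_smul_add_smul hμ h hv2.1, ha, hb, le_div_iff₀' (mul_pos ha0 hb0)] at h_exp
  exact h_exp

lemma mul_exp_le_integral_mul_smul_add_smul (hu : Continuous u) (hv : Continuous v)
    (hu1 : ∀ x, u x ∈ Set.Icc 0 1) (hv1 : ∀ x, v x ∈ Set.Icc 0 1) {a b : ℝ}
    (ha : ∫ x, u x ∂γ n = a) (hb : ∫ x, v x ∂γ n = b) (ha0 : 0 < a) (hb0 : 0 < b)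
    (hρ : 0 ≤ ρ) (hσ : 0 < σ) (h : ρ ^ 2 + σ ^ 2 = 1) :
    a * b * Real.exp ((ρ * ((∑ i, (∫ x, x i * u x ∂γ n) * ∫ x, x i * v x ∂γ n) / (a * b)) +
        3 * ρ ^ 2 * Real.log (a * b)) / (1 - ρ ^ 2)) ≤
      ∫ p, u p.1 * v (ρ • p.1 + σ • p.2) ∂(γ n).prod (γ n) := by
  set S := ∑ i, (∫ x, x i * u x ∂γ n) * ∫ x, x i * v x ∂γ n
  set I := ∫ p, u p.1 * v (ρ • p.1 + σ • p.2) ∂(γ n).prod (γ n)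
  have h_left : ContinuousAt (fun ε => (a + ε) * (b + ε) * Real.exp ((ρ * (S /
      ((a + ε) * (b + ε))) - 3 * ρ ^ 2 * (Real.log ((1 + ε) / (a + ε)) +
        Real.log ((1 + ε) / (b + ε)))) / (1 - ρ ^ 2))) 0 := by
    fun_prop (disch := simp [ha0.ne', hb0.ne'])
  have h_right : ContinuousAt (fun ε => I + ε * (a + b) + ε ^ 2) 0 := by fun_prop
  have h_lim := le_of_tendsto_of_tendsto
    (h_left.tendsto.mono_left (nhdsWithin_le_nhds (s := Set.Ioi 0)))
    (h_right.tendsto.mono_left nhdsWithin_le_nhds)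
    (Filter.eventually_of_mem self_mem_nhdsWithin fun ε hε =>
      mul_exp_le_integral_mul_smul_add_smul_add hu hv hu1 hv1 ha hb hρ hσ h hε)
  simpa only [add_zero, one_div, Real.log_inv, zero_mul, zero_pow two_ne_zero, ← neg_add,
    ← Real.log_mul ha0.ne' hb0.ne', mul_neg, sub_neg_eq_add] using h_lim

end TwoPointUnitInterval

section CoordinateBound

lemma neg_one_le_exponent {a b s t : ℝ} (ha : a ∈ Set.Ioc 0 1) (hs : s ∈ Set.Icc 0 t)
    (ht : t ≤ 1 / 4) (hlog : t ^ 2 * (1 - Real.log a) ≤ 1 / 16) (hb : t * |b| ≤ a / 4) :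
    -1 ≤ (s * (1 / 2 * b / a) + 3 * s ^ 2 * Real.log (1 / 2 * a)) / (1 - s ^ 2) := by
  obtain ⟨ha0, ha1⟩ := ha
  obtain ⟨hs0, hst⟩ := hs
  have hsq : s ^ 2 ≤ t ^ 2 := pow_le_pow_left₀ hs0 hst 2
  have htq : t ^ 2 ≤ 1 / 16 := by nlinarith
  have hlog_half : -(1 - Real.log a) ≤ Real.log (1 / 2 * a) := by
    rw [Real.log_mul (by norm_num) ha0.ne', one_div, Real.log_inv]
    linarith [Real.log_two_lt_d9]
  have hquad : -(1 / 16) ≤ s ^ 2 * Real.log (1 / 2 * a) := by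
    linarith [mul_le_mul_of_nonneg_left hlog_half (sq_nonneg s), mul_le_mul_of_nonneg_right hsq
      (by linarith [Real.log_nonpos ha0.le ha1] : 0 ≤ 1 - Real.log a)]
  have hlin : -(1 / 8) ≤ s * (1 / 2 * b / a) := by
    rw [show s * (1 / 2 * b / a) = s * b / (2 * a) by field_simp, le_div_iff₀ (by positivity)]
    linarith [mul_le_mul_of_nonneg_right hst (abs_nonneg b),
      mul_le_mul_of_nonneg_left (neg_abs_le b) hs0]
  rw [le_div_iff₀ (by linarith)]
  linarith

/- The witness is `min (1 / √(log (e / a))) (a / |b|) / 4`. -/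
lemma exists_angle_of_mem_Ioc {a : ℝ} (ha : a ∈ Set.Ioc 0 1) (b : ℝ) :
    ∃ t, 0 ≤ t ∧ t ≤ 1 / 4 ∧ t ^ 2 * (1 - Real.log a) ≤ 1 / 16 ∧ t * |b| ≤ a / 4 ∧
      (if b = 0 then a / √(Real.log (Real.exp 1 / a))
        else min (a / √(Real.log (Real.exp 1 / a))) (a ^ 2 / |b|)) = 4 * (t * a) := by
  obtain ⟨ha0, ha1⟩ := ha
  rw [Real.log_div (Real.exp_ne_zero _) ha0.ne', Real.log_exp]
  set L := 1 - Real.log a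
  have hL : 1 ≤ L := by linarith [Real.log_nonpos ha0.le ha1]
  have hsqrt : 1 ≤ √L := Real.one_le_sqrt.2 hL
  have hangle {t : ℝ} (ht0 : 0 ≤ t) (ht : t ≤ 1 / √L / 4) :
      t ≤ 1 / 4 ∧ t ^ 2 * L ≤ 1 / 16 := by
    have hle : t * √L ≤ 1 / 4 := by rwa [div_right_comm, le_div_iff₀ (by positivity)] at ht
    refine ⟨by nlinarith, ?_⟩
    calc t ^ 2 * L = (t * √L) ^ 2 := by rw [mul_pow, Real.sq_sqrt (by linarith)]
      _ ≤ (1 / 4) ^ 2 := pow_le_pow_left₀ (by positivity) hle 2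
      _ = 1 / 16 := by norm_num
  rcases eq_or_ne b 0 with rfl | hb
  · have ht0 : 0 ≤ 1 / √L / 4 := by positivity
    refine ⟨_, ht0, (hangle ht0 le_rfl).1, (hangle ht0 le_rfl).2, ?_, ?_⟩
    · rw [abs_zero, mul_zero]
      positivity
    · rw [if_pos rfl]
      field_simp
  · have ht0 : 0 ≤ min (1 / √L) (a / |b|) / 4 := by positivity
    have ht := hangle ht0 (div_le_div_of_nonneg_right (min_le_left _ _) (by norm_num))
    refine ⟨_, ht0, ht.1, ht.2, ?_, ?_⟩
    · calc min (1 / √L) (a / |b|) / 4 * |b| ≤ a / |b| / 4 * |b| := by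
            gcongr
            exact min_le_right _ _
        _ = a / 4 := by field_simp
    · rw [if_neg hb, ← mul_assoc, mul_div_cancel₀ _ four_ne_zero, min_mul_of_nonneg _ _ ha0.le]
      congr 1 <;> field_simp

variable {n : ℕ} {s c a t θ : ℝ} {f g : (Fin n → ℝ) → ℝ}

lemma gM1_mem_Icc (hf : Measurable f) (hf1 : ∀ x, f x ∈ Set.Icc 0 1) (hfm : Monotone f)
    (i : Fin n) : gM1 n f i ∈ Set.Icc 0 1 :=
  ⟨integral_eval_mul_nonneg hfm i (integrable_eval_mul hf hf1 i),
    (le_abs_self _).trans (abs_integral_eval_mul_le_one (fun x => abs_le_one_of_mem_Icc (hf1 x)) i)⟩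

lemma mul_exp_le_noiseMomentCorr (h : s ^ 2 + c ^ 2 = 1) (hc : 0 < c) (hf : Measurable f)
    (hg : Measurable g) (hf1 : ∀ x, f x ∈ Set.Icc 0 1) (hg1 : ∀ x, g x ∈ Set.Icc 0 1)
    (hfm : Monotone f) (hgm : Monotone g) {i : Fin n} (hfi : 0 < gM1 n f i) (hgi : 0 < gM1 n g i)
    (hsin : 0 ≤ Real.sin θ) (hcos : 0 < Real.cos θ) :
    c ^ 2 * (gM1 n f i * gM1 n g i) * Real.exp
        ((Real.sin θ * (s ^ 2 * gM2col n f g i / (gM1 n f i * gM1 n g i)) +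
          3 * Real.sin θ ^ 2 * Real.log (c ^ 2 * (gM1 n f i * gM1 n g i))) /
            (1 - Real.sin θ ^ 2)) ≤
      noiseMomentCorr s c f g i θ := by
  have hmem {k : (Fin n → ℝ) → ℝ} (hk : Measurable k) (hk1 : ∀ x, k x ∈ Set.Icc 0 1)
      (hkm : Monotone k) (x : Fin n → ℝ) : noiseMoment s c k i x ∈ Set.Icc 0 1 :=
    ⟨noiseMoment_nonneg hc.le hk hk1 hkm i x,
      (le_abs_self _).trans (abs_noiseMoment_le_one hk1 i x)⟩
  have hsum : (∑ j, (∫ x, x j * noiseMoment s c f i x ∂γ n) *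
      ∫ x, x j * noiseMoment s c g i x ∂γ n) = s ^ 2 * c ^ 2 * gM2col n f g i := by
    rw [gM2col, Finset.mul_sum]
    refine Finset.sum_congr rfl fun j _ => ?_
    rw [integral_eval_mul_noiseMoment h hf hf1, integral_eval_mul_noiseMoment h hg hg1]
    ring
  have h_lower := mul_exp_le_integral_mul_smul_add_smul (continuous_noiseMoment h hc hf hf1 i)
    (continuous_noiseMoment h hc hg hg1 i) (hmem hf hf1 hfm) (hmem hg hg1 hgm)
    (integral_noiseMoment h (memLp_two_of_forall_mem_Icc hf hf1) i)
    (integral_noiseMoment h (memLp_two_of_forall_mem_Icc hg hg1) i)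
    (mul_pos hc hfi) (mul_pos hc hgi) hsin hcos (Real.sin_sq_add_cos_sq θ)
  have hprod : c * gM1 n f i * (c * gM1 n g i) = c ^ 2 * (gM1 n f i * gM1 n g i) := by ring
  have hdiv : s ^ 2 * c ^ 2 * gM2col n f g i / (c ^ 2 * (gM1 n f i * gM1 n g i)) =
      s ^ 2 * gM2col n f g i / (gM1 n f i * gM1 n g i) := by field_simp
  rwa [hsum, hprod, hdiv] at h_lower

/- For small `θ` the terms of order `θ` and `θ ^ 2` in the exponent of the two-point bound stay
bounded, so the correlation is comparable with its value `a / 2` at `θ = 0`. -/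
lemma half_mul_exp_le_noiseMomentCorr (hf : Measurable f) (hg : Measurable g)
    (hf1 : ∀ x, f x ∈ Set.Icc 0 1) (hg1 : ∀ x, g x ∈ Set.Icc 0 1) (hfm : Monotone f)
    (hgm : Monotone g) {i : Fin n} (ha : gM1 n f i * gM1 n g i = a) (ha0 : 0 < a) (hθ : 0 ≤ θ)
    (hθ1 : θ ≤ 1 / 4) (hlog : θ ^ 2 * (1 - Real.log a) ≤ 1 / 16)
    (hcol : θ * |gM2col n f g i| ≤ a / 4) :
    1 / 2 * a * Real.exp (-1) ≤ noiseMomentCorr (√2)⁻¹ (√2)⁻¹ f g i θ := by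
  have hfi := gM1_mem_Icc hf hf1 hfm i
  have hgi := gM1_mem_Icc hg hg1 hgm i
  have ha1 : a ≤ 1 := ha ▸ (unitInterval.mul_mem hfi hgi).2
  have hne : gM1 n f i * gM1 n g i ≠ 0 := ha ▸ ha0.ne'
  have hsin : 0 ≤ Real.sin θ :=
    Real.sin_nonneg_of_nonneg_of_le_pi hθ (by linarith [Real.pi_gt_three])
  have hcos : 0 < Real.cos θ := Real.cos_pos_of_mem_Ioo
    ⟨by linarith [Real.pi_gt_three], by linarith [Real.pi_gt_three]⟩
  have h_lower := mul_exp_le_noiseMomentCorr inv_sqrt_two_sq_add (by positivity) hf hg hf1 hg1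
    hfm hgm (hfi.1.lt_of_ne' (left_ne_zero_of_mul hne)) (hgi.1.lt_of_ne' (right_ne_zero_of_mul hne))
    hsin hcos
  rw [inv_sqrt_two_sq, ha] at h_lower
  exact (mul_le_mul_of_nonneg_left (Real.exp_le_exp.2 (neg_one_le_exponent ⟨ha0, ha1⟩
    ⟨hsin, Real.sin_le hθ⟩ hθ1 hlog hcol)) (by positivity)).trans h_lower

lemma cos_mul_noiseMomentCorr_nonneg (hc : 0 ≤ c) (hf : Measurable f) (hg : Measurable g)
    (hf1 : ∀ x, f x ∈ Set.Icc 0 1) (hg1 : ∀ x, g x ∈ Set.Icc 0 1) (hfm : Monotone f)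
    (hgm : Monotone g) (i : Fin n) (hθ : θ ∈ Set.Icc 0 (Real.pi / 2)) :
    0 ≤ Real.cos θ * noiseMomentCorr s c f g i θ :=
  mul_nonneg (Real.cos_nonneg_of_neg_pi_div_two_le_of_le (by linarith [Real.pi_pos, hθ.1]) hθ.2)
    (noiseMomentCorr_nonneg hc hf hg hf1 hg1 hfm hgm i θ)

lemma le_integral_cos_mul_noiseMomentCorr (hf : Measurable f) (hg : Measurable g)
    (hf1 : ∀ x, f x ∈ Set.Icc 0 1) (hg1 : ∀ x, g x ∈ Set.Icc 0 1) (hfm : Monotone f)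
    (hgm : Monotone g) {i : Fin n} (ha : gM1 n f i * gM1 n g i = a) (ha0 : 0 < a) (ht : 0 ≤ t)
    (ht1 : t ≤ 1 / 4) (hlog : t ^ 2 * (1 - Real.log a) ≤ 1 / 16)
    (hcol : t * |gM2col n f g i| ≤ a / 4) :
    Real.exp (-1) / 4 * (t * a) ≤ ∫ θ in (0 : ℝ)..(Real.pi / 2),
      Real.cos θ * noiseMomentCorr (√2)⁻¹ (√2)⁻¹ f g i θ := by
  have hr : 0 < (√2)⁻¹ := by positivity
  have h_int (x y : ℝ) : IntervalIntegrable
      (fun θ => Real.cos θ * noiseMomentCorr (√2)⁻¹ (√2)⁻¹ f g i θ) volume x y :=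
    (Real.continuous_cos.mul (continuous_noiseMomentCorr inv_sqrt_two_sq_add hr hf hg hf1 hg1
      i)).intervalIntegrable x y
  have htpi : t ≤ Real.pi / 2 := by linarith [Real.pi_gt_three]
  have ha1 : a ≤ 1 :=
    ha ▸ (unitInterval.mul_mem (gM1_mem_Icc hf hf1 hfm i) (gM1_mem_Icc hg hg1 hgm i)).2
  have h_small (θ : ℝ) (hθ : θ ∈ Set.Icc 0 t) :
      a / 4 * Real.exp (-1) ≤ Real.cos θ * noiseMomentCorr (√2)⁻¹ (√2)⁻¹ f g i θ := by
    have h_corr := half_mul_exp_le_noiseMomentCorr hf hg hf1 hg1 hfm hgm ha ha0 hθ.1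
      (hθ.2.trans ht1) ((mul_le_mul_of_nonneg_right (pow_le_pow_left₀ hθ.1 hθ.2 2)
        (by linarith [Real.log_nonpos ha0.le ha1])).trans hlog)
      ((mul_le_mul_of_nonneg_right hθ.2 (abs_nonneg _)).trans hcol)
    have hcos : 1 / 2 ≤ Real.cos θ := by
      nlinarith [Real.one_sub_sq_div_two_le_cos (x := θ), hθ.1, hθ.2]
    calc a / 4 * Real.exp (-1) = 1 / 2 * (1 / 2 * a * Real.exp (-1)) := by ring
      _ ≤ _ := mul_le_mul hcos h_corr (by positivity) (by linarith)
  calc Real.exp (-1) / 4 * (t * a) = ∫ _ in (0 : ℝ)..t, a / 4 * Real.exp (-1) := by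
        rw [intervalIntegral.integral_const, smul_eq_mul]
        ring
    _ ≤ ∫ θ in (0 : ℝ)..t, Real.cos θ * noiseMomentCorr (√2)⁻¹ (√2)⁻¹ f g i θ :=
        intervalIntegral.integral_mono_on ht intervalIntegrable_const (h_int 0 t) h_small
    _ ≤ _ := intervalIntegral.integral_mono_interval le_rfl ht htpi
        ((ae_restrict_iff' measurableSet_Ioc).2 (.of_forall fun θ hθ =>
          cos_mul_noiseMomentCorr_nonneg hr.le hf hg hf1 hg1 hfm hgm i ⟨hθ.1.le, hθ.2⟩))
        (h_int 0 (Real.pi / 2))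

lemma mul_min_le_integral_cos_mul_noiseMomentCorr (hf : Measurable f) (hg : Measurable g)
    (hf1 : ∀ x, f x ∈ Set.Icc 0 1) (hg1 : ∀ x, g x ∈ Set.Icc 0 1) (hfm : Monotone f)
    (hgm : Monotone g) (i : Fin n) :
    Real.exp (-1) / 16 *
      (if gM2col n f g i = 0 then
          gM1 n f i * gM1 n g i / √(Real.log (Real.exp 1 / (gM1 n f i * gM1 n g i)))
        else
          min (gM1 n f i * gM1 n g i / √(Real.log (Real.exp 1 / (gM1 n f i * gM1 n g i))))
            ((gM1 n f i * gM1 n g i) ^ 2 / |gM2col n f g i|)) ≤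
      ∫ θ in (0 : ℝ)..(Real.pi / 2), Real.cos θ * noiseMomentCorr (√2)⁻¹ (√2)⁻¹ f g i θ := by
  obtain ⟨ha0, ha1⟩ := unitInterval.mul_mem (gM1_mem_Icc hf hf1 hfm i) (gM1_mem_Icc hg hg1 hgm i)
  rcases ha0.eq_or_lt with ha0 | ha0
  · simp only [← ha0, zero_div, ne_eq, OfNat.ofNat_ne_zero, not_false_eq_true, zero_pow, min_self,
      ite_self, mul_zero]
    exact intervalIntegral.integral_nonneg (by positivity) fun θ hθ =>
      cos_mul_noiseMomentCorr_nonneg (by positivity) hf hg hf1 hg1 hfm hgm i hθ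
  · obtain ⟨t, ht0, ht1, hlog, hcol, h_eq⟩ := exists_angle_of_mem_Ioc ⟨ha0, ha1⟩ (gM2col n f g i)
    calc _ = Real.exp (-1) / 4 * (t * (gM1 n f i * gM1 n g i)) := by
          rw [h_eq]
          ring
      _ ≤ _ := le_integral_cos_mul_noiseMomentCorr hf hg hf1 hg1 hfm hgm rfl ha0 ht0 ht1 hlog hcol

end CoordinateBound

/-- **Theorem 1.7.** For increasing measurable `f, g : ℝⁿ → [0,1]`,
`Cor(f,g) ≥ c ∑ᵢ min( M₁(f)ᵢM₁(g)ᵢ/√(log(e/(M₁(f)ᵢM₁(g)ᵢ))),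
(M₁(f)ᵢM₁(g)ᵢ)²/|⟨M₂(f)eᵢ, M₂(g)eᵢ⟩| )`, the second term of each minimum being `+∞`
when `⟨M₂(f)eᵢ, M₂(g)eᵢ⟩ = 0`. -/
theorem gaussian_correlation_second_order_coordinatewise :
    ∃ c > (0 : ℝ), ∀ (n : ℕ) (f g : (Fin n → ℝ) → ℝ),
      Measurable f → Measurable g →
      (∀ x, f x ∈ Set.Icc (0 : ℝ) 1) → (∀ x, g x ∈ Set.Icc (0 : ℝ) 1) →
      CoordMonotone n f → CoordMonotone n g →
      gCor n f g ≥
        c * ∑ i,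
          (if gM2col n f g i = 0 then
              gM1 n f i * gM1 n g i /
                Real.sqrt (Real.log (Real.exp 1 / (gM1 n f i * gM1 n g i)))
            else
              min (gM1 n f i * gM1 n g i /
                  Real.sqrt (Real.log (Real.exp 1 / (gM1 n f i * gM1 n g i))))
                ((gM1 n f i * gM1 n g i) ^ 2 / |gM2col n f g i|)) := by
  refine ⟨Real.exp (-1) / 16, by positivity, fun n f g hf hg hf1 hg1 hfm hgm => ?_⟩
  have hr : 0 < (√2)⁻¹ := by positivity
  calc _ ≤ ∑ i, ∫ θ in (0 : ℝ)..(Real.pi / 2),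
          Real.cos θ * noiseMomentCorr (√2)⁻¹ (√2)⁻¹ f g i θ := by
        rw [Finset.mul_sum]
        exact Finset.sum_le_sum fun i _ => mul_min_le_integral_cos_mul_noiseMomentCorr hf hg hf1
          hg1 hfm.monotone hgm.monotone i
    _ = gCor n (gaussianNoise (γ n) (√2)⁻¹ (√2)⁻¹ f) (gaussianNoise (γ n) (√2)⁻¹ (√2)⁻¹ g) := by
        rw [gCor_gaussianNoise_eq inv_sqrt_two_sq_add hr hf hg hf1 hg1, div_self hr.ne', one_pow,
          one_mul]
    _ ≤ gCor n f g := gCor_gaussianNoise_le inv_sqrt_two_sq_add hr.le hf hg hf1 hg1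
        hfm.monotone hgm.monotone

end
end

section
/- Let p : [0,∞) → [0,1] be twice differentiable with p(0) ∈ (0,1), and suppose there exists K > 0 such that p''(t) ≥ −p'(t) − K p(t) log(e/p(t)) for all t ≥ 0. Then for all t ≤ min( 1/(4√(K log(2e/p(0)))), p(0)/(4|p'(0)|) ) one has p(t) ≥ p(0)/2. -/
open MeasureTheory Real Set

noncomputable section

/-!
Let `M = p s` be the maximum of `p` on `[0, T]` and `b = p 0 / 2`. Since `x log (e / x)` is concave
with slope `-log b ≥ 0` at `b`, its tangent line there gives `p log (e / p) ≤ M log (e / b)` on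
`[0, T]`, so that `p'' + p' ≥ -A` with the constant `A = K M log (e / b)`. Integrating twice from
`s`, where `p' s ≥ -|p' 0|`, gives `p T ≥ M - |p' 0| T - A T² / 2 ≥ M - p 0 / 4 - M / 32`.

Starting from the maximum rather than from `0` makes the error term `A T² / 2` at most `M / 32`, so
it is harmless however large `p` becomes.
-/

section LogBounds

variable {x b M : ℝ}

lemma log_exp_one_div (hx : x ≠ 0) : log (exp 1 / x) = 1 - log x := by
  rw [log_div (exp_ne_zero 1) hx, log_exp]

lemma one_le_log_exp_one_div (hx : 0 < x) (hx1 : x ≤ 1) : 1 ≤ log (exp 1 / x) := by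
  rw [log_exp_one_div hx.ne']
  linarith [log_nonpos hx.le hx1]

lemma mul_log_exp_one_div_le_tangent (hx : 0 ≤ x) (hb : 0 < b) :
    x * log (exp 1 / x) ≤ b - x * log b := by
  rcases hx.eq_or_lt with rfl | hx
  · simpa using hb.le
  have hlog : log b - log x ≤ b / x - 1 := by
    rw [← log_div hb.ne' hx.ne']
    exact log_le_sub_one_of_pos (div_pos hb hx)
  calc x * log (exp 1 / x) = x * (1 + (log b - log x)) - x * log b := by
        rw [log_exp_one_div hx.ne']; ring
    _ ≤ x * (1 + (b / x - 1)) - x * log b := by gcongr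
    _ = b - x * log b := by field_simp; ring

lemma mul_log_exp_one_div_le (hx : 0 ≤ x) (hxM : x ≤ M) (hb : 0 < b) (hb1 : b ≤ 1)
    (hbM : b ≤ M) : x * log (exp 1 / x) ≤ M * log (exp 1 / b) := by
  have hslope : 0 ≤ -log b := neg_nonneg.2 (log_nonpos hb.le hb1)
  calc x * log (exp 1 / x) ≤ b + x * -log b := by
        linarith [mul_log_exp_one_div_le_tangent hx hb]
    _ ≤ M + M * -log b := by gcongr
    _ = M * log (exp 1 / b) := by rw [log_exp_one_div hb.ne']; ring

end LogBounds

section TimeBounds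

variable {c d t x : ℝ}

lemma mul_sq_le_of_le_one_div_mul_sqrt (hx : 0 < x) (ht : 0 ≤ t)
    (h : t ≤ 1 / (c * √x)) : x * t ^ 2 ≤ 1 / c ^ 2 :=
  calc x * t ^ 2 ≤ x * (1 / (c * √x)) ^ 2 := by gcongr
    _ = 1 / c ^ 2 := by
      rw [div_pow, mul_pow, sq_sqrt hx.le]
      field_simp

lemma abs_mul_le_div_of_le_div (hc : 0 < c) (hx : 0 ≤ x) (h : d ≠ 0 → t ≤ x / (c * |d|)) :
    |d| * t ≤ x / c := by
  rcases eq_or_ne d 0 with rfl | hd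
  · simpa using div_nonneg hx hc.le
  calc |d| * t ≤ |d| * (x / (c * |d|)) := by gcongr; exact h hd
    _ = x / c := by field_simp

end TimeBounds

section DifferentialInequality

variable {f f' f'' g g' : ℝ → ℝ} {a b s A c : ℝ}

lemma monotoneOn_exp_mul_add_const (hg : ContinuousOn g (Icc a b))
    (hg' : ∀ u ∈ Ioo a b, HasDerivAt g (g' u) u) (h : ∀ u ∈ Ioo a b, -g u - A ≤ g' u) :
    MonotoneOn (fun u => exp u * (g u + A)) (Icc a b) := by
  refine monotoneOn_of_hasDerivWithinAt_nonneg (convex_Icc a b)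
    (f' := fun u => exp u * (g u + A) + exp u * g' u) (by fun_prop) ?_ ?_ <;>
    intro u hu <;> rw [interior_Icc] at hu
  · exact ((hasDerivAt_exp u).mul ((hg' u hu).add_const A)).hasDerivWithinAt
  · rw [← mul_add]
    exact mul_nonneg (exp_pos u).le (by linarith [h u hu])

lemma neg_sub_mul_le_of_neg_sub_le_deriv (hA : 0 ≤ A) (hc : 0 ≤ c)
    (hg : ContinuousOn g (Icc a b)) (hg' : ∀ u ∈ Ioo a b, HasDerivAt g (g' u) u)
    (h : ∀ u ∈ Ioo a b, -g u - A ≤ g' u) (ha : -c ≤ g a) {u : ℝ} (hu : u ∈ Icc a b) :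
    -c - A * (u - a) ≤ g u := by
  have hmono : exp a * (g a + A) ≤ exp u * (g u + A) :=
    monotoneOn_exp_mul_add_const hg hg' h (left_mem_Icc.2 (hu.1.trans hu.2)) hu hu.1
  have hdecay : exp (a - u) * (g a + A) ≤ g u + A := by
    rwa [exp_sub, div_mul_eq_mul_div, div_le_iff₀' (exp_pos u)]
  have hexp_le : exp (a - u) ≤ 1 := exp_le_one_iff.2 (sub_nonpos.2 hu.1)
  have hexp_ge : 1 - exp (a - u) ≤ u - a := by linarith [add_one_le_exp (a - u)]
  calc -c - A * (u - a) ≤ -(c * 1) - A * (1 - exp (a - u)) := by rw [mul_one]; gcongr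
    _ ≤ -(c * exp (a - u)) - A * (1 - exp (a - u)) := by gcongr
    _ = exp (a - u) * (-c + A) - A := by ring
    _ ≤ exp (a - u) * (g a + A) - A := by gcongr
    _ ≤ g u := by linarith

lemma sub_sub_le_of_le_deriv (hab : a ≤ b) (hf : ContinuousOn f (Icc a b))
    (hf' : ∀ u ∈ Ioo a b, HasDerivAt f (f' u) u)
    (h : ∀ u ∈ Ioo a b, -c - A * (u - a) ≤ f' u) :
    f a - c * (b - a) - A * (b - a) ^ 2 / 2 ≤ f b := by
  have hmono : MonotoneOn (fun u => f u + (c * (u - a) + A / 2 * (u - a) ^ 2)) (Icc a b) := by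
    refine monotoneOn_of_hasDerivWithinAt_nonneg (convex_Icc a b)
      (f' := fun u => f' u + (c + A * (u - a))) (by fun_prop) ?_ ?_ <;>
      intro u hu <;> rw [interior_Icc] at hu
    · have hsub : HasDerivAt (fun u => u - a) 1 u := (hasDerivAt_id u).sub_const a
      have hquad : HasDerivAt (fun u => c * (u - a) + A / 2 * (u - a) ^ 2) (c + A * (u - a)) u :=
        ((hsub.const_mul c).add ((hsub.pow 2).const_mul (A / 2))).congr_deriv (by norm_num; ring)
      exact ((hf' u hu).add hquad).hasDerivWithinAt
    · linarith [h u hu]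
  have hle := hmono (left_mem_Icc.2 hab) (right_mem_Icc.2 hab) hab
  simp only [sub_self] at hle
  linarith

lemma neg_abs_le_deriv_of_isMaxOn (hs : s ∈ Ico a b) (hmax : IsMaxOn f (Icc a b) s)
    (hf' : ∀ u ∈ Ioo a b, HasDerivAt f (f' u) u) : -|f' a| ≤ f' s := by
  rcases hs.1.eq_or_lt with rfl | has
  · exact neg_abs_le _
  · rw [(hmax.isLocalMax (Icc_mem_nhds has hs.2)).hasDerivAt_eq_zero (hf' s ⟨has, hs.2⟩)]
    exact neg_nonpos.2 (abs_nonneg _)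

lemma sub_sub_le_of_isMaxOn (hs : s ∈ Icc a b) (hmax : IsMaxOn f (Icc a b) s) (hA : 0 ≤ A)
    (hf : ContinuousOn f (Icc a b)) (hf₁ : ContinuousOn f' (Icc a b))
    (hf' : ∀ u ∈ Ioo a b, HasDerivAt f (f' u) u) (hf'' : ∀ u ∈ Ioo a b, HasDerivAt f' (f'' u) u)
    (h : ∀ u ∈ Ioo a b, -f' u - A ≤ f'' u) :
    f s - |f' a| * (b - a) - A * (b - a) ^ 2 / 2 ≤ f b := by
  have hIcc : Icc s b ⊆ Icc a b := Icc_subset_Icc_left hs.1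
  have hIoo : Ioo s b ⊆ Ioo a b := Ioo_subset_Ioo_left hs.1
  have hfrom_max : f s - |f' a| * (b - s) - A * (b - s) ^ 2 / 2 ≤ f b := by
    rcases hs.2.eq_or_lt with rfl | hsb
    · simp
    have hslope : -|f' a| ≤ f' s := neg_abs_le_deriv_of_isMaxOn ⟨hs.1, hsb⟩ hmax hf'
    refine sub_sub_le_of_le_deriv hsb.le (hf.mono hIcc) (fun u hu => hf' u (hIoo hu)) fun u hu => ?_
    exact neg_sub_mul_le_of_neg_sub_le_deriv hA (abs_nonneg _) (hf₁.mono hIcc)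
      (fun v hv => hf'' v (hIoo hv)) (fun v hv => h v (hIoo hv)) hslope (Ioo_subset_Icc_self hu)
  refine le_trans ?_ hfrom_max
  have hbs : 0 ≤ b - s := sub_nonneg.2 hs.2
  have has : a ≤ s := hs.1
  gcongr

end DifferentialInequality

theorem gronwall_type_lemma_general {p p' p'' : ℝ → ℝ} {K T : ℝ} (hK : 0 < K) (hT : 0 ≤ T)
    (hp0 : p 0 ∈ Ioc (0 : ℝ) 2) (hnonneg : ∀ u ∈ Ioo 0 T, 0 ≤ p u)
    (hp : ContinuousOn p (Icc 0 T)) (hp₁ : ContinuousOn p' (Icc 0 T))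
    (hp' : ∀ u ∈ Ioo 0 T, HasDerivAt p (p' u) u) (hp'' : ∀ u ∈ Ioo 0 T, HasDerivAt p' (p'' u) u)
    (hineq : ∀ u ∈ Ioo 0 T, -p' u - K * p u * log (exp 1 / p u) ≤ p'' u)
    (hTK : T ≤ 1 / (4 * √(K * log (2 * exp 1 / p 0))))
    (hTp' : p' 0 ≠ 0 → T ≤ p 0 / (4 * |p' 0|)) :
    p 0 / 2 ≤ p T := by
  obtain ⟨hp0, hp0_le⟩ := hp0
  obtain ⟨s, hs, hmax⟩ := isCompact_Icc.exists_isMaxOn (nonempty_Icc.2 hT) hp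
  have hp0s : p 0 ≤ p s := hmax (left_mem_Icc.2 hT)
  have hb1 : p 0 / 2 ≤ 1 := by linarith
  rw [show 2 * exp 1 / p 0 = exp 1 / (p 0 / 2) by field_simp] at hTK
  set L := log (exp 1 / (p 0 / 2))
  have hL : 0 < L := one_pos.trans_le (one_le_log_exp_one_div (half_pos hp0) hb1)
  have hA : 0 ≤ K * (p s * L) := mul_nonneg hK.le (mul_nonneg (hp0.le.trans hp0s) hL.le)
  have hsecond : ∀ u ∈ Ioo 0 T, -p' u - K * (p s * L) ≤ p'' u := fun u hu => by
    have hlog : p u * log (exp 1 / p u) ≤ p s * L := mul_log_exp_one_div_le (hnonneg u hu)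
      (hmax (Ioo_subset_Icc_self hu)) (half_pos hp0) hb1 (by linarith)
    linarith [hineq u hu, mul_le_mul_of_nonneg_left hlog hK.le]
  have hdrop := sub_sub_le_of_isMaxOn hs hmax hA hp hp₁ hp' hp'' hsecond
  rw [sub_zero] at hdrop
  have hlinear : |p' 0| * T ≤ p 0 / 4 := abs_mul_le_div_of_le_div four_pos hp0.le hTp'
  have hquadratic : K * L * T ^ 2 ≤ 1 / 4 ^ 2 :=
    mul_sq_le_of_le_one_div_mul_sqrt (mul_pos hK hL) hT hTK
  linarith [mul_le_mul_of_nonneg_left hquadratic (hp0.le.trans hp0s)]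

/-- **Lemma 4.1.** Let `p : [0,∞) → [0,1]` be twice differentiable with `p(0) ∈ (0,1)`
and suppose `K > 0` satisfies `p''(t) ≥ -p'(t) - K p(t) log(e/p(t))` for all `t ≥ 0`.
Then for all `t ≤ min( 1/(4√(K log(2e/p(0)))), p(0)/(4|p'(0)|) )` one has `p(t) ≥ p(0)/2`
(when `p'(0) = 0` the second bound is interpreted as `+∞`). -/
theorem gronwall_type_lemma (p : ℝ → ℝ) (K : ℝ) (hK : 0 < K)
    (hrange : ∀ t, 0 ≤ t → p t ∈ Icc (0 : ℝ) 1)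
    (hp0 : p 0 ∈ Ioo (0 : ℝ) 1)
    (hd1 : DifferentiableOn ℝ p (Ici 0))
    (hd2 : DifferentiableOn ℝ (derivWithin p (Ici 0)) (Ici 0))
    (hineq : ∀ t, 0 ≤ t →
      derivWithin (derivWithin p (Ici 0)) (Ici 0) t ≥
        -derivWithin p (Ici 0) t - K * p t * Real.log (Real.exp 1 / p t)) :
    ∀ t, 0 ≤ t →
      t ≤ 1 / (4 * Real.sqrt (K * Real.log (2 * Real.exp 1 / p 0))) →
      (derivWithin p (Ici 0) 0 ≠ 0 → t ≤ p 0 / (4 * |derivWithin p (Ici 0) 0|)) →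
      p t ≥ p 0 / 2 := by
  intro t ht htK hta
  exact gronwall_type_lemma_general hK ht ⟨hp0.1, hp0.2.le.trans one_le_two⟩
    (fun u hu => (hrange u hu.1.le).1) (hd1.continuousOn.mono Icc_subset_Ici_self)
    (hd2.continuousOn.mono Icc_subset_Ici_self)
    (fun u hu => (hd1 u hu.1.le).hasDerivWithinAt.hasDerivAt (Ici_mem_nhds hu.1))
    (fun u hu => (hd2 u hu.1.le).hasDerivWithinAt.hasDerivAt (Ici_mem_nhds hu.1))
    (fun u hu => hineq u hu.1.le) htK hta

end
end
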